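/- arXiv:1704.05304 — 6 statements merged into one kernel-verified Lean document; each statement's English description precedes it below -/
import Mathlib

section
/- Let G be a finitely generated group with BVC, let K be a field, let d be a natural number, and let φ : G → GL(d, K) be a group homomorphism. Then the image (range) of φ is a virtually cyclic group. -/
/-!
Let `Γ` be the image of `φ`, viewed inside the matrices over an algebraic closure `L` of `K`. It is
finitely generated and covered by the conjugates of finitely many virtually cyclic subgroups
(`bVCyc`). Hence there are `m > 0` and a finite set `C ⊆ Γ` such that every `u ^ m` is conjugate to
a power of an element of `C`, and the eigenvalues of `u` are, up to the exponent `m`, powers of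
the finitely many eigenvalues of elements of `C` (`bVCyc.exists_pow`, `eigenvalue_pow_eq`).

The main step is that `Γ` is finite or *virtually indicable*, meaning that some finite index
subgroup has a nontrivial homomorphism to `ℤ` (`finite_or_virtuallyIndicable`).

* Suppose that all eigenvalues of elements of `C` are roots of unity. Then the eigenvalues of
  elements of `Γ` are roots of unity of bounded order. By Burnside's trace argument the irreducible
  constituents have finite image, and an infinite unipotent part would give a homomorphism to `ℤ`
  (`finiteIndex_ker_of_roots_of_unity`).
* Otherwise some eigenvalue is neither zero nor a root of unity, and by Kronecker's theorem (or an
  adic valuation) some embedding of the field it generates into an algebraically closed normed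
  field gives it a norm different from `1`. Zariski's lemma extends the embedding to the ring
  generated by the matrix entries. Replacing the representation by an exterior power, some `g ∈ Γ`
  becomes proximal: `D⁻ᵃ gᵃ` converges to a rank one projection `e fᵀ`, with `1 < ‖D‖`. The element
  `gᵃ h` has an eigenvalue close to `Dᵃ ψ(h)`, where `ψ(h) = f ⬝ᵥ h e`. Since the eigenvalues are,
  up to a bounded exponent, powers of finitely many numbers, `ψ(h) ^ N` is a power of `D` or zero for
  a uniform `N`. This discreteness forces `ψ` to be multiplicative where it does not vanish, which is
  a finite index subgroup, and the exponent of `D` is the required homomorphism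
  (`virtuallyIndicable_of_proximal`, `virtuallyIndicable_of_eigenvalue`).

In the virtually indicable case, pass to the finite index subgroup, which is again covered by
conjugates of finitely many virtually cyclic subgroups and is residually finite by Malcev's theorem.
If the kernel of the homomorphism to `ℤ` were infinite, finite quotients would separate more
conjugacy classes inside one fibre than the covering subgroups allow. So the kernel is finite and
the group is virtually cyclic (`virtuallyCyclic_of_hom`).
-/

/-- A group is *virtually cyclic* if it has a cyclic subgroup of finite index. -/
def VirtuallyCyclic (G : Type*) [Group G] : Prop :=
  ∃ H : Subgroup G, IsCyclic H ∧ H.FiniteIndex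

/-- A group has *bVCyc* if there are finitely many virtually cyclic subgroups such that
every element lies in a conjugate of one of them. -/
def bVCyc (G : Type*) [Group G] : Prop :=
  ∃ 𝒱 : Finset (Subgroup G), (∀ V ∈ 𝒱, VirtuallyCyclic V) ∧
    ∀ g : G, ∃ V ∈ 𝒱, ∃ x : G, x * g * x⁻¹ ∈ V

/-- A group has *BVC* if there are finitely many virtually cyclic subgroups such that
every virtually cyclic subgroup is contained in a conjugate of one of them. -/
def BVC (G : Type*) [Group G] : Prop :=
  ∃ 𝒱 : Finset (Subgroup G), (∀ V ∈ 𝒱, VirtuallyCyclic V) ∧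
    ∀ W : Subgroup G, VirtuallyCyclic W →
      ∃ V ∈ 𝒱, ∃ x : G, ∀ w ∈ W, x * w * x⁻¹ ∈ V

/-- A group has *bCyc* if there are finitely many elements g₁, …, gₙ such that every
element is conjugate to a power of some gᵢ. -/
def bCyc (G : Type*) [Group G] : Prop :=
  ∃ s : Finset G, ∀ g : G, ∃ a ∈ s, ∃ k : ℤ, IsConj g (a ^ k)

/-- An element is *primitive* if it cannot be written as a proper power. -/
def Primitive {G : Type*} [Group G] (g : G) : Prop :=
  ∀ (h : G) (n : ℤ), g = h ^ n → n = 1 ∨ n = -1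


/-! ### Groups covered by conjugates of finitely many virtually cyclic subgroups -/

namespace BVCLin

/-- Elements generate cyclic subgroups, so BVC gives `bVCyc`, and `bVCyc` passes to images. -/
theorem bVCyc_range {G : Type*} [Group G] (h : BVC G) {L : Type*} [Group L] (φ : G →* L) :
    bVCyc φ.range := by
  classical
  obtain ⟨𝒱, hV, hcov⟩ := h
  refine ⟨𝒱.image (fun V => V.map φ.rangeRestrict), ?_, ?_⟩
  · intro W hW
    obtain ⟨V, hVm, rfl⟩ := Finset.mem_image.1 hW
    obtain ⟨C, hC, hfi⟩ := hV V hVm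
    let f : V →* V.map φ.rangeRestrict := φ.rangeRestrict.subgroupMap V
    have hf : Function.Surjective f := φ.rangeRestrict.subgroupMap_surjective V
    refine ⟨C.map f, ?_, ?_⟩
    · exact isCyclic_of_surjective (f.subgroupMap C) (f.subgroupMap_surjective C)
    · exact ⟨fun h0 => hfi.index_ne_zero
        (Nat.eq_zero_of_zero_dvd (h0 ▸ Subgroup.index_map_dvd C hf))⟩
  · rintro ⟨_, g, rfl⟩
    obtain ⟨V, hVm, x, hx⟩ := hcov (Subgroup.zpowers g) ⟨⊤, by
      have : IsCyclic (Subgroup.zpowers g) := inferInstance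
      exact isCyclic_of_surjective (Subgroup.topEquiv.symm : Subgroup.zpowers g ≃* _)
        (MulEquiv.surjective _), inferInstance⟩
    refine ⟨_, Finset.mem_image_of_mem _ hVm, φ.rangeRestrict x, ?_⟩
    refine ⟨_, hx g (Subgroup.mem_zpowers g), ?_⟩
    ext
    simp

theorem VirtuallyCyclic.subgroup {G : Type*} [Group G] (h : VirtuallyCyclic G) (H : Subgroup G) :
    VirtuallyCyclic H := by
  obtain ⟨C, hC, hfi⟩ := h
  refine ⟨C.subgroupOf H, ?_, inferInstance⟩
  let f : C.subgroupOf H →* C :=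
    (H.subtype.comp (C.subgroupOf H).subtype).codRestrict C (fun x => x.2)
  refine isCyclic_of_injective f ?_
  intro x y hxy
  have := congrArg Subtype.val hxy
  exact Subtype.ext (Subtype.ext this)

theorem VirtuallyCyclic.of_mulEquiv {G L : Type*} [Group G] [Group L] (e : G ≃* L)
    (h : VirtuallyCyclic G) : VirtuallyCyclic L := by
  obtain ⟨C, hC, hfi⟩ := h
  refine ⟨C.map e.toMonoidHom, isCyclic_of_surjective (e.toMonoidHom.subgroupMap C)
    (e.toMonoidHom.subgroupMap_surjective C), ?_⟩
  exact ⟨fun h0 => hfi.index_ne_zero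
        (Nat.eq_zero_of_zero_dvd (h0 ▸ Subgroup.index_map_dvd C e.surjective))⟩

theorem VirtuallyCyclic.of_finiteIndex {G : Type*} [Group G] (H : Subgroup G) [H.FiniteIndex]
    (h : VirtuallyCyclic H) : VirtuallyCyclic G := by
  obtain ⟨C, hC, hfi⟩ := h
  refine ⟨C.map H.subtype, isCyclic_of_surjective (H.subtype.subgroupMap C)
    (H.subtype.subgroupMap_surjective C), ⟨?_⟩⟩
  rw [Subgroup.index_map_subtype]
  exact mul_ne_zero hfi.index_ne_zero Subgroup.FiniteIndex.index_ne_zero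

/-- The covering property passes to finite index subgroups: conjugate the finitely many
virtually cyclic groups by coset representatives and intersect. -/
theorem bVCyc.finiteIndex {G : Type*} [Group G] (h : bVCyc G) (H : Subgroup G)
    [H.FiniteIndex] : bVCyc H := by
  classical
  obtain ⟨𝒱, hV, hcov⟩ := h
  have : Fintype (G ⧸ H) := Fintype.ofFinite _
  let W : Subgroup G → G ⧸ H → Subgroup H := fun V q =>
    (V.comap (MulAut.conj q.out).toMonoidHom).subgroupOf H
  refine ⟨(𝒱 ×ˢ Finset.univ).image (fun p => W p.1 p.2), ?_, ?_⟩
  · intro U hU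
    obtain ⟨⟨V, q⟩, hVq, rfl⟩ := Finset.mem_image.1 hU
    have hVc := hV V (Finset.mem_product.1 hVq).1
    let f : W V q →* V := ((MulAut.conj q.out).toMonoidHom.comp
      (H.subtype.comp (W V q).subtype)).codRestrict V (fun x => x.2)
    have hf : Function.Injective f := by
      intro x y hxy
      have := congrArg Subtype.val hxy
      exact Subtype.ext (Subtype.ext ((MulAut.conj q.out).injective this))
    exact VirtuallyCyclic.of_mulEquiv (MonoidHom.ofInjective hf).symm
      (VirtuallyCyclic.subgroup hVc f.range)
  · intro g
    obtain ⟨V, hVm, x, hx⟩ := hcov g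
    let q : G ⧸ H := QuotientGroup.mk x
    obtain ⟨h, hh⟩ := QuotientGroup.mk_out_eq_mul H x
    refine ⟨_, Finset.mem_image_of_mem _ (Finset.mk_mem_product hVm (Finset.mem_univ q)),
      h⁻¹, ?_⟩
    change (MulAut.conj q.out) _ ∈ V
    have : q.out = x * h := hh
    rw [this]
    simpa [mul_assoc] using hx

/-- Up to a uniform exponent `m`, every element is conjugate to a nonnegative power of one of
finitely many elements: the generators, and their inverses, of finite index cyclic subgroups of the
covering virtually cyclic groups. -/
theorem bVCyc.exists_pow {G : Type*} [Group G] (h : bVCyc G) :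
    ∃ m : ℕ, 0 < m ∧ ∃ C : Finset G, ∀ u : G, ∃ c ∈ C, ∃ k : ℕ, IsConj (u ^ m) (c ^ k) := by
  classical
  obtain ⟨𝒱, hV, hcov⟩ := h
  have key : ∀ V : Subgroup G, V ∈ 𝒱 → ∃ t : G, ∃ n : ℕ, 0 < n ∧ ∀ v ∈ V, ∃ k : ℤ, v ^ n = t ^ k := by
    intro V hVm
    obtain ⟨C, hC, hfi⟩ := hV V hVm
    obtain ⟨t, ht⟩ := hC.exists_generator
    refine ⟨t, C.index.factorial, Nat.factorial_pos _, fun v hv => ?_⟩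
    obtain ⟨n, hn0, hn, hm⟩ := Subgroup.exists_pow_mem_of_index_ne_zero hfi.index_ne_zero ⟨v, hv⟩
    obtain ⟨r, hr⟩ := Nat.dvd_factorial hn0 hn
    obtain ⟨k, hk⟩ := Subgroup.mem_zpowers_iff.1 (ht ⟨_, hm⟩)
    refine ⟨k * r, ?_⟩
    have hk' : (t : G) ^ k = v ^ n := by
      have := congrArg (fun x : C => ((x : V) : G)) hk
      simpa using this
    rw [hr, pow_mul, ← hk', zpow_mul, zpow_natCast]
  choose! t n hn ht using key
  refine ⟨∏ V ∈ 𝒱, n V, Finset.prod_pos hn, 𝒱.image t ∪ 𝒱.image (fun V => (t V)⁻¹), fun u => ?_⟩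
  obtain ⟨V, hVm, x, hx⟩ := hcov u
  obtain ⟨r, hr⟩ := Finset.dvd_prod_of_mem n hVm
  obtain ⟨k, hk⟩ := ht V hVm _ hx
  have hconj : IsConj (u ^ ∏ V ∈ 𝒱, n V) (t V ^ (k * r)) := by
    rw [isConj_iff]
    refine ⟨x, ?_⟩
    rw [hr, zpow_mul, ← hk, zpow_natCast, ← pow_mul, conj_pow]
  obtain ⟨a, ha | ha⟩ := Int.eq_nat_or_neg (k * r)
  · refine ⟨t V, Finset.mem_union_left _ (Finset.mem_image_of_mem _ hVm), a, ?_⟩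
    rwa [ha, zpow_natCast] at hconj
  · refine ⟨(t V)⁻¹, Finset.mem_union_right _
      (Finset.mem_image.2 ⟨V, hVm, rfl⟩), a, ?_⟩
    rwa [ha, zpow_neg, zpow_natCast, ← inv_pow] at hconj

theorem finite_of_inf_finiteIndex {G : Type*} [Group G] (H N : Subgroup G) [H.FiniteIndex]
    (h : ∀ x ∈ N, x ∈ H → x = 1) : Finite N := by
  have hb : H.subgroupOf N = ⊥ := by
    rw [eq_bot_iff]
    intro x hx
    exact Subtype.ext (h x x.2 hx)
  have : (H.subgroupOf N).FiniteIndex := inferInstance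
  rw [hb] at this
  have := this.index_ne_zero
  rw [Subgroup.index_bot] at this
  exact Nat.finite_of_card_ne_zero this

/-- A virtually cyclic group on which `χ` is nontrivial meets the kernel of `χ` in a finite
set. -/
theorem finite_inter_ker {G : Type*} [Group G] (χ : G →* Multiplicative ℤ) (V : Subgroup G)
    (hV : VirtuallyCyclic V) (v : G) (hv : v ∈ V) (hχ : χ v ≠ 1) :
    ((V : Set G) ∩ χ.ker).Finite := by
  obtain ⟨C, hC, hfi⟩ := hV
  obtain ⟨t, ht⟩ := hC.exists_generator
  obtain ⟨n, hn0, -, hm⟩ := Subgroup.exists_pow_mem_of_index_ne_zero hfi.index_ne_zero ⟨v, hv⟩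
  have hpow : ∀ c : C, ∃ k : ℤ, ((c : V) : G) = ((t : V) : G) ^ k := by
    intro c
    obtain ⟨k, hk⟩ := Subgroup.mem_zpowers_iff.1 (ht c)
    exact ⟨k, by rw [← hk]; simp⟩
  obtain ⟨k, hk⟩ := hpow ⟨_, hm⟩
  have htne : χ t ≠ 1 := by
    intro h1
    have : χ v ^ n = 1 := by
      rw [← map_pow]
      have : v ^ n = ((t : V) : G) ^ k := by simpa using hk
      rw [this, map_zpow, h1, one_zpow]
    exact hχ ((pow_eq_one_iff_left hn0.ne').1 this)
  have hfin : Finite (χ.ker.subgroupOf V) := by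
    refine finite_of_inf_finiteIndex C _ ?_
    intro x hx hxC
    obtain ⟨j, hj⟩ := hpow ⟨x, hxC⟩
    have hx' : χ x = 1 := hx
    have : χ t ^ j = 1 := by rw [← map_zpow, ← hj]; exact hx'
    have hj0 : j = 0 := by
      by_contra h0
      have h5 : j * Multiplicative.toAdd (χ t) = 0 := by
        have := congrArg Multiplicative.toAdd this
        simpa using this
      exact htne ((mul_eq_zero.1 h5).resolve_left h0)
    refine Subtype.ext ?_
    rw [hj0] at hj
    simpa using hj
  have := Set.finite_range (fun x : χ.ker.subgroupOf V => ((x : V) : G))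
  refine this.subset ?_
  rintro x ⟨hxV, hxk⟩
  exact ⟨⟨⟨x, hxV⟩, hxk⟩, rfl⟩

/-- A residually finite group with the covering property and a nontrivial homomorphism `χ` to `ℤ` is
virtually cyclic. Each fibre of `χ` over a nonzero integer meets a uniformly bounded number of
conjugacy classes, whereas an infinite kernel produces arbitrarily many pairwise non-conjugate
elements `n j * z` in one fibre, told apart by a chain of finite quotients. -/
theorem virtuallyCyclic_of_hom {G : Type*} [Group G]
    (hrf : ∀ g : G, g ≠ 1 → ∃ L : Subgroup G, L.Normal ∧ L.FiniteIndex ∧ g ∉ L)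
    (hb : bVCyc G) (χ : G →* Multiplicative ℤ) (hχ : ∃ t, χ t ≠ 1) : VirtuallyCyclic G := by
  classical
  obtain ⟨𝒱, hV, hcov⟩ := hb
  obtain ⟨t, ht⟩ := hχ
  -- If the kernel is finite, a finite index subgroup meets it trivially and embeds in `ℤ`.
  suffices hfin : Finite χ.ker by
    choose! L hLn hLf hL using hrf
    have hfi : (⨅ g : {g : χ.ker // (g : G) ≠ 1}, L g.1).FiniteIndex :=
      Subgroup.finiteIndex_iInf (fun g => hLf _ g.2)
    refine ⟨_, ?_, hfi⟩
    refine isCyclic_of_injective (χ.comp (Subgroup.subtype _)) ?_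
    rw [← MonoidHom.ker_eq_bot_iff, eq_bot_iff]
    intro x hx
    by_contra hx1
    have hx1 : (x : G) ≠ 1 := fun h => hx1 (Subtype.ext h)
    exact hL x hx1 (Subgroup.mem_iInf.1 x.2 ⟨⟨x, hx⟩, hx1⟩)
  by_contra hinf
  have hinf : Infinite χ.ker := not_finite_iff_infinite.1 hinf
  have hstep : ∀ L : {L : Subgroup G // L.Normal ∧ L.FiniteIndex}, ∃ n : G,
      ∃ L' : {L : Subgroup G // L.Normal ∧ L.FiniteIndex},
      n ∈ χ.ker ∧ n ∈ L.1 ∧ L'.1 ≤ L.1 ∧ n ∉ L'.1 := by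
    rintro ⟨L, hLn, hLf⟩
    obtain ⟨n, hnk, hnL, hn1⟩ : ∃ n, n ∈ χ.ker ∧ n ∈ L ∧ n ≠ 1 := by
      by_contra! hcon
      exact (not_finite_iff_infinite.2 hinf) (finite_of_inf_finiteIndex L χ.ker hcon)
    obtain ⟨L', hn', hf', hnL'⟩ := hrf n hn1
    exact ⟨n, ⟨L ⊓ L', inferInstance, inferInstance⟩, hnk, hnL, inf_le_left, fun h => hnL' h.2⟩
  choose n L' hnk hnL hLL hnL' using hstep
  let Ls : ℕ → {L : Subgroup G // L.Normal ∧ L.FiniteIndex} :=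
    fun j => Nat.rec ⟨⊤, inferInstance, inferInstance⟩ (fun _ L => L' L) j
  have hLs : ∀ j, Ls (j + 1) = L' (Ls j) := fun j => rfl
  have hanti : Antitone (fun j => (Ls j).1) :=
    antitone_nat_of_succ_le (fun j => by rw [hLs]; exact hLL _)
  -- The kernel elements of those covering groups that meet the kernel in a finite set.
  let E : Finset G := 𝒱.biUnion fun V =>
    if h : ((V : Set G) ∩ χ.ker).Finite then h.toFinset else ∅
  let c := (𝒱 ×ˢ E).card
  let M := (Ls (c + 1)).1
  have hMn : M.Normal := (Ls (c + 1)).2.1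
  have hMf : M.FiniteIndex := (Ls (c + 1)).2.2
  let z := t ^ M.index
  have hzM : z ∈ M := Subgroup.pow_index_mem M t
  have hzχ : χ z ≠ 1 := by
    intro h
    rw [map_pow] at h
    exact ht ((pow_eq_one_iff_left hMf.index_ne_zero).1 h)
  -- A reference element of `V` over `χ z`
  let b : Subgroup G → G := fun V => if h : ∃ v ∈ V, χ v = χ z then h.choose else 1
  have hbV : ∀ V v, v ∈ V → χ v = χ z → b V ∈ V ∧ χ (b V) = χ z := by
    intro V v hv hvz
    have h : ∃ v ∈ V, χ v = χ z := ⟨v, hv, hvz⟩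
    simp only [b, dif_pos h]
    exact h.choose_spec
  choose V hVm x hx using fun j : ℕ => hcov (n (Ls j) * z)
  have hχx : ∀ j, χ (x j * (n (Ls j) * z) * (x j)⁻¹) = χ z := by
    intro j
    have : χ (n (Ls j)) = 1 := hnk _
    simp [this, mul_comm]
  obtain ⟨i, hi, j, hj, hij, heq⟩ := Finset.exists_ne_map_eq_of_card_lt_of_maps_to
    (s := Finset.range (c + 1)) (t := 𝒱 ×ˢ E)
    (f := fun j => (V j, x j * (n (Ls j) * z) * (x j)⁻¹ * (b (V j))⁻¹))
    (by simp [c]) (by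
      intro j _
      have hb := hbV _ _ (hx j) (hχx j)
      have hf := finite_inter_ker χ (V j) (hV _ (hVm j)) _ (hx j) (by rw [hχx]; exact hzχ)
      refine Finset.mem_coe.2 (Finset.mk_mem_product (hVm j) (Finset.mem_biUnion.2
        ⟨V j, hVm j, ?_⟩))
      rw [dif_pos hf, Set.Finite.mem_toFinset]
      refine ⟨(V j).mul_mem (hx j) ((V j).inv_mem hb.1), ?_⟩
      change χ _ = 1
      rw [map_mul, hχx, map_inv, hb.2, mul_inv_cancel])
  wlog hlt : i < j generalizing i j
  · exact this j hj i hi hij.symm heq.symm (lt_of_le_of_ne (not_lt.1 hlt) hij.symm)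
  have hVe : V i = V j := (Prod.ext_iff.1 heq).1
  have h2 := (Prod.ext_iff.1 heq).2
  simp only [hVe, mul_left_inj] at h2
  let g := (x j)⁻¹ * x i
  have hconj : g * n (Ls i) * g⁻¹ * (g * z * g⁻¹) = n (Ls j) * z := by
    have : n (Ls j) * z = (x j)⁻¹ * (x i * (n (Ls i) * z) * (x i)⁻¹) * x j := by
      rw [h2]; group
    rw [this]
    simp only [g]
    group
  have hLn : (Ls (i + 1)).1.Normal := (Ls (i + 1)).2.1
  have hle : M ≤ (Ls (i + 1)).1 := by
    have h6 := Finset.mem_range.1 hj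
    exact hanti (show i + 1 ≤ c + 1 by omega)
  have hnj : n (Ls j) ∈ (Ls (i + 1)).1 :=
    hanti (show i + 1 ≤ j by omega) (hnL (Ls j))
  have hmem : g * n (Ls i) * g⁻¹ ∈ (Ls (i + 1)).1 := by
    have : g * n (Ls i) * g⁻¹ = n (Ls j) * z * (g * z * g⁻¹)⁻¹ := by
      rw [← hconj]; group
    rw [this]
    exact Subgroup.mul_mem _ (Subgroup.mul_mem _ hnj (hle hzM))
      (Subgroup.inv_mem _ (hLn.conj_mem _ (hle hzM) g))
  have := (hLn.mem_comm_iff.1 (by simpa [mul_assoc] using hmem : g * (n (Ls i) * g⁻¹) ∈ _))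
  exact hnL' (Ls i) (by rw [← hLs]; simpa [mul_assoc] using this)

end BVCLin

/-! ### Residual finiteness of finitely generated linear groups -/

namespace BVCLin

theorem isJacobsonRing_int : IsJacobsonRing ℤ := by
  rw [isJacobsonRing_iff_prime_eq]
  intro P hP
  by_cases h0 : P = ⊥
  · subst h0
    refine le_antisymm ?_ Ideal.le_jacobson
    intro x hx
    by_contra hx0
    -- a prime larger than `|x|` generates a maximal ideal missing `x`
    obtain ⟨p, hp, hpp⟩ := Nat.exists_infinite_primes (x.natAbs + 1)
    have hprime : Prime (p : ℤ) := Nat.prime_iff_prime_int.1 hpp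
    have hmax : (Ideal.span {(p : ℤ)}).IsMaximal :=
      PrincipalIdealRing.isMaximal_of_irreducible hprime.irreducible
    have hmem := (Ideal.mem_sInf.1 hx) (I := Ideal.span {(p : ℤ)}) ⟨bot_le, hmax⟩
    rw [Ideal.mem_span_singleton] at hmem
    have := Int.natAbs_dvd_natAbs.2 hmem
    have h1 := Nat.le_of_dvd (Int.natAbs_pos.2 hx0) this
    simp at h1
    omega
  · have := hP.isMaximal h0
    exact Ideal.jacobson_eq_self_of_isMaximal

theorem finite_of_finite_int_field (F : Type*) [Field F] [Module.Finite ℤ F] : Finite F := by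
  obtain ⟨p, hp⟩ := CharP.exists F
  have hp0 : p ≠ 0 := by
    rintro rfl
    have : CharZero F := CharP.charP_to_charZero F
    have h := isField_of_isIntegral_of_isField (R := ℤ) (S := F)
      (RingHom.injective_int _) (Field.toIsField F)
    exact Int.not_isField h
  refine Module.finite_of_fg_torsion F ?_
  intro x
  refine ⟨⟨(p : ℤ), mem_nonZeroDivisors_of_ne_zero (by exact_mod_cast hp0)⟩, ?_⟩
  change (p : ℤ) • x = 0
  rw [zsmul_eq_mul]
  simp

/-- A representation of a finitely generated group has its matrix entries in every subring which
contains a suitable finite set (the entries of generators and of their inverses). -/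
theorem exists_finset_entries {Γ : Type*} [Group Γ] (hfg : Group.FG Γ) {n : Type*} [Fintype n]
    [DecidableEq n] {L : Type*} [CommRing L] (ρ : Γ →* Matrix n n L) :
    ∃ T : Finset L, ∀ A : Subring L, (T : Set L) ⊆ A →
      ∃ ρ' : Γ →* Matrix n n A, ∀ γ i j, ((ρ' γ i j : A) : L) = ρ γ i j := by
  classical
  obtain ⟨S, hS⟩ := Group.fg_def.1 hfg
  refine ⟨(S ×ˢ (Finset.univ : Finset (n × n))).image (fun p => ρ p.1 p.2.1 p.2.2) ∪
    (S ×ˢ (Finset.univ : Finset (n × n))).image (fun p => ρ p.1⁻¹ p.2.1 p.2.2), ?_⟩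
  intro A hTA
  have key : ∀ γ : Γ, (∀ i j, ρ γ i j ∈ A) ∧ ∀ i j, ρ γ⁻¹ i j ∈ A := by
    intro γ
    have hγ : γ ∈ Subgroup.closure (S : Set Γ) := by rw [hS]; trivial
    induction hγ using Subgroup.closure_induction with
    | mem x hx =>
      constructor
      · intro i j
        refine hTA (Finset.mem_coe.2 (Finset.mem_union_left _ (Finset.mem_image.2
          ⟨(x, (i, j)), Finset.mk_mem_product hx (Finset.mem_univ _), rfl⟩)))
      · intro i j
        refine hTA (Finset.mem_coe.2 (Finset.mem_union_right _ (Finset.mem_image.2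
          ⟨(x, (i, j)), Finset.mk_mem_product hx (Finset.mem_univ _), rfl⟩)))
    | one =>
      have : ∀ i j, (1 : Matrix n n L) i j ∈ A := by
        intro i j
        rw [Matrix.one_apply]
        split_ifs
        exacts [A.one_mem, A.zero_mem]
      simpa using this
    | mul x y _ _ hx hy =>
      constructor
      · intro i j
        rw [map_mul, Matrix.mul_apply]
        exact A.sum_mem fun k _ => A.mul_mem (hx.1 _ _) (hy.1 _ _)
      · intro i j
        rw [mul_inv_rev, map_mul, Matrix.mul_apply]
        exact A.sum_mem fun k _ => A.mul_mem (hy.2 _ _) (hx.2 _ _)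
    | inv x _ hx => exact ⟨hx.2, by simpa using hx.1⟩
  refine ⟨{ toFun := fun γ i j => ⟨ρ γ i j, (key γ).1 i j⟩, map_one' := ?_, map_mul' := ?_ }, ?_⟩
  · ext i j
    by_cases h : i = j <;> simp [Matrix.one_apply, h]
  · intro x y
    ext i j
    change ρ (x * y) i j = ((∑ k, _ : A) : L)
    rw [map_mul, Matrix.mul_apply, AddSubmonoidClass.coe_finsetSum]
    rfl
  · intro γ i j
    rfl

/-- Finitely generated linear groups are residually finite (Malcev): reduce the finitely generated
coefficient ring modulo a maximal ideal missing a nonzero entry of `g - 1`. -/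
theorem residuallyFinite_of_linear {Γ : Type*} [Group Γ] (hfg : Group.FG Γ) {n : Type*} [Fintype n]
    [DecidableEq n] {L : Type*} [Field L] (ρ : Γ →* Matrix n n L) (hρ : Function.Injective ρ)
    (g : Γ) (hg : g ≠ 1) : ∃ N : Subgroup Γ, N.Normal ∧ N.FiniteIndex ∧ g ∉ N := by
  classical
  obtain ⟨T, hT⟩ := exists_finset_entries hfg ρ
  let A : Subalgebra ℤ L := Algebra.adjoin ℤ (T : Set L)
  obtain ⟨ρ', hρ'⟩ := hT A.toSubring Algebra.subset_adjoin
  let ρA : Γ →* Matrix n n A := ρ'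
  have hρA : ∀ γ i j, ((ρA γ i j : A) : L) = ρ γ i j := hρ'
  have hft : Algebra.FiniteType ℤ A :=
    (Subalgebra.fg_iff_finiteType _).1 (Subalgebra.fg_adjoin_finset T)
  have hZ := isJacobsonRing_int
  have hjac : IsJacobsonRing A := isJacobsonRing_of_finiteType (A := ℤ)
  obtain ⟨i, j, hij⟩ : ∃ i j, ρA g i j - (1 : Matrix n n A) i j ≠ 0 := by
    by_contra! hcon
    apply hg
    apply hρ
    rw [map_one]
    ext i j
    have := congrArg (Subtype.val : A → L) (sub_eq_zero.1 (hcon i j))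
    rw [hρA] at this
    rw [this]
    by_cases h : i = j <;> simp [Matrix.one_apply, h]
  obtain ⟨m, hm, hxm⟩ : ∃ m : Ideal A, m.IsMaximal ∧ ρA g i j - (1 : Matrix n n A) i j ∉ m := by
    by_contra! hcon
    have h1 : (⊥ : Ideal A).jacobson = ⊥ :=
      hjac.out (Ideal.isPrime_bot (α := A)).isRadical
    have : ρA g i j - (1 : Matrix n n A) i j ∈ (⊥ : Ideal A).jacobson := by
      rw [Ideal.jacobson, Ideal.mem_sInf]
      rintro I ⟨-, hI⟩
      exact hcon I hI
    rw [h1] at this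
    exact hij this
  let _ : Field (A ⧸ m) := Ideal.Quotient.field m
  have hftq : Algebra.FiniteType ℤ (A ⧸ m) :=
    hft.of_surjective (Ideal.Quotient.mkₐ ℤ m) (Ideal.Quotient.mkₐ_surjective ℤ m)
  have hfinm : Module.Finite ℤ (A ⧸ m) := finite_of_finite_type_of_isJacobsonRing ℤ (A ⧸ m)
  have hfin : Finite (A ⧸ m) := finite_of_finite_int_field _
  let f : Γ →* (Matrix n n (A ⧸ m))ˣ :=
    ((RingHom.toMonoidHom (Ideal.Quotient.mk m).mapMatrix).comp ρA).toHomUnits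
  have : Finite (Matrix n n (A ⧸ m))ˣ := inferInstance
  refine ⟨f.ker, inferInstance, inferInstance, fun h => hxm ?_⟩
  have h1 : (Ideal.Quotient.mk m).mapMatrix (ρA g) = 1 := congrArg Units.val h
  have h2 := congrFun (congrFun h1 i) j
  rw [← Ideal.Quotient.eq_zero_iff_mem, map_sub, sub_eq_zero]
  rw [RingHom.mapMatrix_apply, Matrix.map_apply] at h2
  rw [h2]
  by_cases h : i = j <;> simp [Matrix.one_apply, h]

end BVCLin

/-! ### Representations with eigenvalues of bounded finite order -/

namespace BVCLin

open Module Polynomial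

/-- The group has a finite index subgroup with a nontrivial homomorphism to `ℤ`. -/
def VirtuallyIndicable (Γ : Type*) [Group Γ] : Prop :=
  ∃ H : Subgroup Γ, H.FiniteIndex ∧ ∃ χ : H →* Multiplicative ℤ, ∃ t, χ t ≠ 1

/-- **Burnside's theorem**: an algebra of endomorphisms without proper nonzero invariant subspace
is the full endomorphism algebra. -/
theorem burnside {K V : Type*} [Field K] [IsAlgClosed K] [AddCommGroup V] [Module K V]
    [FiniteDimensional K V] [Nontrivial V] (A : Subalgebra K (End K V))
    (hA : ∀ U : Submodule K V, (∀ a ∈ A, ∀ u ∈ U, a u ∈ U) → U = ⊥ ∨ U = ⊤) : A = ⊤ := by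
  classical
  have hsimple : IsSimpleModule A V := by
    rw [isSimpleModule_iff]
    refine { exists_pair_ne := exists_pair_ne _, eq_bot_or_eq_top := fun U => ?_ }
    rcases hA (U.restrictScalars K) (fun a ha u hu => U.smul_mem ⟨a, ha⟩ hu) with h | h
    · left; exact (Submodule.restrictScalars_eq_bot_iff ..).1 h
    · right; exact (Submodule.restrictScalars_eq_top_iff ..).1 h
  have hschur := (IsSimpleModule.algebraMap_end_bijective_of_isAlgClosed (A := A) (V := V) K).2
  rw [eq_top_iff]
  intro f _
  let F : End (End A V) V :=
    { toFun := f
      map_add' := map_add f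
      map_smul' := fun c v => by
        obtain ⟨k, rfl⟩ := hschur c
        simp }
  let b := Module.finBasis K V
  obtain ⟨r, hr⟩ := jacobson_density (R := A) F (Finset.univ.image b)
  have : f = r := b.ext fun i => hr (b i) (Finset.mem_image_of_mem _ (Finset.mem_univ i))
  rw [this]
  exact r.2

theorem trace_form_eq {K V : Type*} [Field K] [AddCommGroup V] [Module K V]
    [FiniteDimensional K V] (x y : End K V)
    (h : ∀ z : End K V, LinearMap.trace K V (x * z) = LinearMap.trace K V (y * z)) : x = y := by
  classical
  let b := Module.finBasis K V
  apply (LinearMap.toMatrixAlgEquiv b).injective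
  refine Matrix.ext_iff_trace_mul_right.2 fun Z => ?_
  have := h ((LinearMap.toMatrixAlgEquiv b).symm Z)
  rw [LinearMap.trace_eq_matrix_trace K b, LinearMap.trace_eq_matrix_trace K b] at this
  have h1 : ∀ w : End K V, LinearMap.toMatrix b b w = LinearMap.toMatrixAlgEquiv b w := fun w => rfl
  rw [h1, h1, map_mul, map_mul, AlgEquiv.apply_symm_apply] at this
  exact this

theorem finiteIndex_ker_of_finite_range {Γ M : Type*} [Group Γ] [Monoid M] (ρ : Γ →* M)
    (h : (Set.range ρ).Finite) : ρ.ker.FiniteIndex := by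
  have hk : ρ.ker = ρ.toHomUnits.ker := by
    ext x
    simp [MonoidHom.mem_ker]
  have : Finite ρ.toHomUnits.range := by
    have : (ρ.toHomUnits.range : Set Mˣ).Finite := by
      refine Set.Finite.of_finite_image (f := Units.val) (h.subset ?_) Units.val_injective.injOn
      rintro _ ⟨_, ⟨g, rfl⟩, rfl⟩
      exact ⟨g, rfl⟩
    exact this
  rw [hk]
  exact Subgroup.finiteIndex_ker _

theorem aeval_intertwine {K V W : Type*} [Field K] [AddCommGroup V] [Module K V]
    [AddCommGroup W] [Module K W] (ι : V →ₗ[K] W) (a : End K V) (b : End K W)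
    (h : ∀ v, ι (a v) = b (ι v)) (p : K[X]) (v : V) : ι (aeval a p v) = aeval b p (ι v) := by
  induction p using Polynomial.induction_on' with
  | add p q hp hq => simp [hp, hq]
  | monomial n c =>
    have hn : ∀ n : ℕ, ι ((a ^ n) v) = (b ^ n) (ι v) := by
      intro n
      induction n with
      | zero => simp
      | succ n ih => rw [pow_succ', pow_succ', Module.End.mul_apply, Module.End.mul_apply, h, ih]
    simp [aeval_monomial, hn]

/-- An infinite finitely generated abelian group maps onto `ℤ`. -/
theorem exists_hom_int_of_infinite (A : Type*) [AddCommGroup A] [AddGroup.FG A] [Infinite A] :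
    ∃ χ : A →+ ℤ, ∃ a, χ a ≠ 0 := by
  classical
  obtain ⟨n, ι, _, p, hp, e, ⟨f⟩⟩ := AddCommGroup.equiv_free_prod_directSum_zmod A
  rcases Nat.eq_zero_or_pos n with rfl | hn
  · exfalso
    have : ∀ i, NeZero (p i ^ e i) := fun i => ⟨pow_ne_zero _ (hp i).ne_zero⟩
    have : Finite (DirectSum ι fun i => ZMod (p i ^ e i)) :=
      Finite.of_equiv _ DFinsupp.equivFunOnFintype.symm
    have : Finite A := Finite.of_equiv _ f.symm.toEquiv
    exact not_finite A
  · refine ⟨((Finsupp.applyAddHom (⟨0, hn⟩ : Fin n)).comp (AddMonoidHom.fst _ _)).comp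
      f.toAddMonoidHom, f.symm (Finsupp.single ⟨0, hn⟩ 1, 0), ?_⟩
    simp

/-- If the elements of an irreducible group have eigenvalues in a fixed finite set of roots of
unity, the group is finite: the traces against a finite spanning set of group elements take finitely
many values and determine the element. -/
theorem finite_of_irreducible {Γ K V : Type*} [Group Γ] [Field K] [IsAlgClosed K] [AddCommGroup V]
    [Module K V] [FiniteDimensional K V] [Nontrivial V] (ρ : Γ →* End K V)
    (hirr : ∀ U : Submodule K V, (∀ g, ∀ u ∈ U, ρ g u ∈ U) → U = ⊥ ∨ U = ⊤)
    (N k : ℕ) (hN : 0 < N) (hρ : ∀ g, aeval (ρ g) ((X ^ N - 1 : K[X]) ^ k) = 0) :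
    ρ.ker.FiniteIndex := by
  classical
  have hspan : Submodule.span K (Set.range ρ) = ⊤ := by
    have h1 : Algebra.adjoin K (Set.range ρ) = ⊤ := by
      refine burnside _ fun U hU => hirr U fun g u hu => hU _ (Algebra.subset_adjoin ⟨g, rfl⟩) u hu
    have h2 := Algebra.adjoin_eq_span K (Set.range ρ)
    rw [h1, ← MonoidHom.coe_mrange, Submonoid.closure_eq] at h2
    simpa using h2.symm
  obtain ⟨b, hbs, hbspan, hbli⟩ := exists_linearIndependent K (Set.range ρ)
  have hbfin : Finite b := hbli.finite
  -- all traces lie in a finite set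
  have htr : (Set.range fun g => LinearMap.trace K V (ρ g)).Finite := by
    let R : Finset K := (nthRoots N (1 : K)).toFinset
    refine ((R.sym (finrank K V)).finite_toSet.image
      (fun s : Sym K (finrank K V) => (s : Multiset K).sum)).subset ?_
    rintro _ ⟨g, rfl⟩
    have hsplit : (ρ g).charpoly.Splits := IsAlgClosed.splits _
    refine ⟨⟨(ρ g).charpoly.roots, ?_⟩, ?_, ?_⟩
    · rw [← (ρ g).charpoly_natDegree]
      exact hsplit.natDegree_eq_card_roots.symm
    · refine Finset.mem_coe.2 (Finset.mem_sym_iff.2 fun μ hμ => ?_)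
      have hμ : μ ∈ (ρ g).charpoly.roots := hμ
      rw [mem_roots (LinearMap.charpoly_monic _).ne_zero,
        ← Module.End.hasEigenvalue_iff_isRoot_charpoly] at hμ
      obtain ⟨v, hv⟩ := hμ.exists_hasEigenvector
      have h1 := Module.End.aeval_apply_of_hasEigenvector (p := (X ^ N - 1 : K[X]) ^ k) hv
      rw [hρ, LinearMap.zero_apply] at h1
      have h2 := (smul_eq_zero.1 h1.symm).resolve_right hv.2
      simp only [eval_pow, eval_sub, eval_X, eval_one] at h2
      simp only [R, Multiset.mem_toFinset]
      rw [mem_nthRoots hN]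
      exact sub_eq_zero.1 (eq_zero_of_pow_eq_zero h2)
    · exact (Module.End.trace_eq_sum_roots_charpoly_of_splits hsplit).symm
  refine finiteIndex_ker_of_finite_range ρ ?_
  let τ : End K V → (b → K) := fun x i => LinearMap.trace K V (x * i)
  have hτ : Function.Injective τ := by
    intro x y hxy
    refine trace_form_eq x y fun z => ?_
    have hz : z ∈ Submodule.span K b := by rw [hbspan, hspan]; trivial
    induction hz using Submodule.span_induction with
    | mem z hz => exact congrFun hxy ⟨z, hz⟩
    | zero => simp
    | add z w _ _ hz hw => simp [mul_add, hz, hw]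
    | smul c z _ hz => simp [hz]
  refine Set.Finite.of_finite_image (f := τ) ?_ hτ.injOn
  refine (Set.Finite.pi' (fun _ : b => htr)).subset ?_
  rintro _ ⟨_, ⟨g, rfl⟩, rfl⟩ i
  obtain ⟨h, hh⟩ := hbs i.2
  exact ⟨g * h, by simp only [τ, ← hh, map_mul]⟩

/-- Homomorphisms from finite index subgroups to abelian groups have finite image unless the group is
virtually indicable. -/
theorem finiteIndex_ker_of_hom_comm {Γ : Type*} [Group Γ] (hfg : Group.FG Γ)
    (hΓ : ¬ VirtuallyIndicable Γ) (H : Subgroup Γ) [H.FiniteIndex] {A : Type*} [AddCommGroup A]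
    (f : H →* Multiplicative A) : f.ker.FiniteIndex := by
  have : Group.FG H := inferInstance
  have hfin : Finite f.range := by
    by_contra hinf
    have hinf : Infinite f.range := not_finite_iff_infinite.1 hinf
    have hfgr : Group.FG f.range := inferInstance
    have : Infinite (Additive f.range) := hinf
    have : AddGroup.FG (Additive f.range) := inferInstance
    obtain ⟨χ, a, ha⟩ := exists_hom_int_of_infinite (Additive f.range)
    refine hΓ ⟨H, inferInstance, (AddMonoidHom.toMultiplicativeRight χ).comp f.rangeRestrict, ?_⟩
    obtain ⟨t, ht⟩ := f.rangeRestrict_surjective a.toMul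
    refine ⟨t, ?_⟩
    rw [MonoidHom.comp_apply, ht]
    exact ha
  exact Subgroup.finiteIndex_ker f

/-- A finitely generated group which is not virtually indicable has finite image in every
representation whose elements have eigenvalues of bounded finite order. -/
theorem finiteIndex_ker_of_roots_of_unity {Γ : Type*} [Group Γ] (hfg : Group.FG Γ)
    (hΓ : ¬ VirtuallyIndicable Γ) {K : Type*} [Field K] [IsAlgClosed K] (N k : ℕ) (hN : 0 < N)
    (n : ℕ) : ∀ (V : Type*) [AddCommGroup V] [Module K V] [FiniteDimensional K V]
      (ρ : Γ →* End K V), finrank K V = n →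
      (∀ g, aeval (ρ g) ((X ^ N - 1 : K[X]) ^ k) = 0) → ρ.ker.FiniteIndex := by
  induction n using Nat.strong_induction_on with
  | _ n ih =>
  intro V _ _ _ ρ hn hρ
  by_cases hnt : Nontrivial V
  swap
  · have : Subsingleton V := not_nontrivial_iff_subsingleton.1 hnt
    have : ρ.ker = ⊤ := by
      rw [eq_top_iff]
      intro x _
      exact LinearMap.ext fun v => Subsingleton.elim _ _
    rw [this]
    infer_instance
  by_cases hirr : ∀ U : Submodule K V, (∀ g, ∀ u ∈ U, ρ g u ∈ U) → U = ⊥ ∨ U = ⊤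
  · exact finite_of_irreducible ρ hirr N k hN hρ
  push Not at hirr
  obtain ⟨U, hU, hbot, htop⟩ := hirr
  let ρU : Γ →* End K U := Representation.subrepresentation ρ U hU
  let ρQ : Γ →* End K (V ⧸ U) := Representation.quotient ρ U hU
  have hUk : ρU.ker.FiniteIndex := by
    refine ih (finrank K U) (hn ▸ Submodule.finrank_lt htop) U ρU rfl fun g => ?_
    ext u
    have := aeval_intertwine U.subtype (ρU g) (ρ g) (fun v => rfl) ((X ^ N - 1 : K[X]) ^ k) u
    rw [hρ] at this
    simpa using this
  have hQk : ρQ.ker.FiniteIndex := by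
    refine ih (finrank K (V ⧸ U)) ?_ (V ⧸ U) ρQ rfl fun g => ?_
    · have h1 := Submodule.finrank_quotient_add_finrank U
      have h2 : 0 < finrank K U := by
        have := Submodule.one_le_finrank_iff.2 hbot
        omega
      omega
    · refine LinearMap.ext fun q => ?_
      obtain ⟨v, rfl⟩ := U.mkQ_surjective q
      have := aeval_intertwine U.mkQ (ρ g) (ρQ g) (fun v => rfl) ((X ^ N - 1 : K[X]) ^ k) v
      rw [hρ] at this
      rw [← this]
      simp
  let H := ρU.ker ⊓ ρQ.ker
  have hHf : H.FiniteIndex := inferInstance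
  have hHU : ∀ h ∈ H, ∀ u ∈ U, ρ h u = u := by
    intro h hh u hu
    have h1 : ρU h = 1 := hh.1
    have := congrArg Subtype.val (LinearMap.congr_fun h1 ⟨u, hu⟩)
    exact this
  have hHQ : ∀ h ∈ H, ∀ v, ρ h v - v ∈ U := by
    intro h hh v
    have h1 : ρQ h = 1 := hh.2
    have := LinearMap.congr_fun h1 (U.mkQ v)
    exact (Submodule.Quotient.eq U).1 this
  let f : H →* Multiplicative (End K V) :=
    { toFun := fun h => Multiplicative.ofAdd (ρ h - 1)
      map_one' := by simp
      map_mul' := fun x y => by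
        rw [← ofAdd_add]
        congr 1
        ext v
        have h1 := hHU x x.2 _ (hHQ y y.2 v)
        rw [map_sub] at h1
        simp only [Subgroup.coe_mul, map_mul, LinearMap.sub_apply, Module.End.mul_apply,
          Module.End.one_apply, LinearMap.add_apply]
        rw [← h1]
        abel }
  have hfk := finiteIndex_ker_of_hom_comm hfg hΓ H f
  have hmap : (f.ker.map H.subtype).FiniteIndex := ⟨by
    rw [Subgroup.index_map_subtype]
    exact mul_ne_zero hfk.index_ne_zero hHf.index_ne_zero⟩
  refine Subgroup.finiteIndex_of_le (H := f.ker.map H.subtype) ?_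
  rintro _ ⟨h, hh, rfl⟩
  have : ρ h - 1 = 0 := hh
  exact sub_eq_zero.1 this

end BVCLin

/-! ### Groups with a proximal element -/

namespace BVCLin

open Polynomial Filter Topology Matrix

/-- Powers of an element of norm greater than one can only accumulate at zero: a nonzero limit is
itself a power, and is eventually attained. -/
theorem zpow_tendsto_discrete {Ω ι : Type*} [NormedField Ω] {D : Ω} (hD : 1 < ‖D‖) {F : Filter ι}
    [F.NeBot] {k : ι → ℤ} {y : Ω} (hy : y ≠ 0) (h : Tendsto (fun a => D ^ k a) F (𝓝 y)) :
    ∃ c : ℤ, (∀ᶠ a in F, k a = c) ∧ y = D ^ c := by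
  have hy0 : 0 < ‖y‖ := norm_pos_iff.2 hy
  set r := Real.sqrt ‖D‖ with hr
  have hr1 : 1 < r := by rw [hr]; exact Real.lt_sqrt_of_sq_lt (by simpa using hD)
  have hrr : r * r = ‖D‖ := Real.mul_self_sqrt (norm_nonneg _)
  have hlim : Tendsto (fun a => ‖D‖ ^ k a) F (𝓝 ‖y‖) := by
    simpa [norm_zpow] using h.norm
  have h1 : ∀ᶠ a in F, ‖y‖ / r < ‖D‖ ^ k a :=
    hlim.eventually_const_lt (div_lt_self hy0 hr1)
  have h2 : ∀ᶠ a in F, ‖D‖ ^ k a < ‖y‖ * r :=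
    hlim.eventually_lt_const (lt_mul_of_one_lt_right hy0 hr1)
  have hle : ∀ a b, ‖y‖ / r < ‖D‖ ^ k a → ‖D‖ ^ k b < ‖y‖ * r → k b ≤ k a := by
    intro a b ha hb
    have hD0 : 0 < ‖D‖ := by linarith
    have : ‖D‖ ^ k b < ‖D‖ ^ (k a + 1) := by
      have hr0 : 0 < r := by linarith
      rw [zpow_add_one₀ hD0.ne']
      calc ‖D‖ ^ k b < ‖y‖ * r := hb
        _ = (‖y‖ / r) * (r * r) := by field_simp
        _ < ‖D‖ ^ k a * ‖D‖ := by rw [hrr]; exact mul_lt_mul_of_pos_right ha hD0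
    have := (zpow_lt_zpow_iff_right₀ hD).1 this
    omega
  obtain ⟨a0, ha1, ha2⟩ := (h1.and h2).exists
  have hev : ∀ᶠ a in F, k a = k a0 := by
    filter_upwards [h1, h2] with a h1 h2
    exact le_antisymm (hle a0 a ha1 h2) (hle a a0 h1 ha2)
  refine ⟨k a0, hev, ?_⟩
  refine tendsto_nhds_unique h (tendsto_const_nhds.congr' ?_)
  filter_upwards [hev] with a ha
  rw [ha]

/-- Some eigenvalue of `B` is close to `x` when `det (x - B)`, the product of the differences, is
small. -/
theorem exists_root_near {Ω : Type*} [NormedField Ω] [IsAlgClosed Ω] {n : Type*} [Fintype n]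
    [DecidableEq n] [Nonempty n] (B : Matrix n n Ω) (x : Ω) :
    ∃ θ, B.charpoly.IsRoot θ ∧ ‖x - θ‖ ^ Fintype.card n ≤ ‖(scalar n x - B).det‖ := by
  classical
  have hmonic := B.charpoly_monic
  have hsplit : B.charpoly.Splits := IsAlgClosed.splits _
  have hcard : Multiset.card B.charpoly.roots = Fintype.card n := by
    rw [← hsplit.natDegree_eq_card_roots, charpoly_natDegree_eq_dim]
  have hne : B.charpoly.roots.toFinset.Nonempty := by
    rw [Multiset.toFinset_nonempty, ← Multiset.card_pos, hcard]
    exact Fintype.card_pos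
  obtain ⟨θ, hθ, hmin⟩ := Finset.exists_min_image _ (fun θ => ‖x - θ‖) hne
  refine ⟨θ, (mem_roots hmonic.ne_zero).1 (Multiset.mem_toFinset.1 hθ), ?_⟩
  have hprod : ∀ s : Multiset Ω, (∀ t ∈ s, ‖x - θ‖ ≤ ‖x - t‖) →
      ‖x - θ‖ ^ Multiset.card s ≤ ‖(s.map (fun t => x - t)).prod‖ := by
    intro s
    induction s using Multiset.induction with
    | empty => simp
    | cons t s ih =>
      intro hs
      simp only [Multiset.card_cons, Multiset.map_cons, Multiset.prod_cons, norm_mul, pow_succ']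
      gcongr
      · exact hs t (Multiset.mem_cons_self _ _)
      · exact ih fun u hu => hs u (Multiset.mem_cons_of_mem hu)
  have := hprod B.charpoly.roots fun t ht => hmin t (Multiset.mem_toFinset.2 ht)
  rw [hcard] at this
  refine this.trans (le_of_eq ?_)
  rw [← eval_charpoly]
  conv_rhs => rw [hsplit.eq_prod_roots_of_monic hmonic]
  rw [eval_multiset_prod, Multiset.map_map]
  simp

/-- If the powers of `g`, rescaled by `D`, converge to the rank one matrix `e fᵀ`, then the elements
`g ^ a * h` have eigenvalues asymptotic to `D ^ a * (f ⬝ᵥ h e)`. -/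
theorem exists_root_tendsto {Ω : Type*} [NormedField Ω] [IsAlgClosed Ω] {n : Type*} [Fintype n]
    [DecidableEq n] [Nonempty n] (g h : Matrix n n Ω) (D : Ω) (hD : D ≠ 0) (e f : n → Ω)
    (hfe : f ⬝ᵥ e = 1)
    (hlim : Tendsto (fun a : ℕ => (D ^ a)⁻¹ • g ^ a) atTop (𝓝 (vecMulVec e f))) :
    ∃ θ : ℕ → Ω, (∀ a, (g ^ a * h).charpoly.IsRoot (θ a)) ∧
      Tendsto (fun a => (D ^ a)⁻¹ * θ a) atTop (𝓝 (f ⬝ᵥ (h *ᵥ e))) := by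
  set x := f ⬝ᵥ (h *ᵥ e) with hx
  choose θ hθ hθn using fun a : ℕ => exists_root_near (g ^ a * h) (D ^ a * x)
  refine ⟨θ, hθ, ?_⟩
  have hdet0 : (scalar n x - vecMulVec e f * h).det = 0 := by
    rw [← exists_mulVec_eq_zero_iff]
    refine ⟨e, ?_, ?_⟩
    · rintro rfl
      simp at hfe
    · rw [sub_mulVec, ← mulVec_mulVec, vecMulVec_mulVec, ← hx]
      ext i
      simp [mul_comm]
  have hdet : Tendsto (fun a : ℕ => (scalar n x - ((D ^ a)⁻¹ • g ^ a) * h).det) atTop (𝓝 0) := by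
    rw [← hdet0]
    exact (Continuous.matrix_det continuous_id).continuousAt.tendsto.comp
      (tendsto_const_nhds.sub (hlim.mul tendsto_const_nhds))
  have hbound : ∀ a, ‖(D ^ a)⁻¹ * θ a - x‖ ^ Fintype.card n ≤
      ‖(scalar n x - ((D ^ a)⁻¹ • g ^ a) * h).det‖ := by
    intro a
    have hDa : D ^ a ≠ 0 := pow_ne_zero _ hD
    have h1 : scalar n (D ^ a * x) - g ^ a * h = D ^ a • (scalar n x - ((D ^ a)⁻¹ • g ^ a) * h) := by
      rw [smul_sub, smul_mul, smul_smul, mul_inv_cancel₀ hDa, one_smul]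
      congr 1
      ext i j
      by_cases hij : i = j <;> simp [hij]
    have h2 := hθn a
    rw [h1, det_smul, norm_mul, norm_pow] at h2
    have h3 : ‖D ^ a * x - θ a‖ = ‖D ^ a‖ * ‖(D ^ a)⁻¹ * θ a - x‖ := by
      rw [← norm_mul, mul_sub, mul_inv_cancel_left₀ hDa, norm_sub_rev]
    rw [h3, mul_pow] at h2
    exact le_of_mul_le_mul_left h2 (pow_pos (norm_pos_iff.2 hDa) _)
  rw [tendsto_iff_norm_sub_tendsto_zero]
  have h0 : Tendsto (fun a => ‖(D ^ a)⁻¹ * θ a - x‖ ^ Fintype.card n) atTop (𝓝 0) :=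
    squeeze_zero (fun a => by positivity) hbound (by simpa using hdet.norm)
  rw [Metric.tendsto_atTop] at h0 ⊢
  intro ε hε
  obtain ⟨a0, ha0⟩ := h0 (ε ^ Fintype.card n) (by positivity)
  refine ⟨a0, fun a ha => ?_⟩
  have := ha0 a ha
  rw [Real.dist_0_eq_abs, abs_of_nonneg (by positivity)] at this ⊢
  exact lt_of_pow_lt_pow_left₀ _ hε.le this

/-- The values `f ⬝ᵥ h e` are, up to a uniform exponent, powers of `D`. The eigenvalues of
`g ^ a * h` are, up to the exponent `m`, powers of finitely many elements `M`. Comparing two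
exponents `a + i`, `a + j` with the same `M` shows that `M` is commensurable with `D`. -/
theorem exists_uniform_exponent {Ω : Type*} [NormedField Ω] [IsAlgClosed Ω] {n : Type*} [Fintype n]
    [DecidableEq n] [Nonempty n] (g : Matrix n n Ω) (D : Ω) (hD : 1 < ‖D‖) (e f : n → Ω)
    (hfe : f ⬝ᵥ e = 1)
    (hlim : Tendsto (fun a : ℕ => (D ^ a)⁻¹ • g ^ a) atTop (𝓝 (vecMulVec e f)))
    (m : ℕ) (hm : 0 < m) (𝓜 : Finset Ω) :
    ∃ N : ℕ, 0 < N ∧ ∀ h : Matrix n n Ω,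
      (∀ a θ, (g ^ a * h).charpoly.IsRoot θ → ∃ M ∈ 𝓜, ∃ k : ℕ, θ ^ m = M ^ k) →
      f ⬝ᵥ (h *ᵥ e) ≠ 0 → ∃ c : ℤ, (f ⬝ᵥ (h *ᵥ e)) ^ N = D ^ c := by
  classical
  have hD0 : D ≠ 0 := by rintro rfl; norm_num at hD
  let Q : Ω → Prop := fun M => ∃ J : ℕ, 0 < J ∧ ∃ c : ℤ, M ^ J = D ^ c
  let J : Ω → ℕ := fun M => if h : Q M then h.choose else 1
  have hJpos : ∀ M, 0 < J M := by
    intro M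
    simp only [J]
    split_ifs with h
    exacts [h.choose_spec.1, one_pos]
  have hJ : ∀ M, Q M → ∃ c : ℤ, M ^ J M = D ^ c := by
    intro M h
    simp only [J, dif_pos h]
    exact h.choose_spec.2
  refine ⟨m * ∏ M ∈ 𝓜, J M, Nat.mul_pos hm (Finset.prod_pos fun M _ => hJpos M), ?_⟩
  intro h hspec hx
  obtain ⟨θ, hθ, hθlim⟩ := exists_root_tendsto g h D hD0 e f hfe hlim
  set x := f ⬝ᵥ (h *ᵥ e) with hxdef
  choose M hM k hk using fun a => hspec a (θ a) (hθ a)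
  let U : Ultrafilter ℕ := hyperfilter ℕ
  have hU : (U : Filter ℕ) ≤ atTop := by
    rw [← Nat.cofinite_eq_atTop]; exact hyperfilter_le_cofinite
  -- Along the ultrafilter, each shifted sequence `M (a + i)` is constant
  have hconst : ∀ i : ℕ, ∃ M₀ ∈ 𝓜, ∀ᶠ a in (U : Filter ℕ), M (a + i) = M₀ := by
    intro i
    have : ∀ᶠ a in (U : Filter ℕ), ∃ M₀ ∈ 𝓜, M (a + i) = M₀ :=
      Eventually.of_forall fun a => ⟨_, hM _, rfl⟩
    exact (Ultrafilter.eventually_exists_mem_iff (is := (𝓜 : Set Ω)) (𝓜.finite_toSet)).1 this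
  choose Mc hMc hMev using hconst
  obtain ⟨i, j, hij, hMij⟩ : ∃ i j : ℕ, i < j ∧ Mc i = Mc j := by
    obtain ⟨i, j, hne, heq⟩ := Finite.exists_ne_map_eq_of_infinite
      (fun i : ℕ => (⟨Mc i, hMc i⟩ : 𝓜))
    have heq : Mc i = Mc j := congrArg Subtype.val heq
    rcases lt_or_gt_of_ne hne with h | h
    exacts [⟨i, j, h, heq⟩, ⟨j, i, h, heq.symm⟩]
  set M₀ := Mc i with hM₀
  have hpow : ∀ i, Mc i = M₀ →
      Tendsto (fun a => M₀ ^ k (a + i) * (D ^ (m * (a + i)))⁻¹) U (𝓝 (x ^ m)) := by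
    intro i hi
    have h1 : Tendsto (fun a => ((D ^ (a + i))⁻¹ * θ (a + i)) ^ m) U (𝓝 (x ^ m)) :=
      ((hθlim.comp (tendsto_add_atTop_nat i)).pow m).mono_left hU
    refine h1.congr' ?_
    filter_upwards [hMev i] with a ha
    rw [mul_pow, hk, ha, hi, inv_pow, ← pow_mul, mul_comm, mul_comm m]
  have hi := hpow i rfl
  have hj := hpow j hMij.symm
  have hxm : x ^ m ≠ 0 := pow_ne_zero _ hx
  -- The eigenvalues are unbounded, hence `M₀` has norm greater than one
  have hM1 : 1 < ‖M₀‖ := by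
    by_contra hle
    push Not at hle
    have hz : Tendsto (fun a => M₀ ^ k (a + i) * (D ^ (m * (a + i)))⁻¹) U (𝓝 0) := by
      have h2 : Tendsto (fun a : ℕ => (‖D‖⁻¹) ^ (m * (a + i))) U (𝓝 0) := by
        refine Tendsto.mono_left ?_ hU
        refine (tendsto_pow_atTop_nhds_zero_of_lt_one (by positivity)
          (inv_lt_one_of_one_lt₀ hD)).comp ?_
        exact tendsto_atTop_mono (fun a => (Nat.le_add_right a i).trans (Nat.le_mul_of_pos_left _ hm)) tendsto_id
      refine squeeze_zero_norm (fun a => ?_) h2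
      rw [norm_mul, norm_pow, norm_inv, norm_pow, ← inv_pow]
      exact mul_le_of_le_one_left (by positivity) (pow_le_one₀ (norm_nonneg _) hle)
    exact hxm (tendsto_nhds_unique hi hz)
  have hM0 : M₀ ≠ 0 := by rintro h; rw [h] at hM1; norm_num at hM1
  have hQ : Q M₀ := by
    have hratio := hj.div hi hxm
    rw [div_self hxm] at hratio
    have h3 : Tendsto (fun a => M₀ ^ ((k (a + j) : ℤ) - k (a + i))) U (𝓝 (D ^ (m * (j - i)))) := by
      have h4 := hratio.mul_const (D ^ (m * (j - i)))
      rw [one_mul] at h4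
      refine h4.congr fun a => ?_
      simp only [Pi.div_apply]
      rw [zpow_sub₀ hM0, zpow_natCast, zpow_natCast]
      have : D ^ (m * (a + j)) = D ^ (m * (a + i)) * D ^ (m * (j - i)) := by
        rw [← pow_add, ← mul_add]
        congr 2
        omega
      rw [this]
      field_simp
    obtain ⟨c, -, hc⟩ := zpow_tendsto_discrete hM1 (pow_ne_zero _ hD0) h3
    have hc0 : 0 < c := by
      have h5 : 1 < ‖M₀‖ ^ c := by
        rw [← norm_zpow, ← hc, norm_pow]
        exact one_lt_pow₀ hD (Nat.mul_pos hm (by omega)).ne'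
      exact (one_lt_zpow_iff_right₀ hM1).1 h5
    refine ⟨c.toNat, by omega, (m * (j - i) : ℕ), ?_⟩
    rw [← zpow_natCast, Int.toNat_of_nonneg hc0.le, ← hc, zpow_natCast]
  obtain ⟨q, hq⟩ := hJ M₀ hQ
  have hfin := hi.pow (J M₀)
  have h6 : Tendsto (fun a : ℕ => D ^ (q * k (a + i) - (J M₀ : ℤ) * (m * (a + i) : ℕ))) U
      (𝓝 ((x ^ m) ^ J M₀)) := by
    refine hfin.congr fun a => ?_
    rw [mul_pow, ← pow_mul, mul_comm (k _), pow_mul, hq, zpow_sub₀ hD0, _root_.zpow_mul, zpow_natCast,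
      inv_pow, ← pow_mul, div_eq_mul_inv, ← Nat.cast_mul, zpow_natCast, mul_comm (m * _)]
  obtain ⟨c, -, hc⟩ := zpow_tendsto_discrete hD (pow_ne_zero _ hxm) h6
  obtain ⟨r, hr⟩ := Finset.dvd_prod_of_mem J (hMc i)
  refine ⟨c * r, ?_⟩
  rw [hr, ← mul_assoc, pow_mul, pow_mul, hc, _root_.zpow_mul, zpow_natCast]

end BVCLin

namespace BVCLin

open Polynomial Filter Topology Matrix

/-- A Cayley–Hamilton inverse of the powers of an invertible matrix. -/
theorem exists_aeval_mul_pow_eq_one {F : Type*} [Field F] {n : Type*} [Fintype n]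
    [DecidableEq n] (A : Matrix n n F) (hA : IsUnit A) (b : ℕ) :
    ∃ v : F[X], aeval A v * A ^ b = 1 := by
  have h0 : ¬ (X : F[X]) ∣ A.charpoly := by
    rw [X_dvd_iff, coeff_zero_eq_eval_zero, eval_charpoly]
    intro h
    rw [map_zero, zero_sub, det_neg] at h
    have hdet := ((isUnit_iff_isUnit_det A).1 hA).ne_zero
    exact (mul_ne_zero (pow_ne_zero _ (neg_ne_zero.2 one_ne_zero)) hdet) h
  have hcop : IsCoprime (X ^ b : F[X]) A.charpoly :=
    ((irreducible_X.coprime_iff_not_dvd).2 h0).pow_left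
  obtain ⟨v, w, hvw⟩ := hcop
  refine ⟨v, ?_⟩
  have := congrArg (aeval A) hvw
  simpa [aeval_self_charpoly] using this

/-- The coefficient functional `M ↦ x ⬝ᵥ M y` of a matrix. -/
def coeffFun {F : Type*} [Field F] {n : Type*} [Fintype n] (x y : n → F) :
    Matrix n n F →ₗ[F] F where
  toFun M := x ⬝ᵥ (M *ᵥ y)
  map_add' M N := by rw [add_mulVec, dotProduct_add]
  map_smul' c M := by rw [smul_mulVec, dotProduct_smul]; rfl

theorem apply_aeval_mul {F R : Type*} [Field F] [Ring R] [Algebra F R] (ℓ : R →ₗ[F] F) (A B : R)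
    (v : F[X]) (y c : F) (h : ∀ i, ℓ (A ^ i * B) = c * y ^ i) :
    ℓ (aeval A v * B) = c * v.eval y := by
  induction v using Polynomial.induction_on' with
  | add p q hp hq => simp [add_mul, hp, hq, mul_add]
  | monomial i a =>
    rw [aeval_monomial, ← Algebra.smul_def, smul_mul_assoc, map_smul, h, eval_monomial, smul_eq_mul]
    ring

/-- A functional which is constant on high powers of an invertible matrix `A` fixing a nonzero
matrix `P` has the same value at `1`. -/
theorem apply_one_of_eventually_const {F : Type*} [Field F] {n : Type*} [Fintype n]
    [DecidableEq n] (A P : Matrix n n F) (hA : IsUnit A) (hP : P ≠ 0) (hAP : A * P = P)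
    (ℓ : Matrix n n F →ₗ[F] F) (y : F) (b : ℕ) (h : ∀ c, b ≤ c → ℓ (A ^ c) = y) : ℓ 1 = y := by
  obtain ⟨v, hv⟩ := exists_aeval_mul_pow_eq_one A hA b
  have hpow : ∀ i : ℕ, A ^ i * P = P := by
    intro i
    induction i with
    | zero => simp
    | succ i ih => rw [pow_succ, Matrix.mul_assoc, hAP, ih]
  have h1 : ∀ w : F[X], aeval A w * P = w.eval 1 • P := by
    intro w
    induction w using Polynomial.induction_on' with
    | add p q hp hq => simp [add_mul, hp, hq, add_smul]
    | monomial i a => rw [aeval_monomial, ← Algebra.smul_def, smul_mul_assoc, hpow]; simp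
  have h2 : v.eval 1 = 1 := by
    have h3 : P = v.eval 1 • P := by
      rw [← h1]
      conv_lhs => rw [← one_mul P, ← hv, Matrix.mul_assoc, hpow]
    by_contra hne
    have : (v.eval 1 - 1) • P = 0 := by rw [sub_smul, ← h3, one_smul, sub_self]
    exact hP ((smul_eq_zero.1 this).resolve_left (sub_ne_zero.2 hne))
  have h4 := apply_aeval_mul ℓ A (A ^ b) v 1 y fun i => by
    rw [← pow_add, h _ (by omega)]; simp
  rw [hv, h2, mul_one] at h4
  exact h4

theorem eventually_eq_of_pow {Ω : Type*} [NormedField Ω] {N : ℕ} (hN : 0 < N)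
    {z : ℕ → Ω} {y : Ω} (hz : Tendsto z atTop (𝓝 y)) (h : ∀ᶠ b in atTop, z b ^ N = y ^ N) :
    ∀ᶠ b in atTop, z b = y := by
  classical
  let R : Finset Ω := (nthRoots N (y ^ N)).toFinset.erase y
  have hopen : IsOpen ((R : Set Ω)ᶜ) := R.finite_toSet.isClosed.isOpen_compl
  have hmem : y ∈ ((R : Set Ω)ᶜ) := by simp [R]
  filter_upwards [hz.eventually (hopen.mem_nhds hmem), h] with b hb hb'
  by_contra hne
  apply hb
  simp [R, hne, hb', mem_nthRoots hN]

/-- A group with a proximal element, all of whose eigenvalues are, up to a uniform exponent, powers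
of finitely many numbers, is virtually indicable. With `g` rescaled by `D` converging to `e fᵀ`, the
function `ψ h = f ⬝ᵥ h e` is multiplicative on the subgroup where it does not vanish; this subgroup
has finite index, and `ψ ^ N` takes values in the powers of `D` there. -/
theorem virtuallyIndicable_of_proximal {Γ Ω : Type*} [Group Γ] [NormedField Ω] [IsAlgClosed Ω]
    {n : Type*} [Fintype n] [DecidableEq n] (ρ : Γ →* Matrix n n Ω) (g : Γ) (D : Ω) (hD : 1 < ‖D‖)
    (e f : n → Ω) (hfe : f ⬝ᵥ e = 1)
    (hlim : Tendsto (fun a : ℕ => (D ^ a)⁻¹ • ρ g ^ a) atTop (𝓝 (vecMulVec e f)))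
    (m : ℕ) (hm : 0 < m) (𝓜 : Finset Ω)
    (hspec : ∀ u θ, (ρ u).charpoly.IsRoot θ → ∃ M ∈ 𝓜, ∃ k : ℕ, θ ^ m = M ^ k) :
    VirtuallyIndicable Γ := by
  classical
  have hne : Nonempty n := by
    by_contra h
    have := not_nonempty_iff.1 h
    simp at hfe
  have hD0 : D ≠ 0 := by rintro rfl; norm_num at hD
  have hunit : ∀ u, IsUnit (ρ u) := fun u => (Group.isUnit u).map ρ
  obtain ⟨N, hN, hNspec⟩ := exists_uniform_exponent (ρ g) D hD e f hfe hlim m hm 𝓜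
  let ψ : Γ → Ω := fun h => f ⬝ᵥ (ρ h *ᵥ e)
  have hL1 : ∀ h, ψ h ≠ 0 → ∃ c : ℤ, ψ h ^ N = D ^ c := fun h hh =>
    hNspec (ρ h) (fun a θ hθ => hspec (g ^ a * h) θ (by rwa [map_mul, map_pow])) hh
  have hψ1 : ψ 1 = 1 := by simp [ψ, hfe]
  set P := vecMulVec e f with hPdef
  let A := D⁻¹ • ρ g
  have hApow : ∀ a : ℕ, A ^ a = (D ^ a)⁻¹ • ρ g ^ a := fun a => by
    simp only [A, _root_.smul_pow, inv_pow]
  have hA : IsUnit A := by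
    have := (hunit g).smul (Units.mk0 D⁻¹ (inv_ne_zero hD0))
    exact this
  have hlimA : Tendsto (fun a : ℕ => A ^ a) atTop (𝓝 P) := by
    simpa only [hApow] using hlim
  have hAP : A * P = P := by
    refine tendsto_nhds_unique (tendsto_const_nhds.mul hlimA) ?_
    simpa only [pow_succ'] using (tendsto_add_atTop_iff_nat 1).2 hlimA
  have hPe : P *ᵥ e = e := by
    rw [hPdef, vecMulVec_mulVec, hfe]; simp
  have hP : P ≠ 0 := by
    intro h0
    rw [h0] at hPe
    rw [← hPe] at hfe
    simp at hfe
  have hψg : ψ g = D := by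
    have h1 : A *ᵥ e = e := by
      conv_lhs => rw [← hPe, mulVec_mulVec, hAP]
      exact hPe
    have h2 : ρ g *ᵥ e = D • e := by
      conv_rhs => rw [← h1]
      simp only [A]
      rw [smul_mulVec, smul_smul, mul_inv_cancel₀ hD0, one_smul]
    simp only [ψ]
    rw [h2, dotProduct_smul, hfe, smul_eq_mul, mul_one]
  -- `ψ (h g^b h')` is asymptotic to `D^b ψ(h) ψ(h')`. Up to the exponent `N` both sides are powers of
  -- `D`, so they agree for large `b`, and then for `b = 0` by Cayley–Hamilton.
  have hmul : ∀ h h', ψ h ≠ 0 → ψ h' ≠ 0 → ψ (h * h') = ψ h * ψ h' := by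
    intro h h' hh hh'
    let ℓ := coeffFun (f ᵥ* ρ h) (ρ h' *ᵥ e)
    have hℓ : ∀ M, ℓ M = f ⬝ᵥ ((ρ h * M * ρ h') *ᵥ e) := by
      intro M
      simp only [ℓ, coeffFun, LinearMap.coe_mk, AddHom.coe_mk]
      rw [← dotProduct_mulVec, mulVec_mulVec, mulVec_mulVec, Matrix.mul_assoc]
    have hℓA : ∀ b : ℕ, ℓ (A ^ b) = (D ^ b)⁻¹ * ψ (h * g ^ b * h') := by
      intro b
      rw [hApow, map_smul, hℓ, smul_eq_mul]
      simp [ψ, map_mul, map_pow]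
    have hℓP : ℓ P = ψ h * ψ h' := by
      simp only [ℓ, coeffFun, LinearMap.coe_mk, AddHom.coe_mk, hPdef, ψ]
      rw [vecMulVec_mulVec]
      simp only [op_smul_eq_smul]
      rw [dotProduct_smul, ← dotProduct_mulVec, smul_eq_mul, mul_comm]
    have hcont : Tendsto (fun b : ℕ => ℓ (A ^ b)) atTop (𝓝 (ψ h * ψ h')) := by
      rw [← hℓP]
      have : Continuous fun M : Matrix n n Ω => ℓ M := by
        simp only [ℓ, coeffFun, LinearMap.coe_mk, AddHom.coe_mk]
        exact continuous_const.dotProduct (continuous_id.matrix_mulVec continuous_const)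
      exact this.continuousAt.tendsto.comp hlimA
    have hy : ψ h * ψ h' ≠ 0 := mul_ne_zero hh hh'
    have hev0 : ∀ᶠ b in atTop, ℓ (A ^ b) ≠ 0 := hcont.eventually_ne hy
    have hc : ∀ b, ∃ c : ℤ, ℓ (A ^ b) ≠ 0 → ℓ (A ^ b) ^ N = D ^ c := by
      intro b
      by_cases h0 : ℓ (A ^ b) = 0
      · exact ⟨0, fun h => absurd h0 h⟩
      · obtain ⟨c, hc⟩ := hL1 (h * g ^ b * h') (by
          intro h1; rw [hℓA, h1, mul_zero] at h0; exact h0 rfl)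
        refine ⟨c - (b * N : ℕ), fun _ => ?_⟩
        rw [hℓA, mul_pow, hc, zpow_sub₀ hD0, zpow_natCast, inv_pow, ← pow_mul]
        field_simp
    choose c hc using hc
    have hlimN : Tendsto (fun b => D ^ c b) atTop (𝓝 ((ψ h * ψ h') ^ N)) := by
      refine (hcont.pow N).congr' ?_
      filter_upwards [hev0] with b hb using hc b hb
    obtain ⟨c0, hc0, hyc⟩ := zpow_tendsto_discrete hD (pow_ne_zero _ hy) hlimN
    have hevN : ∀ᶠ b in atTop, ℓ (A ^ b) ^ N = (ψ h * ψ h') ^ N := by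
      filter_upwards [hev0, hc0] with b hb hb0
      rw [hc b hb, hb0, hyc]
    obtain ⟨b0, hb0⟩ := eventually_atTop.1 (eventually_eq_of_pow hN hcont hevN)
    have := apply_one_of_eventually_const A P hA hP hAP ℓ _ b0 hb0
    rw [hℓ, Matrix.mul_one] at this
    simpa [ψ] using this
  -- The inverse of `h` is a polynomial in `h` and `ψ (h ^ i) = ψ h ^ i`.
  have hinv : ∀ h, ψ h ≠ 0 → ψ h⁻¹ * ψ h = 1 := by
    intro h hh
    have hpow : ∀ i : ℕ, ψ (h ^ i) = ψ h ^ i := by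
      intro i
      induction i with
      | zero => simpa using hψ1
      | succ i ih =>
        rw [pow_succ, pow_succ, hmul _ _ (by rw [ih]; exact pow_ne_zero _ hh) hh, ih]
    obtain ⟨v, hv⟩ := exists_aeval_mul_pow_eq_one (ρ h) (hunit h) 1
    rw [pow_one] at hv
    have hv' : aeval (ρ h) v = ρ h⁻¹ := by
      calc aeval (ρ h) v = aeval (ρ h) v * (ρ h * ρ h⁻¹) := by
            rw [← map_mul, mul_inv_cancel, map_one, Matrix.mul_one]
        _ = ρ h⁻¹ := by rw [← Matrix.mul_assoc, hv, Matrix.one_mul]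
    let ℓ := coeffFun f e
    have hℓ : ∀ u, ℓ (ρ u) = ψ u := fun u => rfl
    have h1 := apply_aeval_mul ℓ (ρ h) 1 v (ψ h) 1 fun i => by
      rw [Matrix.mul_one, ← map_pow, hℓ, hpow, one_mul]
    have h2 := apply_aeval_mul ℓ (ρ h) (ρ h) v (ψ h) (ψ h) fun i => by
      rw [← pow_succ, ← map_pow, hℓ, hpow, pow_succ']
    rw [Matrix.mul_one, hv', hℓ, one_mul] at h1
    rw [hv, ← map_one ρ, hℓ, hψ1] at h2
    rw [h1, h2, mul_comm]
  let S : Subgroup Γ :=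
    { carrier := {h | ψ h ≠ 0}
      one_mem' := by simp [hψ1]
      mul_mem' := fun {a b} ha hb => by
        change ψ (a * b) ≠ 0
        rw [hmul a b ha hb]; exact mul_ne_zero ha hb
      inv_mem' := fun {a} ha => left_ne_zero_of_mul_eq_one (hinv a ha) }
  have hS : ∀ h, h ∈ S ↔ ψ h ≠ 0 := fun h => Iff.rfl
  -- The index of `S` is finite: finitely many row vectors `f ρ(u)` span all of them
  have hSf : S.FiniteIndex := by
    obtain ⟨b, hbs, hbspan, hbli⟩ := exists_linearIndependent Ω (Set.range fun u => f ᵥ* ρ u)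
    have hbfin : Finite b := hbli.finite
    choose w hw using fun x : b => hbs x.2
    have hsurj : Function.Surjective (fun x : b => (QuotientGroup.mk (w x)⁻¹ : Γ ⧸ S)) := by
      intro q
      obtain ⟨h, rfl⟩ := QuotientGroup.mk_surjective q
      by_contra hcon
      push Not at hcon
      have hzero : ∀ x ∈ b, x ⬝ᵥ (ρ h *ᵥ e) = 0 := by
        intro x hx
        by_contra hx0
        refine hcon ⟨x, hx⟩ (QuotientGroup.eq.2 ?_)
        rw [inv_inv, hS]
        have h3 : f ᵥ* ρ (w ⟨x, hx⟩) = x := hw ⟨x, hx⟩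
        rw [← h3, ← dotProduct_mulVec, mulVec_mulVec, ← map_mul] at hx0
        exact hx0
      have hall : ∀ x ∈ Submodule.span Ω b, x ⬝ᵥ (ρ h *ᵥ e) = 0 := by
        intro x hx
        induction hx using Submodule.span_induction with
        | mem x hx => exact hzero x hx
        | zero => simp
        | add x y _ _ hx hy => rw [add_dotProduct, hx, hy, add_zero]
        | smul c x _ hx => rw [smul_dotProduct, hx, smul_zero]
      have h4 := hall (f ᵥ* ρ h⁻¹) (by
        rw [hbspan]; exact Submodule.subset_span ⟨h⁻¹, rfl⟩)
      rw [← dotProduct_mulVec, mulVec_mulVec, ← map_mul, inv_mul_cancel, map_one, one_mulVec,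
        hfe] at h4
      exact one_ne_zero h4
    have : Finite (Γ ⧸ S) := Finite.of_surjective _ hsurj
    exact Subgroup.finiteIndex_of_finite_quotient
  choose! c hc using hL1
  have hDinj : ∀ a b : ℤ, D ^ a = D ^ b → a = b := by
    intro a b hab
    have := congrArg norm hab
    rw [norm_zpow, norm_zpow] at this
    exact zpow_right_injective₀ (by linarith) hD.ne' this
  refine ⟨S, hSf,
    { toFun := fun h => Multiplicative.ofAdd (c h)
      map_one' := ?_
      map_mul' := ?_ }, ⟨g, ?_⟩, ?_⟩
  · change c 1 = 0
    refine hDinj _ _ ?_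
    rw [← hc 1 (by rw [hψ1]; exact one_ne_zero), hψ1]
    simp
  · rintro ⟨x, hx⟩ ⟨y, hy⟩
    change c (x * y) = c x + c y
    refine hDinj _ _ ?_
    rw [← hc _ (S.mul_mem hx hy), hmul x y hx hy, mul_pow, hc x hx, hc y hy, zpow_add₀ hD0]
  · rw [hS, hψg]; exact hD0
  · intro h0
    have h0 : c g = 0 := h0
    have := hc g (by rw [hψg]; exact hD0)
    rw [hψg, h0, ← zpow_natCast] at this
    have := hDinj _ _ this
    omega

end BVCLin

/-! ### Proximality on exterior powers -/

namespace BVCLin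

open Polynomial Filter Topology Matrix Module

/-- If every `u ^ m` is conjugate to a power of one of finitely many `c ∈ C`, then in every
representation the `m`-th power of any eigenvalue is a power of an eigenvalue of some `c ∈ C`. -/
theorem eigenvalue_pow_eq {Γ Ω : Type*} [Group Γ] [Field Ω] [IsAlgClosed Ω]
    {n : Type*} [Fintype n] [DecidableEq n] (ρ : Γ →* Matrix n n Ω) (m : ℕ) (C : Finset Γ)
    (hC : ∀ u : Γ, ∃ c ∈ C, ∃ k : ℕ, IsConj (u ^ m) (c ^ k)) :
    ∀ u θ, (ρ u).charpoly.IsRoot θ →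
      ∃ c ∈ C, ∃ M, (ρ c).charpoly.IsRoot M ∧ ∃ k : ℕ, θ ^ m = M ^ k := by
  intro u θ hθ
  obtain ⟨c, hc, k, hk⟩ := hC u
  rw [← Matrix.mem_spectrum_iff_isRoot_charpoly] at hθ
  have hne : Nontrivial (Matrix n n Ω) := by
    by_contra h
    rw [not_nontrivial_iff_subsingleton] at h
    rw [spectrum.of_subsingleton] at hθ
    exact hθ
  have h1 : θ ^ m ∈ spectrum Ω (ρ (u ^ m)) := by
    rw [map_pow]; exact spectrum.pow_mem_pow _ _ hθ
  have h2 : θ ^ m ∈ spectrum Ω (ρ (c ^ k)) := by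
    obtain ⟨x, hx⟩ := isConj_iff.1 hk
    have hu : ρ x * ρ x⁻¹ = 1 := by rw [← map_mul]; simp
    have hu' : ρ x⁻¹ * ρ x = 1 := by rw [← map_mul]; simp
    have := spectrum.units_conjugate (R := Ω) (a := ρ (u ^ m))
      (u := ⟨ρ x, ρ x⁻¹, hu, hu'⟩)
    rw [← hx, map_mul, map_mul]
    change _ ∈ spectrum Ω (ρ x * ρ (u ^ m) * ρ x⁻¹)
    exact this ▸ h1
  rw [map_pow, spectrum.map_pow_of_nonempty
    (spectrum.nonempty_of_isAlgClosed_of_finiteDimensional Ω (ρ c))] at h2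
  obtain ⟨M, hM, hMk⟩ := h2
  exact ⟨c, hc, M, Matrix.mem_spectrum_iff_isRoot_charpoly.1 hM, k, hMk.symm⟩

/-- The orbit of a vector killed by `∏ (f - θ)` is `O(q ^ a)` as soon as `q` exceeds
all `‖θ‖`. -/
theorem exists_growth_bound {Ω V : Type*} [NormedField Ω] [AddCommGroup V] [Module Ω V]
    (f : End Ω V) (q : ℝ) (hq : 0 < q) (ℓ : V →ₗ[Ω] Ω) (s : Multiset Ω) :
    (∀ θ ∈ s, ‖θ‖ < q) → ∀ v : V, aeval f (s.map fun θ => X - C θ).prod v = 0 →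
      ∃ B : ℝ, ∀ a : ℕ, ‖ℓ ((f ^ a) v)‖ ≤ B * q ^ a := by
  induction s using Multiset.induction with
  | empty =>
    intro _ v hv
    have hv : v = 0 := by simpa using hv
    exact ⟨0, fun a => by simp [hv]⟩
  | cons θ s ih =>
    intro hs v hv
    have hθ : ‖θ‖ < q := hs θ (by simp)
    obtain ⟨B, hB⟩ := ih (fun x hx => hs x (by simp [hx])) ((f - algebraMap Ω _ θ) v) (by
      rw [Multiset.map_cons, Multiset.prod_cons, mul_comm, map_mul] at hv
      simpa using hv)
    have hrec : ∀ a : ℕ, ℓ ((f ^ (a + 1)) v) =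
        θ * ℓ ((f ^ a) v) + ℓ ((f ^ a) ((f - algebraMap Ω _ θ) v)) := by
      intro a
      simp [pow_succ, Module.algebraMap_end_apply]
    refine ⟨max ‖ℓ v‖ (B / (q - ‖θ‖)), fun a => ?_⟩
    set B' := max ‖ℓ v‖ (B / (q - ‖θ‖))
    have hB' : B ≤ B' * (q - ‖θ‖) := by
      rw [← div_le_iff₀ (by linarith)]; exact le_max_right _ _
    induction a with
    | zero => simp [B']
    | succ a iha =>
      rw [hrec]
      have hqa : 0 < q ^ a := pow_pos hq a
      calc _ ≤ ‖θ‖ * ‖ℓ ((f ^ a) v)‖ + ‖ℓ ((f ^ a) ((f - algebraMap Ω _ θ) v))‖ := by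
            rw [← norm_mul]; exact norm_add_le _ _
        _ ≤ ‖θ‖ * (B' * q ^ a) + B' * (q - ‖θ‖) * q ^ a := by
            gcongr
            exact (hB a).trans (by gcongr)
        _ = _ := by ring

/-- A determinant with one small row. -/
theorem norm_det_le_of_rows {Ω : Type*} [NormedField Ω] {s : ℕ} (M : Matrix (Fin s) (Fin s) Ω)
    (k : Fin s) (B x y : ℝ) (h1 : ∀ i j, ‖M i j‖ ≤ B * x)
    (h2 : ∀ j, ‖M k j‖ ≤ B * y) :
    ‖M.det‖ ≤ s.factorial * B ^ s * (x ^ (s - 1) * y) := by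
  rw [← det_transpose, det_apply']
  refine (norm_sum_le _ _).trans ?_
  have hterm : ∀ σ : Equiv.Perm (Fin s),
      ‖((Equiv.Perm.sign σ : ℤ) : Ω) * ∏ i, Mᵀ (σ i) i‖ ≤ B ^ s * (x ^ (s - 1) * y) := by
    intro σ
    have hs : ‖((Equiv.Perm.sign σ : ℤ) : Ω)‖ = 1 := by
      rcases Int.units_eq_one_or (Equiv.Perm.sign σ) with h | h <;> simp [h]
    rw [norm_mul, hs, one_mul, norm_prod]
    calc ∏ i, ‖Mᵀ (σ i) i‖ ≤ ∏ i, (B * if i = k then y else x) := by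
          refine Finset.prod_le_prod (fun i _ => norm_nonneg _) fun i _ => ?_
          split_ifs with h
          · subst h; exact h2 _
          · exact h1 _ _
      _ = B ^ s * (x ^ (s - 1) * y) := by
          have herase : ∏ i ∈ Finset.univ.erase k, (if i = k then y else x) = x ^ (s - 1) := by
            rw [Finset.prod_congr rfl (g := fun _ => x)]
            · simp
            · intro i hi
              simp [(Finset.mem_erase.1 hi).1]
          rw [Finset.prod_mul_distrib, ← Finset.mul_prod_erase Finset.univ
            (fun i => if i = k then y else x) (Finset.mem_univ k), herase]
          simp [mul_comm]
  calc _ ≤ ∑ σ : Equiv.Perm (Fin s), B ^ s * (x ^ (s - 1) * y) :=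
        Finset.sum_le_sum fun σ _ => hterm σ
    _ = _ := by simp [Fintype.card_perm, mul_assoc]

open exteriorPower Set.powersetCard in
/-- If the span of the basis vectors in `S` is `f`-stable and dominates the growth of `f`, then
`f` acts proximally on the exterior power of degree `#S`: its normalised powers converge to the
rank one projection onto the line of `S`. -/
theorem tendsto_exteriorPower {Ω V : Type*} [NormedField Ω] [AddCommGroup V] [Module Ω V]
    {I : Type*} [LinearOrder I] [Fintype I] (b : Basis I Ω V) (f : End Ω V) (s : ℕ)
    (S : Set.powersetCard I s) (h0 : ∀ i ∉ S, ∀ j ∈ S, b.coord i (f (b j)) = 0)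
    (q₁ q₂ B : ℝ) (hq₁ : 0 ≤ q₁) (hq₂ : 0 ≤ q₂)
    (h1 : ∀ i j, ∀ a : ℕ, ‖b.coord i ((f ^ a) (b j))‖ ≤ B * q₁ ^ a)
    (h2 : ∀ i, ∀ j ∉ S, ∀ a : ℕ, ‖b.coord i ((f ^ a) (b j))‖ ≤ B * q₂ ^ a)
    (hD : q₁ ^ (s - 1) * q₂ < ‖ιMultiDual Ω s b S (exteriorPower.map s f (ιMulti_family Ω s b S))‖) :
    Tendsto (fun a : ℕ => (ιMultiDual Ω s b S (exteriorPower.map s f (ιMulti_family Ω s b S)) ^ a)⁻¹ •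
      LinearMap.toMatrix (b.exteriorPower s) (b.exteriorPower s) (exteriorPower.map s f) ^ a) atTop
      (𝓝 (vecMulVec (Pi.single S 1) (Pi.single S 1))) := by
  classical
  set D := ιMultiDual Ω s b S (exteriorPower.map s f (ιMulti_family Ω s b S)) with hDdef
  set F : End Ω (⋀[Ω]^s V) := exteriorPower.map s f with hF
  have hDpos : 0 < ‖D‖ := lt_of_le_of_lt (by positivity) hD
  have hD0 : D ≠ 0 := norm_pos_iff.1 hDpos
  have hFpow : ∀ a : ℕ, F ^ a = exteriorPower.map s (f ^ a) := by
    intro a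
    induction a with
    | zero => simp [Module.End.one_eq_id]
    | succ a ih => rw [pow_succ, pow_succ, ih, Module.End.mul_eq_comp, Module.End.mul_eq_comp,
        exteriorPower.map_comp]
  have hent : ∀ (g : End Ω V) (T J : Set.powersetCard I s),
      ιMultiDual Ω s b T (exteriorPower.map s g (ιMulti_family Ω s b J)) =
        (Matrix.of fun i j => b.coord (ofFinEmbEquiv.symm T j)
          (g (b (ofFinEmbEquiv.symm J i)))).det := by
    intro g T J
    rw [ιMulti_family, map_apply_ιMulti, ιMultiDual_apply_ιMulti]
    rfl
  have hmem : ∀ (T : Set.powersetCard I s) (k : Fin s), ofFinEmbEquiv.symm T k ∈ T := fun T k =>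
    (mem_range_ofFinEmbEquiv_symm_iff_mem T _).1 ⟨k, rfl⟩
  -- The line of `S` is an eigenline of the exterior power of `f`.
  have heig : F (b.exteriorPower s S) = D • b.exteriorPower s S := by
    apply (b.exteriorPower s).ext_elem
    intro T
    rw [basis_repr_apply, basis_apply, map_smul, Finsupp.smul_apply]
    by_cases hT : T = S
    · subst hT
      rw [basis_repr_self, smul_eq_mul, mul_one]
    · rw [basis_repr_ne Ω s b (Ne.symm hT), smul_zero, hent]
      obtain ⟨i, hi, hiS⟩ := (exists_mem_notMem_iff_ne T S).1 hT
      obtain ⟨k, rfl⟩ := (mem_range_ofFinEmbEquiv_symm_iff_mem T i).2 hi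
      exact Matrix.det_eq_zero_of_column_eq_zero k fun j => h0 _ hiS _ (hmem S j)
  have heigpow : ∀ a : ℕ, (F ^ a) (b.exteriorPower s S) = D ^ a • b.exteriorPower s S := by
    intro a
    induction a with
    | zero => simp
    | succ a ih => rw [pow_succ', Module.End.mul_apply, ih, map_smul, heig, smul_smul, pow_succ]
  refine tendsto_pi_nhds.2 fun T => tendsto_pi_nhds.2 fun J => ?_
  have hval : ∀ a : ℕ, ((D ^ a)⁻¹ • LinearMap.toMatrix (b.exteriorPower s) (b.exteriorPower s) F ^ a)
      T J = (D ^ a)⁻¹ * (b.exteriorPower s).repr ((F ^ a) (b.exteriorPower s J)) T := by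
    intro a
    rw [LinearMap.toMatrix_pow, Matrix.smul_apply, LinearMap.toMatrix_apply, smul_eq_mul]
  simp_rw [hval]
  by_cases hJ : J = S
  · subst hJ
    refine tendsto_const_nhds.congr fun a => ?_
    rw [heigpow, map_smul, Finsupp.smul_apply, Basis.repr_self, smul_eq_mul, ← mul_assoc,
      inv_mul_cancel₀ (pow_ne_zero _ hD0), one_mul, vecMulVec_apply]
    simp [Pi.single_apply, Finsupp.single_apply, eq_comm]
  · have hz : vecMulVec (Pi.single S 1) (Pi.single S 1) T J = (0 : Ω) := by
      simp [vecMulVec_apply, Pi.single_apply, hJ]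
    rw [hz]
    obtain ⟨j, hj, hjS⟩ := (exists_mem_notMem_iff_ne J S).1 hJ
    obtain ⟨k, rfl⟩ := (mem_range_ofFinEmbEquiv_symm_iff_mem J j).2 hj
    refine squeeze_zero_norm (a := fun a : ℕ => (s.factorial * B ^ s) *
      ((q₁ ^ (s - 1) * q₂) / ‖D‖) ^ a) (fun a => ?_) ?_
    · rw [hFpow, basis_apply, basis_repr_apply, hent, norm_mul, norm_inv, norm_pow]
      have := norm_det_le_of_rows (Matrix.of fun i j => b.coord (ofFinEmbEquiv.symm T j)
          ((f ^ a) (b (ofFinEmbEquiv.symm J i)))) k B (q₁ ^ a) (q₂ ^ a)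
          (fun i j => h1 _ _ a) (fun j => h2 _ _ hjS a)
      rw [div_pow, mul_pow, ← pow_mul, mul_comm (s - 1) a, pow_mul]
      calc _ ≤ (‖D‖ ^ a)⁻¹ * _ := mul_le_mul_of_nonneg_left this (by positivity)
        _ = _ := by ring
    · rw [← mul_zero ((s.factorial : ℝ) * B ^ s)]
      exact (tendsto_pow_atTop_nhds_zero_of_lt_one (by positivity)
        ((div_lt_one hDpos).2 hD)).const_mul _

end BVCLin

namespace BVCLin

open Polynomial Filter Topology Matrix Module

/-- A basis adapted to a decomposition into complementary subspaces. -/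
theorem exists_adapted_basis {F V : Type*} [Field F] [AddCommGroup V] [Module F V]
    [FiniteDimensional F V] (U W : Submodule F V) (h : IsCompl U W) :
    ∃ (n : ℕ) (b : Basis (Fin n) F V) (S : Finset (Fin n)),
      S.card = finrank F U ∧ (∀ i ∈ S, b i ∈ U) ∧ (∀ i ∉ S, b i ∈ W) ∧
      ∀ v ∈ U, ∀ i ∉ S, b.coord i v = 0 := by
  classical
  let b₀ := ((finBasis F U).prod (finBasis F W)).map (U.prodEquivOfIsCompl W h)
  refine ⟨_, b₀.reindex finSumFinEquiv,
    Finset.univ.map (Fin.castAddEmb (finrank F W)), by simp, ?_, ?_, ?_⟩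
  · intro i hi
    obtain ⟨j, -, rfl⟩ := Finset.mem_map.1 hi
    simp [b₀]
  · intro i hi
    induction i using Fin.addCases with
    | left i => exact absurd (Finset.mem_map.2 ⟨i, Finset.mem_univ _, rfl⟩) hi
    | right i => simp [b₀]
  · intro v hv i hi
    induction i using Fin.addCases with
    | left i => exact absurd (Finset.mem_map.2 ⟨i, Finset.mem_univ _, rfl⟩) hi
    | right i =>
      have : (U.prodEquivOfIsCompl W h).symm v = ((⟨v, hv⟩ : U), 0) :=
        Submodule.prodEquivOfIsCompl_symm_apply_left U W h ⟨v, hv⟩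
      simp [b₀, this]

open exteriorPower Set.powersetCard in
/-- The minor of `f` on an `f`-stable coordinate subspace is the product of the eigenvalues of `f`
there. -/
theorem norm_minor {Ω V : Type*} [NormedField Ω] [IsAlgClosed Ω] [AddCommGroup V] [Module Ω V]
    {I : Type*} [LinearOrder I] [Fintype I] (b : Basis I Ω V) (f : End Ω V) (s : ℕ)
    (S : Set.powersetCard I s) (h0 : ∀ i ∉ S, ∀ j ∈ S, b.coord i (f (b j)) = 0) (R : ℝ)
    (hR : ∀ θ : Ω, ∀ w : V, w ≠ 0 → (∀ i ∉ S, b.coord i w = 0) → f w = θ • w → ‖θ‖ = R) :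
    ‖ιMultiDual Ω s b S (exteriorPower.map s f (ιMulti_family Ω s b S))‖ = R ^ s := by
  classical
  have hmem : ∀ k : Fin s, ofFinEmbEquiv.symm S k ∈ S := fun k =>
    (mem_range_ofFinEmbEquiv_symm_iff_mem S _).1 ⟨k, rfl⟩
  rw [ιMulti_family, map_apply_ιMulti, ιMultiDual_apply_ιMulti]
  set M : Matrix (Fin s) (Fin s) Ω := Matrix.of fun i j => b.coord (ofFinEmbEquiv.symm S j)
    ((f ∘ b ∘ ofFinEmbEquiv.symm S) i) with hM
  rw [← det_transpose, det_eq_prod_roots_charpoly]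
  have hroot : ∀ θ ∈ Mᵀ.charpoly.roots, ‖θ‖ = R := by
    intro θ hθ
    have hθ := (mem_roots'.1 hθ).2
    rw [← Matrix.mem_spectrum_iff_isRoot_charpoly, ← Matrix.spectrum_toLin',
      ← Module.End.hasEigenvalue_iff_mem_spectrum] at hθ
    obtain ⟨v, hv⟩ := hθ.exists_hasEigenvector
    have hv1 : Mᵀ *ᵥ v = θ • v := by simpa using hv.apply_eq_smul
    have hv0 : v ≠ 0 := hv.2
    let Φ : (Fin s → Ω) → V := fun v => ∑ i, v i • b (ofFinEmbEquiv.symm S i)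
    have hΦ : ∀ v k, b.coord (ofFinEmbEquiv.symm S k) (Φ v) = v k := by
      intro v k
      simp [Φ, Finsupp.single_apply]
    have hΦ0 : ∀ v, ∀ i ∉ S, b.coord i (Φ v) = 0 := by
      intro v i hi
      have : ∀ k, ofFinEmbEquiv.symm S k ≠ i := fun k hk => hi (hk ▸ hmem k)
      simp [Φ, this]
    have hfΦ : f (Φ v) = Φ (Mᵀ *ᵥ v) := by
      apply b.ext_elem
      intro l
      rw [← b.coord_apply, ← b.coord_apply]
      by_cases hl : l ∈ S
      · obtain ⟨k, rfl⟩ := (mem_range_ofFinEmbEquiv_symm_iff_mem S l).2 hl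
        rw [hΦ]
        simp [Φ, Matrix.mulVec, dotProduct, hM, mul_comm]
      · rw [hΦ0 _ _ hl]
        simp only [Φ, map_sum, map_smul, smul_eq_mul]
        exact Finset.sum_eq_zero fun k _ => by rw [h0 _ hl _ (hmem k), mul_zero]
    refine hR θ (Φ v) (fun h => hv0 ?_) (hΦ0 v) ?_
    · ext k
      rw [← hΦ v k, h]; simp
    · rw [hfΦ, hv1]
      simp [Φ, Finset.smul_sum, smul_smul]
  have hcard : Multiset.card Mᵀ.charpoly.roots = s := by
    rw [← (IsAlgClosed.splits Mᵀ.charpoly).natDegree_eq_card_roots, charpoly_natDegree_eq_dim]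
    simp
  have hn : ‖Mᵀ.charpoly.roots.prod‖ = (Mᵀ.charpoly.roots.map norm).prod :=
    map_multiset_prod (normHom : Ω →*₀ ℝ) _
  rw [hn, Multiset.map_congr rfl hroot, Multiset.map_const', Multiset.prod_replicate, hcard]

end BVCLin

namespace BVCLin

open Polynomial Filter Topology Matrix Module

/-- If some element has an eigenvalue of absolute value greater than `1`, let `U` be the sum of the
generalised eigenspaces with eigenvalues of maximal absolute value: the element acts proximally on
the exterior power of degree `dim U`. -/
theorem virtuallyIndicable_of_eigenvalue {Γ Ω : Type*} [Group Γ] [NormedField Ω] [IsAlgClosed Ω]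
    {n : Type*} [Fintype n] [DecidableEq n] (ρ : Γ →* Matrix n n Ω) (m : ℕ) (hm : 0 < m)
    (C : Finset Γ) (hC : ∀ u : Γ, ∃ c ∈ C, ∃ k : ℕ, IsConj (u ^ m) (c ^ k))
    (g : Γ) (θ₀ : Ω) (hθ₀ : (ρ g).charpoly.IsRoot θ₀) (h1 : 1 < ‖θ₀‖) :
    VirtuallyIndicable Γ := by
  classical
  set P := (ρ g).charpoly with hP
  have hPm : P.Monic := charpoly_monic _
  have hP0 : P ≠ 0 := hPm.ne_zero
  have hroots0 : θ₀ ∈ P.roots.toFinset := by simpa [hP0] using hθ₀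
  obtain ⟨θ₁, hθ₁, hmax⟩ := P.roots.toFinset.exists_max_image norm ⟨θ₀, hroots0⟩
  set R := ‖θ₁‖ with hR
  have hR1 : 1 < R := h1.trans_le (hmax θ₀ hroots0)
  let s₁ := P.roots.filter fun θ => ‖θ‖ = R
  let s₂ := P.roots.filter fun θ => ¬ ‖θ‖ = R
  let P₁ : Polynomial Ω := (s₁.map fun θ => X - Polynomial.C θ).prod
  let P₂ : Polynomial Ω := (s₂.map fun θ => X - Polynomial.C θ).prod
  have hPP : P₁ * P₂ = P := by
    rw [← Multiset.prod_add, ← Multiset.map_add, Multiset.filter_add_not]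
    exact ((IsAlgClosed.splits P).eq_prod_roots_of_monic hPm).symm
  have hroot : ∀ (s : Multiset Ω) (x : Ω),
      aeval x (s.map fun θ => X - Polynomial.C θ).prod = 0 ↔ x ∈ s := by
    intro s x
    rw [coe_aeval_eq_eval, ← IsRoot, ← mem_roots (Monic.ne_zero
      (monic_multiset_prod_of_monic _ _ fun θ _ => monic_X_sub_C θ)), roots_multiset_prod_X_sub_C]
  have hcop : IsCoprime P₁ P₂ := by
    rw [Polynomial.isCoprime_iff_aeval_ne_zero_of_isAlgClosed Ω Ω]
    intro x
    by_contra! h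
    have h1 := (hroot s₁ x).1 h.1
    have h2 := (hroot s₂ x).1 h.2
    exact (Multiset.mem_filter.1 h2).2 (Multiset.mem_filter.1 h1).2
  set f : End Ω (n → Ω) := toLin' (ρ g) with hf
  have hPf : aeval f P = 0 := by
    have := LinearMap.aeval_self_charpoly f
    rwa [hf, Matrix.charpoly_toLin'] at this
  set U := LinearMap.ker (aeval f P₁) with hU
  set W := LinearMap.ker (aeval f P₂) with hW
  have hcompl : IsCompl U W := by
    refine ⟨disjoint_ker_aeval_of_isCoprime f hcop, codisjoint_iff.2 ?_⟩
    rw [sup_ker_aeval_eq_ker_aeval_mul_of_coprime f hcop, hPP, hPf, LinearMap.ker_zero]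
  have hfU : ∀ v ∈ U, f v ∈ U := by
    intro v hv
    rw [hU, LinearMap.mem_ker] at hv ⊢
    have : Commute (aeval f P₁) f := by
      simpa using (Commute.all P₁ X).map (aeval f)
    have h := LinearMap.congr_fun this.eq v
    rw [Module.End.mul_apply, Module.End.mul_apply, hv, map_zero] at h
    exact h
  have heigU : ∀ θ : Ω, ∀ w ∈ U, w ≠ 0 → f w = θ • w → θ ∈ s₁ := by
    intro θ w hw hw0 hfw
    have he : f.HasEigenvector θ w := ⟨Module.End.mem_eigenspace_iff.2 hfw, hw0⟩
    have := Module.End.aeval_apply_of_hasEigenvector (p := P₁) he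
    rw [LinearMap.mem_ker.1 hw] at this
    have := (smul_eq_zero.1 this.symm).resolve_right hw0
    exact (hroot s₁ θ).1 (by rwa [coe_aeval_eq_eval])
  obtain ⟨N, b, S, hScard, hSU, hSW, hcoord⟩ := exists_adapted_basis U W hcompl
  -- `U` is nonzero because it contains an eigenvector for `θ₁`.
  have hs : 0 < S.card := by
    rw [hScard, Module.finrank_pos_iff_exists_ne_zero]
    have h2 : (ρ g).charpoly.IsRoot θ₁ := by simpa [hP0] using hθ₁
    rw [← Matrix.mem_spectrum_iff_isRoot_charpoly, ← Matrix.spectrum_toLin',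
      ← Module.End.hasEigenvalue_iff_mem_spectrum] at h2
    obtain ⟨w, hw⟩ := h2.exists_hasEigenvector
    refine ⟨⟨w, ?_⟩, fun h => hw.2 (congrArg Subtype.val h)⟩
    have := Module.End.aeval_apply_of_hasEigenvector (p := P₁) hw
    rw [hU, LinearMap.mem_ker, hf, this, ← coe_aeval_eq_eval, (hroot s₁ θ₁).2, zero_smul]
    exact Multiset.mem_filter.2 ⟨Multiset.mem_toFinset.1 hθ₁, rfl⟩
  set s := S.card with hsdef
  let T : Set.powersetCard (Fin N) s := ⟨S, rfl⟩
  have h0 : ∀ i ∉ T, ∀ j ∈ T, b.coord i (f (b j)) = 0 := fun i hi j hj =>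
    hcoord _ (hfU _ (hSU j hj)) i hi
  have hDnorm := norm_minor b f s T h0 R (by
    intro θ w hw0 hw hfw
    have hwU : w ∈ U := by
      rw [← b.sum_repr w]
      refine Submodule.sum_mem _ fun i _ => ?_
      by_cases hi : i ∈ S
      · exact U.smul_mem _ (hSU i hi)
      · have : b.repr w i = 0 := hw i hi
        rw [this, zero_smul]; exact U.zero_mem
    exact (Multiset.mem_filter.1 (heigU θ w hwU hw0 hfw)).2)
  -- Rates `q₂ < R < q₁` separating the two parts of the spectrum.
  obtain ⟨q₂, hq₂0, hq₂R, hq₂⟩ : ∃ q₂ : ℝ, 0 < q₂ ∧ q₂ < R ∧ ∀ θ ∈ s₂, ‖θ‖ < q₂ := by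
    have hlt : ∀ θ ∈ s₂, ‖θ‖ < R := fun θ hθ => lt_of_le_of_ne
      (hmax θ (Multiset.mem_toFinset.2 (Multiset.mem_filter.1 hθ).1)) (Multiset.mem_filter.1 hθ).2
    have hev : ∀ᶠ q in 𝓝[<] R, ∀ θ ∈ s₂.toFinset, ‖θ‖ < q := by
      rw [Filter.eventually_all_finset]
      intro θ hθ
      exact Ioo_mem_nhdsLT (hlt θ (Multiset.mem_toFinset.1 hθ)) |> fun h =>
        Filter.mem_of_superset h fun q hq => hq.1
    have hev0 : ∀ᶠ q in 𝓝[<] R, 0 < q ∧ q < R := Ioo_mem_nhdsLT (by linarith)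
    obtain ⟨q, hq, hq0⟩ := (hev.and hev0).exists
    exact ⟨q, hq0.1, hq0.2, fun θ hθ => hq θ (Multiset.mem_toFinset.2 hθ)⟩
  obtain ⟨q₁, hq₁R, hq₁⟩ : ∃ q₁ : ℝ, R < q₁ ∧ q₁ ^ (s - 1) * q₂ < R ^ s := by
    have hcont : Tendsto (fun q : ℝ => q ^ (s - 1) * q₂) (𝓝[>] R) (𝓝 (R ^ (s - 1) * q₂)) :=
      ((continuous_id.pow (s - 1)).mul continuous_const).continuousAt.tendsto.mono_left
        nhdsWithin_le_nhds
    have hlt : R ^ (s - 1) * q₂ < R ^ s := by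
      calc _ < R ^ (s - 1) * R := by gcongr
        _ = R ^ s := by rw [← pow_succ, Nat.sub_add_cancel hs]
    obtain ⟨q, hq, hq'⟩ := ((hcont.eventually_lt_const hlt).and self_mem_nhdsWithin).exists
    exact ⟨q, hq', hq⟩
  have hq₁0 : 0 < q₁ := by linarith
  have hb1 : ∀ i j, ∃ B : ℝ, ∀ a : ℕ, ‖b.coord i ((f ^ a) (b j))‖ ≤ B * q₁ ^ a := by
    intro i j
    refine exists_growth_bound f q₁ hq₁0 (b.coord i) P.roots (fun θ hθ =>
      (hmax θ (Multiset.mem_toFinset.2 hθ)).trans_lt hq₁R) (b j) ?_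
    rw [← (IsAlgClosed.splits P).eq_prod_roots_of_monic hPm, hPf, LinearMap.zero_apply]
  have hb2 : ∀ i j, ∃ B : ℝ, j ∉ S → ∀ a : ℕ, ‖b.coord i ((f ^ a) (b j))‖ ≤ B * q₂ ^ a := by
    intro i j
    by_cases hj : j ∈ S
    · exact ⟨0, fun h => absurd hj h⟩
    · obtain ⟨B, hB⟩ := exists_growth_bound f q₂ hq₂0 (b.coord i) s₂ hq₂ (b j) (hSW j hj)
      exact ⟨B, fun _ => hB⟩
  choose B₁ hB₁ using hb1
  choose B₂ hB₂ using hb2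
  obtain ⟨B, hB⟩ := (Set.finite_range fun p : Fin N × Fin N => max (B₁ p.1 p.2) (B₂ p.1 p.2)).bddAbove
  have hBB : ∀ i j, max (B₁ i j) (B₂ i j) ≤ B := fun i j => hB ⟨(i, j), rfl⟩
  have hlim := tendsto_exteriorPower b f s T h0 q₁ q₂ B hq₁0.le hq₂0.le
    (fun i j a => (hB₁ i j a).trans (by
      gcongr; exact (le_max_left _ _).trans (hBB i j)))
    (fun i j hj a => (hB₂ i j hj a).trans (by
      gcongr; exact (le_max_right _ _).trans (hBB i j)))
    (by rw [hDnorm]; exact hq₁)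
  let ρ' : Γ →* Matrix (Set.powersetCard (Fin N) s) (Set.powersetCard (Fin N) s) Ω :=
    { toFun := fun u => LinearMap.toMatrix (b.exteriorPower s) (b.exteriorPower s)
        (exteriorPower.map s (toLin' (ρ u)))
      map_one' := by rw [map_one, toLin'_one, exteriorPower.map_id, LinearMap.toMatrix_id]
      map_mul' := fun u v => by
        rw [map_mul, toLin'_mul, exteriorPower.map_comp,
          LinearMap.toMatrix_comp _ (b.exteriorPower s)] }
  refine virtuallyIndicable_of_proximal ρ' g _ ?_ (Pi.single T 1) (Pi.single T 1) (by simp) hlim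
    m hm (C.biUnion fun c => (ρ' c).charpoly.roots.toFinset) ?_
  · rw [hDnorm]; exact one_lt_pow₀ hR1 hs.ne'
  · intro u θ hθ
    obtain ⟨c, hc, M, hM, k, hk⟩ := eigenvalue_pow_eq ρ' m C hC u θ hθ
    refine ⟨M, Finset.mem_biUnion.2 ⟨c, hc, ?_⟩, k, hk⟩
    rw [Multiset.mem_toFinset, mem_roots (charpoly_monic _).ne_zero]
    exact hM

end BVCLin

/-! ### Eigenvalues that are not roots of unity -/

namespace BVCLin

open Polynomial Matrix

theorem nonempty_algHom_of_finite (k E Ω : Type*) [Field k] [Field E] [Algebra k E]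
    [Module.Finite k E] [Field Ω] [IsAlgClosed Ω] [Algebra k Ω] : Nonempty (E →ₐ[k] Ω) :=
  ⟨IsAlgClosed.lift⟩

/-- A finitely generated algebra over a field `k` has points in every algebraically closed
extension `Ω` of `k`, by Zariski's lemma. -/
theorem exists_specialization {k L Ω : Type*} [Field k] [Field L] [Algebra k L] [Field Ω]
    [IsAlgClosed Ω] (ι : k →+* Ω) (T : Finset L) :
    ∃ σ : Algebra.adjoin k (T : Set L) →+* Ω, ∀ x : k, σ (algebraMap k _ x) = ι x := by
  let B := Algebra.adjoin k (T : Set L)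
  have : Algebra.FiniteType k B := (Subalgebra.fg_iff_finiteType _).1 ⟨T, rfl⟩
  obtain ⟨M, hM⟩ := Ideal.exists_maximal B
  let _ : Field (B ⧸ M) := Ideal.Quotient.field M
  have : Algebra.FiniteType k (B ⧸ M) := inferInstance
  have hfin : Module.Finite k (B ⧸ M) := finite_of_finite_type_of_isJacobsonRing k (B ⧸ M)
  let _ : Algebra k Ω := ι.toAlgebra
  obtain ⟨τ⟩ := nonempty_algHom_of_finite k (B ⧸ M) Ω
  refine ⟨(τ : (B ⧸ M) →+* Ω).comp (Ideal.Quotient.mk M), fun x => ?_⟩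
  change τ (algebraMap k (B ⧸ M) x) = _
  rw [τ.commutes]; rfl

/-- The case of an eigenvalue lying in a field `k` that embeds into an algebraically closed normed
field in such a way that the eigenvalue does not have norm `1`. -/
theorem virtuallyIndicable_of_embedding {Γ L k Ω n : Type*} [Group Γ] [Field L] [Field k]
    [Algebra k L] [NormedField Ω] [IsAlgClosed Ω] [Fintype n] [DecidableEq n] (ι : k →+* Ω)
    (hfg : Group.FG Γ) (ρ : Γ →* Matrix n n L) (m : ℕ) (hm : 0 < m)
    (C : Finset Γ) (hC : ∀ u : Γ, ∃ c ∈ C, ∃ k : ℕ, IsConj (u ^ m) (c ^ k))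
    (g : Γ) (x : k) (hx : (ρ g).charpoly.IsRoot (algebraMap k L x)) (hx1 : ‖ι x‖ ≠ 1) :
    VirtuallyIndicable Γ := by
  obtain ⟨T, hT⟩ := exists_finset_entries hfg ρ
  obtain ⟨σ, hσ⟩ := exists_specialization (k := k) ι T
  let B := Algebra.adjoin k (T : Set L)
  obtain ⟨ρ', hρ'⟩ := hT B.toSubring Algebra.subset_adjoin
  let σ' : B.toSubring →+* Ω := σ
  let x' : B.toSubring := algebraMap k B x
  have hmap : (B.toSubring.subtype).mapMatrix (ρ' g) = ρ g := by
    ext i j; exact hρ' g i j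
  have hroot : (ρ' g).charpoly.IsRoot x' := by
    have h1 : ((ρ' g).charpoly.map B.toSubring.subtype).IsRoot (B.toSubring.subtype x') := by
      rw [← Matrix.charpoly_map, ← RingHom.mapMatrix_apply, hmap]; exact hx
    rw [IsRoot, eval_map, eval₂_hom] at h1
    exact Subtype.val_injective h1
  let ρΩ : Γ →* Matrix n n Ω :=
    (RingHom.mapMatrix σ' : Matrix n n B.toSubring →+* Matrix n n Ω).toMonoidHom.comp ρ'
  have hrootΩ : (ρΩ g).charpoly.IsRoot (ι x) := by
    change ((ρ' g).map σ').charpoly.IsRoot (ι x)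
    rw [Matrix.charpoly_map, ← hσ x]
    exact hroot.map
  rcases lt_or_gt_of_ne hx1 with h | h
  · have hunit : ρΩ g * ρΩ g⁻¹ = 1 := by rw [← map_mul]; simp
    have hunit' : ρΩ g⁻¹ * ρΩ g = 1 := by rw [← map_mul]; simp
    let a : (Matrix n n Ω)ˣ := ⟨ρΩ g, ρΩ g⁻¹, hunit, hunit'⟩
    have h1 : ι x ∈ spectrum Ω (a : Matrix n n Ω) :=
      Matrix.mem_spectrum_iff_isRoot_charpoly.2 hrootΩ
    have h0 : ι x ≠ 0 := fun h0 => spectrum.zero_notMem Ω a.isUnit (h0 ▸ h1)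
    have h2 : (ι x)⁻¹ ∈ spectrum Ω (ρΩ g⁻¹) := spectrum.inv₀_mem_inv_iff.2 h1
    refine virtuallyIndicable_of_eigenvalue ρΩ m hm C hC g⁻¹ (ι x)⁻¹
      (Matrix.mem_spectrum_iff_isRoot_charpoly.1 h2) ?_
    rw [norm_inv]
    exact (one_lt_inv₀ (norm_pos_iff.2 h0)).2 h
  · exact virtuallyIndicable_of_eigenvalue ρΩ m hm C hC g (ι x) hrootΩ h

/-- A nonarchimedean absolute value, nontrivial at `x`, comes from an algebraically closed normed
field: the algebraic closure of the completion. -/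
theorem exists_embedding_of_abv.{u} {k : Type u} [Field k] (w : AbsoluteValue k ℝ)
    (hw : IsNonarchimedean w) (x : k) (hx0 : x ≠ 0) (hx : w x ≠ 1) :
    ∃ (Ω : Type u) (_ : NormedField Ω) (_ : IsAlgClosed Ω) (ι : k →+* Ω), ‖ι x‖ ≠ 1 := by
  let k' := WithAbs w
  let F := UniformSpace.Completion k'
  have hF : IsUltrametricDist F := by
    refine IsUltrametricDist.isUltrametricDist_of_isNonarchimedean_norm fun a b => ?_
    induction a, b using UniformSpace.Completion.induction_on₂ with
    | hp => exact isClosed_le (by fun_prop) (by fun_prop)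
    | ih a b =>
      rw [← UniformSpace.Completion.coe_add, UniformSpace.Completion.norm_coe,
        UniformSpace.Completion.norm_coe, UniformSpace.Completion.norm_coe]
      exact hw _ _
  let y : F := ((WithAbs.equiv w).symm x : k')
  have hy : ‖y‖ = w x := UniformSpace.Completion.norm_coe _
  let _ : NontriviallyNormedField F := NontriviallyNormedField.ofNormNeOne
    ⟨y, by rw [← norm_pos_iff, hy]; exact w.pos hx0, by rwa [hy]⟩
  let _ : NormedField (AlgebraicClosure F) := spectralNorm.normedField F (AlgebraicClosure F)
  refine ⟨AlgebraicClosure F, inferInstance, inferInstance,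
    (algebraMap F (AlgebraicClosure F)).comp
      ((UniformSpace.Completion.coeRingHom (α := k')).comp (WithAbs.equiv w).symm.toRingHom), ?_⟩
  have : ‖algebraMap F (AlgebraicClosure F) y‖ = ‖y‖ :=
    spectralNorm_extends (K := F) (L := AlgebraicClosure F) y
  change ‖algebraMap F (AlgebraicClosure F) y‖ ≠ 1
  rwa [this, hy]

end BVCLin

namespace BVCLin

open Polynomial Matrix IsDedekindDomain NumberField

/-- A transcendental eigenvalue: the `X`-adic absolute value of `k₀(X) ≅ k₀(a)` is nontrivial at
`a`. -/
theorem virtuallyIndicable_of_transcendental {Γ L k₀ n : Type*} [Group Γ] [Field L] [Field k₀]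
    [Algebra k₀ L] [Fintype n] [DecidableEq n]
    (hfg : Group.FG Γ) (ρ : Γ →* Matrix n n L) (m : ℕ) (hm : 0 < m)
    (C : Finset Γ) (hC : ∀ u : Γ, ∃ c ∈ C, ∃ k : ℕ, IsConj (u ^ m) (c ^ k))
    (g : Γ) (a : L) (ha : (ρ g).charpoly.IsRoot a) (htr : Transcendental k₀ a) :
    VirtuallyIndicable Γ := by
  have hinj : Function.Injective (aeval (R := k₀) a : k₀[X] →+* L) :=
    transcendental_iff_injective.1 htr
  let _ : Algebra (RatFunc k₀) L := (IsFractionRing.lift (K := RatFunc k₀) hinj).toAlgebra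
  let x : RatFunc k₀ := algebraMap k₀[X] (RatFunc k₀) X
  have hx : algebraMap (RatFunc k₀) L x = a := by
    change IsFractionRing.lift (K := RatFunc k₀) hinj (algebraMap k₀[X] (RatFunc k₀) X) = a
    rw [IsFractionRing.lift_algebraMap]
    exact aeval_X a
  have hb : (1 : NNReal) < 2 := one_lt_two
  have hlt : (idealX k₀).adicAbv hb x < 1 :=
    (HeightOneSpectrum.adicAbv_coe_lt_one_iff (idealX k₀) (K := RatFunc k₀) hb X).2
      (Ideal.mem_span_singleton_self X)
  have hx0 : x ≠ 0 := (map_ne_zero_iff _ (IsFractionRing.injective k₀[X] (RatFunc k₀))).2 X_ne_zero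
  obtain ⟨Ω, _, _, ι, hι⟩ := exists_embedding_of_abv ((idealX k₀).adicAbv hb)
    (HeightOneSpectrum.isNonarchimedean_adicAbv _ hb) x hx0 hlt.ne
  exact virtuallyIndicable_of_embedding ι hfg ρ m hm C hC g x (hx ▸ ha) hι

/-- An algebraic number that is neither zero nor a root of unity is detected by some absolute
value: a finite place if it is not integral, and an infinite one by Kronecker's theorem
otherwise. -/
theorem virtuallyIndicable_of_numberField {Γ L k n : Type*} [Group Γ] [Field L] [Field k]
    [NumberField k] [Algebra k L] [Fintype n] [DecidableEq n]
    (hfg : Group.FG Γ) (ρ : Γ →* Matrix n n L) (m : ℕ) (hm : 0 < m)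
    (C : Finset Γ) (hC : ∀ u : Γ, ∃ c ∈ C, ∃ k : ℕ, IsConj (u ^ m) (c ^ k))
    (g : Γ) (x : k) (hx : (ρ g).charpoly.IsRoot (algebraMap k L x)) (hx0 : x ≠ 0)
    (hne : ∀ N : ℕ, 0 < N → x ^ N ≠ 1) :
    VirtuallyIndicable Γ := by
  by_cases hxint : IsIntegral ℤ x
  · by_cases hall : ∀ φ : k →+* ℂ, ‖φ x‖ = 1
    · obtain ⟨N, hN, h⟩ := NumberField.Embeddings.pow_eq_one_of_norm_eq_one k ℂ hxint hall
      exact absurd h (hne N hN)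
    · push Not at hall
      obtain ⟨ι, hι⟩ := hall
      exact virtuallyIndicable_of_embedding ι hfg ρ m hm C hC g x hx hι
  · by_cases hall : ∀ v : HeightOneSpectrum (𝓞 k), v.valuation k x ≤ 1
    · obtain ⟨y, rfl⟩ := HeightOneSpectrum.mem_integers_of_valuation_le_one k x hall
      exact absurd y.2 hxint
    · push Not at hall
      obtain ⟨v, hv⟩ := hall
      have hb : (1 : NNReal) < 2 := one_lt_two
      have hgt : 1 < v.adicAbv hb x := by
        have := WithZeroMulInt.toNNReal_strictMono hb hv
        rw [map_one] at this
        exact_mod_cast this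
      obtain ⟨Ω, _, _, ι, hι⟩ := exists_embedding_of_abv (v.adicAbv hb)
        (HeightOneSpectrum.isNonarchimedean_adicAbv v hb) x hx0 hgt.ne'
      exact virtuallyIndicable_of_embedding ι hfg ρ m hm C hC g x hx hι

/-- A nonzero eigenvalue that is not a root of unity forces virtual indicability. -/
theorem virtuallyIndicable_of_not_root_of_unity {Γ L n : Type*} [Group Γ] [Field L]
    [Fintype n] [DecidableEq n]
    (hfg : Group.FG Γ) (ρ : Γ →* Matrix n n L) (m : ℕ) (hm : 0 < m)
    (C : Finset Γ) (hC : ∀ u : Γ, ∃ c ∈ C, ∃ k : ℕ, IsConj (u ^ m) (c ^ k))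
    (g : Γ) (a : L) (ha : (ρ g).charpoly.IsRoot a) (ha0 : a ≠ 0)
    (hne : ∀ N : ℕ, 0 < N → a ^ N ≠ 1) :
    VirtuallyIndicable Γ := by
  rcases CharP.exists' L with h0 | ⟨p, hp, hchar⟩
  · by_cases halg : IsAlgebraic ℚ a
    · have : FiniteDimensional ℚ (IntermediateField.adjoin ℚ {a}) :=
        IntermediateField.adjoin.finiteDimensional halg.isIntegral
      have : NumberField (IntermediateField.adjoin ℚ {a}) := ⟨⟩
      have hgen : algebraMap (IntermediateField.adjoin ℚ {a}) L
          (IntermediateField.AdjoinSimple.gen ℚ a) = a :=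
        IntermediateField.AdjoinSimple.algebraMap_gen ℚ a
      refine virtuallyIndicable_of_numberField hfg ρ m hm C hC g
        (IntermediateField.AdjoinSimple.gen ℚ a) (by rwa [hgen]) (fun h => ha0 ?_)
        (fun N hN h => hne N hN ?_)
      · rw [← hgen, h, map_zero]
      · rw [← hgen, ← map_pow, h, map_one]
    · exact virtuallyIndicable_of_transcendental (k₀ := ℚ) hfg ρ m hm C hC g a ha halg
  · let _ : Algebra (ZMod p) L := ZMod.algebra L p
    by_cases halg : IsAlgebraic (ZMod p) a
    · -- An algebraic element over a finite field lies in a finite field.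
      exfalso
      have : FiniteDimensional (ZMod p) (IntermediateField.adjoin (ZMod p) {a}) :=
        IntermediateField.adjoin.finiteDimensional halg.isIntegral
      have : Finite (IntermediateField.adjoin (ZMod p) {a}) := Module.finite_of_finite (ZMod p)
      have hgen : algebraMap (IntermediateField.adjoin (ZMod p) {a}) L
          (IntermediateField.AdjoinSimple.gen (ZMod p) a) = a :=
        IntermediateField.AdjoinSimple.algebraMap_gen (ZMod p) a
      have hu : IntermediateField.AdjoinSimple.gen (ZMod p) a ≠ 0 := fun h => ha0 (by
        rw [← hgen, h, map_zero])
      obtain ⟨N, hN, h⟩ := (isOfFinOrder_of_finite (Units.mk0 _ hu)).exists_pow_eq_one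
      refine hne N hN ?_
      have h' := congrArg Units.val h
      rw [Units.val_pow_eq_pow_val, Units.val_mk0, Units.val_one] at h'
      rw [← hgen, ← map_pow, h', map_one]
    · exact virtuallyIndicable_of_transcendental (k₀ := ZMod p) hfg ρ m hm C hC g a ha halg

end BVCLin

/-! ### Linear groups covered by conjugates of finitely many virtually cyclic subgroups -/

namespace BVCLin

open Polynomial Matrix

/-- If every element of the finite set `C` has only roots of unity as eigenvalues, then so does
every element of `Γ`, with a uniform bound on the order; all `ρ g` are then killed by one
polynomial `(X ^ N - 1) ^ d`. -/
theorem exists_exponent {Γ L : Type*} [Group Γ] [Field L] [IsAlgClosed L]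
    {n : Type*} [Fintype n] [DecidableEq n] (ρ : Γ →* Matrix n n L) (m : ℕ) (hm : 0 < m)
    (C : Finset Γ) (hC : ∀ u : Γ, ∃ c ∈ C, ∃ k : ℕ, IsConj (u ^ m) (c ^ k))
    (hroot : ∀ c ∈ C, ∀ a, (ρ c).charpoly.IsRoot a → ∃ N : ℕ, 0 < N ∧ a ^ N = 1) :
    ∃ N : ℕ, 0 < N ∧ ∀ g, aeval (ρ g) ((X ^ N - 1 : L[X]) ^ Fintype.card n) = 0 := by
  classical
  let S : Finset L := C.biUnion fun c => (ρ c).charpoly.roots.toFinset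
  have hS : ∀ c ∈ C, ∀ a, (ρ c).charpoly.IsRoot a → a ∈ S := fun c hc a ha =>
    Finset.mem_biUnion.2 ⟨c, hc, by
      rw [Multiset.mem_toFinset]; exact (mem_roots (charpoly_monic _).ne_zero).2 ha⟩
  have hS' : ∀ a ∈ S, 0 < orderOf a := by
    intro a ha
    obtain ⟨c, hc, hac⟩ := Finset.mem_biUnion.1 ha
    rw [Multiset.mem_toFinset] at hac
    obtain ⟨N, hN, h⟩ := hroot c hc a ((mem_roots (charpoly_monic _).ne_zero).1 hac)
    exact orderOf_pos_iff.2 (isOfFinOrder_iff_pow_eq_one.2 ⟨N, hN, h⟩)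
  let P := ∏ a ∈ S, orderOf a
  have hP : 0 < P := Finset.prod_pos hS'
  refine ⟨m * P, Nat.mul_pos hm hP, fun g => ?_⟩
  have hdvd : (ρ g).charpoly ∣ (X ^ (m * P) - 1 : L[X]) ^ Fintype.card n := by
    have hsplit := IsAlgClosed.splits (ρ g).charpoly
    rw [hsplit.eq_prod_roots_of_monic (charpoly_monic _)]
    have hcard : ((ρ g).charpoly.roots.map fun _ => (X ^ (m * P) - 1 : L[X])).prod =
        (X ^ (m * P) - 1 : L[X]) ^ Fintype.card n := by
      rw [Multiset.map_const', Multiset.prod_replicate, ← hsplit.natDegree_eq_card_roots,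
        charpoly_natDegree_eq_dim]
    rw [← hcard]
    refine Multiset.prod_dvd_prod_of_dvd _ _ fun θ hθ => ?_
    obtain ⟨c, hc, M, hM, k, hk⟩ := eigenvalue_pow_eq ρ m C hC g θ
      ((mem_roots (charpoly_monic _).ne_zero).1 hθ)
    have hMP : M ^ P = 1 :=
      orderOf_dvd_iff_pow_eq_one.1 (Finset.dvd_prod_of_mem _ (hS c hc M hM))
    rw [dvd_iff_isRoot, IsRoot, eval_sub, eval_pow, eval_X, eval_one, pow_mul, hk, pow_right_comm,
      hMP, one_pow, sub_self]
  obtain ⟨q, hq⟩ := hdvd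
  rw [hq, map_mul, aeval_self_charpoly, zero_mul]

/-- A finitely generated linear group whose elements have, up to conjugacy and powers, only
finitely many types is finite or virtually surjects onto `ℤ`. -/
theorem finite_or_virtuallyIndicable {Γ L : Type*} [Group Γ] [Field L] [IsAlgClosed L]
    {n : Type*} [Fintype n] [DecidableEq n] (hfg : Group.FG Γ) (ρ : Γ →* Matrix n n L)
    (hρ : Function.Injective ρ) (m : ℕ) (hm : 0 < m)
    (C : Finset Γ) (hC : ∀ u : Γ, ∃ c ∈ C, ∃ k : ℕ, IsConj (u ^ m) (c ^ k)) :
    Finite Γ ∨ VirtuallyIndicable Γ := by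
  by_cases hΓ : VirtuallyIndicable Γ
  · exact Or.inr hΓ
  left
  have hroot : ∀ c ∈ C, ∀ a, (ρ c).charpoly.IsRoot a → ∃ N : ℕ, 0 < N ∧ a ^ N = 1 := by
    intro c _ a ha
    by_contra! hne
    refine hΓ (virtuallyIndicable_of_not_root_of_unity hfg ρ m hm C hC c a ha ?_ hne)
    rintro rfl
    rw [← Matrix.mem_spectrum_iff_isRoot_charpoly] at ha
    exact spectrum.zero_notMem L ((Group.isUnit c).map ρ) ha
  obtain ⟨N, hN, hkill⟩ := exists_exponent ρ m hm C hC hroot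
  let ψ : Γ →* Module.End L (n → L) :=
    (Matrix.toLinAlgEquiv' : Matrix n n L ≃ₐ[L] Module.End L (n → L)).toMonoidHom.comp ρ
  have hker := finiteIndex_ker_of_roots_of_unity hfg hΓ N (Fintype.card n) hN _ (n → L) ψ rfl
    fun g => by
      change aeval (Matrix.toLinAlgEquiv' (ρ g)) _ = 0
      rw [aeval_algHom_apply, hkill, map_zero]
  have hbot : ψ.ker = ⊥ := (MonoidHom.ker_eq_bot_iff ψ).2
    (Matrix.toLinAlgEquiv'.injective.comp hρ)
  rw [hbot] at hker
  exact Nat.finite_of_card_ne_zero (Subgroup.index_bot (G := Γ) ▸ hker.index_ne_zero)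

theorem virtuallyCyclic_of_linear {Γ L : Type*} [Group Γ] [Field L] [IsAlgClosed L]
    {n : Type*} [Fintype n] [DecidableEq n] (hfg : Group.FG Γ) (hb : bVCyc Γ)
    (ρ : Γ →* Matrix n n L) (hρ : Function.Injective ρ) : VirtuallyCyclic Γ := by
  obtain ⟨m, hm, C, hC⟩ := bVCyc.exists_pow hb
  rcases finite_or_virtuallyIndicable hfg ρ hρ m hm C hC with hfin | ⟨H, hH, χ, hχ⟩
  · exact ⟨⊥, inferInstance, inferInstance⟩
  · have hHfg : Group.FG H := inferInstance
    exact VirtuallyCyclic.of_finiteIndex H (virtuallyCyclic_of_hom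
      (residuallyFinite_of_linear hHfg (ρ.comp H.subtype)
        (hρ.comp Subtype.val_injective)) (bVCyc.finiteIndex hb H) χ hχ)

end BVCLin

/-- If a finitely generated group with BVC surjects onto a linear group, then
the image is virtually cyclic. -/
theorem stmt_1 {G : Type*} [Group G] (hfg : Group.FG G) (hbvc : BVC G)
    {K : Type*} [Field K] (d : ℕ) (φ : G →* GL (Fin d) K) :
    VirtuallyCyclic φ.range := by
  let ρ : φ.range →* Matrix (Fin d) (Fin d) (AlgebraicClosure K) :=
    (((algebraMap K (AlgebraicClosure K)).mapMatrix (m := Fin d)).toMonoidHom.comp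
      (Units.coeHom _)).comp φ.range.subtype
  have hρ : Function.Injective ρ :=
    (Matrix.map_injective (algebraMap K (AlgebraicClosure K)).injective).comp
      (Units.val_injective.comp Subtype.val_injective)
  have hfg' : Group.FG φ.range := inferInstance
  exact BVCLin.virtuallyCyclic_of_linear hfg' (BVCLin.bVCyc_range hbvc φ) ρ hρ
end

section
/- Let G be a finitely generated virtually solvable group (i.e. G has a solvable subgroup of finite index). If G has bVCyc, then G is virtually cyclic. -/
/-! ### Actions of `ℤ` on abelian groups -/

/-- An action of `ℤ` on the abelian group `B` by automorphisms; `act n` plays the role of the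
`n`-th power of a fixed automorphism. -/
structure ZAction (B : Type*) [AddCommGroup B] where
  /-- The endomorphism by which `n : ℤ` acts. -/
  act : ℤ → B →+ B
  act_zero : ∀ b, act 0 b = b
  act_act : ∀ m n b, act m (act n b) = act (m + n) b

namespace ZAction

variable {B : Type*} [AddCommGroup B] (φ : ZAction B)

/-- Every element of `B` is carried by the action into one of finitely many sets `f + ℤ c`, where a
positive multiple of `f` lies in `ℤ c`. This is what remains, for an abelian normal subgroup, of
being covered by the conjugates of finitely many virtually cyclic subgroups; in this form it
passes to quotients. -/
def Covered : Prop :=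
  ∃ S : Finset (B × B), (∀ s ∈ S, ∃ N : ℕ, 0 < N ∧ ∃ k : ℤ, N • s.1 = k • s.2) ∧
    ∀ b, ∃ s ∈ S, ∃ n m : ℤ, φ.act n b = s.1 + m • s.2

/-- The coinvariants of `φ k` have at most `k * M` elements, for every `k > 0`; they are
described through the subgroups containing the image of `φ k - 1`. -/
def SmallCoinvariants (M : ℕ) : Prop :=
  ∀ k : ℕ, 0 < k → ∀ S : AddSubgroup B, (∀ b, φ.act k b - b ∈ S) →
    S.index ≠ 0 ∧ S.index ≤ k * M

lemma act_injective (n : ℤ) : Function.Injective (φ.act n) := by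
  intro a b h
  have := congrArg (φ.act (-n)) h
  simpa [φ.act_act, φ.act_zero] using this

/-- The action induced on the quotient by an invariant subgroup. -/
def quot (K : AddSubgroup B) (hK : ∀ n, K ≤ K.comap (φ.act n)) : ZAction (B ⧸ K) where
  act n := QuotientAddGroup.map K K (φ.act n) (hK n)
  act_zero b := by
    induction b using QuotientAddGroup.induction_on with
    | H b => simp [φ.act_zero]
  act_act m n b := by
    induction b using QuotientAddGroup.induction_on with
    | H b => simp [φ.act_act]

@[simp] lemma quot_act_mk (K : AddSubgroup B) (hK : ∀ n, K ≤ K.comap (φ.act n)) (n : ℤ) (b : B) :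
    (φ.quot K hK).act n (b : B ⧸ K) = ((φ.act n b : B) : B ⧸ K) := rfl

variable {φ}

lemma Covered.quot (h : φ.Covered) (K : AddSubgroup B) (hK : ∀ n, K ≤ K.comap (φ.act n)) :
    (φ.quot K hK).Covered := by
  classical
  obtain ⟨S, hS, hc⟩ := h
  refine ⟨S.image (fun s => ((s.1 : B ⧸ K), (s.2 : B ⧸ K))), ?_, ?_⟩
  · intro s hs
    obtain ⟨s', hs', rfl⟩ := Finset.mem_image.1 hs
    obtain ⟨N, hN, k, hk⟩ := hS s' hs'
    refine ⟨N, hN, k, ?_⟩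
    have := congrArg (QuotientAddGroup.mk' K) hk
    simpa using this
  · intro b
    induction b using QuotientAddGroup.induction_on with
    | H b =>
      obtain ⟨s, hs, n, m, h⟩ := hc b
      refine ⟨_, Finset.mem_image_of_mem _ hs, n, m, ?_⟩
      have := congrArg (QuotientAddGroup.mk' K) h
      simpa using this

lemma SmallCoinvariants.quot {M : ℕ} (h : φ.SmallCoinvariants M) (K : AddSubgroup B)
    (hK : ∀ n, K ≤ K.comap (φ.act n)) : (φ.quot K hK).SmallCoinvariants M := by
  intro k hk S hS
  have := h k hk (S.comap (QuotientAddGroup.mk' K)) (fun b => by simpa using hS (b : B ⧸ K))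
  rwa [AddSubgroup.index_comap_of_surjective _ (QuotientAddGroup.mk'_surjective K)] at this

/-- A recurrence expressing `φ E a` through finitely many earlier translates of `a` confines the
orbit of `a` to a finitely generated subgroup, which is finite as `a` has finite order. -/
lemma orbit_finite_of_recurrence {e : ℕ} (he : 0 < e) (a : B) (ha : e • a = 0) (E L : ℤ)
    (h : φ.act E a ∈ AddSubgroup.closure ((fun i => φ.act i a) '' Set.Ico (E - L) E)) :
    (Set.range fun n => φ.act n a).Finite := by
  set S := AddSubgroup.closure ((fun i => φ.act i a) '' Set.Ico (E - L) E) with hSdef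
  have hfin : Finite S := by
    have hfg : AddGroup.FG S := AddGroup.closure_finite_fg _
    refine AddCommGroup.finite_of_fg_isAddTorsion _ fun x => ?_
    refine isOfFinAddOrder_iff_nsmul_eq_zero.2 ⟨e, he, Subtype.ext ?_⟩
    obtain ⟨x, hx⟩ := x
    change e • x = 0
    induction hx using AddSubgroup.closure_induction with
    | mem x hx =>
      obtain ⟨i, _, rfl⟩ := hx
      rw [← map_nsmul, ha, map_zero]
    | zero => simp
    | add x y _ _ hx hy => rw [nsmul_add, hx, hy, add_zero]
    | neg x _ hx => rw [neg_nsmul, hx, neg_zero]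
  have hstep : ∀ x ∈ S, φ.act 1 x ∈ S := by
    intro x hx
    induction hx using AddSubgroup.closure_induction with
    | mem x hx =>
      obtain ⟨i, hi, rfl⟩ := hx
      simp only [φ.act_act]
      rcases eq_or_lt_of_le (show 1 + i ≤ E by have := hi.2; omega) with h1 | h1
      · rw [h1]; exact h
      · exact AddSubgroup.subset_closure ⟨1 + i, ⟨by have := hi.1; omega, h1⟩, rfl⟩
    | zero => simp
    | add x y _ _ hx hy => rw [map_add]; exact S.add_mem hx hy
    | neg x _ hx => rw [map_neg]; exact S.neg_mem hx
  let f : S → S := fun x => ⟨φ.act 1 x, hstep x x.2⟩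
  have hf : Function.Injective f := fun x y hxy =>
    Subtype.ext (φ.act_injective 1 (congrArg Subtype.val hxy))
  have hback : ∀ x ∈ S, φ.act (-1) x ∈ S := by
    intro x hx
    obtain ⟨y, hy⟩ := (Finite.injective_iff_surjective.1 hf) ⟨x, hx⟩
    have : φ.act 1 y = x := congrArg Subtype.val hy
    rw [← this, φ.act_act]
    simp [φ.act_zero]
  have hall : ∀ k : ℤ, φ.act (E + k) a ∈ S := by
    intro k
    induction k using Int.induction_on with
    | zero => simpa using h
    | succ i ih =>
      have := hstep _ ih
      rw [φ.act_act] at this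
      convert this using 2; ring_nf
    | pred i ih =>
      have := hback _ ih
      rw [φ.act_act] at this
      convert this using 2; ring_nf
  refine (Set.toFinite (S : Set B)).subset ?_
  rintro _ ⟨n, rfl⟩
  simpa using hall (n - E)

/-! ### Finite exponent and torsion -/

/-- An invariant subgroup of finite exponent that meets only finitely many orbits is finite.
For each `a`, two of the elements `a + φ j a`, `j ≥ 1`, lie in one orbit, and the resulting relation
is a recurrence for the translates of `a`. -/
lemma finite_of_finite_orbits (T : AddSubgroup B) (hT : ∀ n, T ≤ T.comap (φ.act n))
    {e : ℕ} (he : 0 < e) (heT : ∀ b ∈ T, e • b = 0) (F : Set B) (hF : F.Finite)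
    (hc : ∀ b ∈ T, ∃ n, φ.act n b ∈ F) : (T : Set B).Finite := by
  have horb : ∀ a ∈ T, (Set.range fun n => φ.act n a).Finite := by
    intro a ha
    have hmem : ∀ j : ℕ, a + φ.act ((j : ℤ) + 1) a ∈ T := fun j => T.add_mem ha (hT _ ha)
    choose n hn using fun j => hc _ (hmem j)
    have : Finite F := hF
    obtain ⟨i, j, hij, heq⟩ := Finite.exists_ne_map_eq_of_infinite
      (fun j : ℕ => (⟨φ.act (n j) (a + φ.act ((j : ℤ) + 1) a), hn j⟩ : F))
    replace heq := congrArg (φ.act (-n i)) (congrArg Subtype.val heq)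
    simp only [φ.act_act, map_add, neg_add_cancel, φ.act_zero] at heq
    rw [show -n i + (n i + ((i : ℤ) + 1)) = i + 1 by ring,
      show -n i + (n j + ((j : ℤ) + 1)) = (-n i + n j) + (j + 1) by ring] at heq
    generalize -n i + n j = d at heq
    -- `heq : a + φ (i + 1) a = φ d a + φ (d + j + 1) a`; the largest exponent occurs once.
    have hcl : ∀ (E L k : ℤ), E - L ≤ k → k < E →
        φ.act k a ∈ AddSubgroup.closure ((fun i => φ.act i a) '' Set.Ico (E - L) E) :=
      fun E L k h1 h2 => AddSubgroup.subset_closure ⟨k, ⟨h1, h2⟩, rfl⟩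
    have hcl0 : ∀ (E L : ℤ), E - L ≤ 0 → 0 < E →
        a ∈ AddSubgroup.closure ((fun i => φ.act i a) '' Set.Ico (E - L) E) := by
      intro E L h1 h2
      simpa [φ.act_zero] using hcl E L 0 h1 h2
    have hij' : (i : ℤ) ≠ j := by exact_mod_cast hij
    rcases lt_trichotomy (d + (j + 1)) ((i : ℤ) + 1) with h | h | h
    · refine orbit_finite_of_recurrence he a (heT a ha) (i + 1) (i + 1 + |d|) ?_
      have : φ.act (i + 1) a = φ.act d a + φ.act (d + (j + 1)) a - a := by
        rw [← heq]; abel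
      rw [this]
      have := neg_abs_le d
      exact sub_mem (add_mem (hcl _ _ _ (by omega) (by omega)) (hcl _ _ _ (by omega) (by omega)))
        (hcl0 _ _ (by have := abs_nonneg d; omega) (by omega))
    · rw [h] at heq
      have hda : φ.act d a = a := (add_right_cancel heq).symm
      rcases lt_or_gt_of_ne (show d ≠ 0 by omega) with h0 | h0
      · refine orbit_finite_of_recurrence he a (heT a ha) 0 (-d) ?_
        rw [φ.act_zero]
        have := hcl 0 (-d) d (by omega) h0
        rwa [hda] at this
      · refine orbit_finite_of_recurrence he a (heT a ha) d d ?_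
        rw [hda]
        exact hcl0 d d (by omega) h0
    · refine orbit_finite_of_recurrence he a (heT a ha) (d + (j + 1)) (d + (j + 1) + |d|) ?_
      have : φ.act (d + (j + 1)) a = a + φ.act (i + 1) a - φ.act d a := by
        rw [heq]; abel
      rw [this]
      have := neg_abs_le d
      have := abs_nonneg d
      exact sub_mem (add_mem (hcl0 _ _ (by omega) (by omega)) (hcl _ _ _ (by omega) (by omega)))
        (hcl _ _ _ (by omega) (by omega))
  refine ((hF.inter_of_left (T : Set B)).biUnion fun f hf => horb f hf.2).subset ?_
  intro b hb
  obtain ⟨n, hn⟩ := hc b hb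
  refine Set.mem_biUnion (⟨hn, hT n hb⟩ : _ ∈ F ∩ T) ⟨-n, ?_⟩
  simp [φ.act_act, φ.act_zero]

lemma torsion_le_comap (n : ℤ) :
    AddCommGroup.torsion B ≤ (AddCommGroup.torsion B).comap (φ.act n) :=
  fun _ hb => (φ.act n).isOfFinAddOrder hb

lemma Covered.finite_torsion (h : φ.Covered) : (AddCommGroup.torsion B : Set B).Finite := by
  obtain ⟨S, -, hc⟩ := h
  set T := AddCommGroup.torsion B
  -- Each set `f + ℤ c` contains only finitely many torsion elements.
  have hfin : ∀ s : B × B, ((Set.range fun m : ℤ => s.1 + m • s.2) ∩ T).Finite := by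
    rintro ⟨f, c⟩
    by_cases hcT : IsOfFinAddOrder c
    · have h1 : (AddSubgroup.zmultiples c : Set B).Finite := by
        simpa using hcT
      refine (h1.image (fun x => f + x)).subset ?_
      rintro _ ⟨⟨m, rfl⟩, -⟩
      exact ⟨m • c, ⟨m, rfl⟩, rfl⟩
    · refine Set.Subsingleton.finite ?_
      rintro _ ⟨⟨m, rfl⟩, hm⟩ _ ⟨⟨m', rfl⟩, hm'⟩
      by_contra hne
      have hmm : m - m' ≠ 0 := fun h0 => hne (by rw [sub_eq_zero.1 h0])
      have hd : (m - m') • c ∈ T := by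
        have := T.sub_mem hm hm'
        simpa [sub_smul] using this
      apply hcT
      obtain ⟨k, hk, hk0⟩ := isOfFinAddOrder_iff_nsmul_eq_zero.1 hd
      refine isOfFinAddOrder_iff_zsmul_eq_zero.2 ⟨k * (m - m'), by positivity, ?_⟩
      rw [mul_smul, natCast_zsmul, hk0]
  set F : Set B := ⋃ s ∈ S, ((Set.range fun m : ℤ => s.1 + m • s.2) ∩ T)
  have hF : F.Finite := S.finite_toSet.biUnion fun s _ => hfin s
  have hFT : ∀ f ∈ F, IsOfFinAddOrder f := by
    intro f hf
    obtain ⟨s, -, hs⟩ := Set.mem_iUnion₂.1 hf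
    exact hs.2
  have hcF : ∀ b ∈ T, ∃ n, φ.act n b ∈ F := by
    intro b hb
    obtain ⟨s, hs, n, m, hn⟩ := hc b
    exact ⟨n, Set.mem_biUnion hs ⟨⟨m, hn.symm⟩, torsion_le_comap n hb⟩⟩
  refine finite_of_finite_orbits T torsion_le_comap (e := ∏ f ∈ hF.toFinset, addOrderOf f)
    (Finset.prod_pos fun f hf => (hFT f (hF.mem_toFinset.1 hf)).addOrderOf_pos) ?_ F hF hcF
  intro b hb
  obtain ⟨n, hn⟩ := hcF b hb
  apply φ.act_injective n
  rw [map_nsmul, map_zero]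
  exact addOrderOf_dvd_iff_nsmul_eq_zero.1 (Finset.dvd_prod_of_mem _ (hF.mem_toFinset.2 hn))

/-- The subgroup `n B`. -/
def multiples (B : Type*) [AddCommGroup B] (n : ℕ) : AddSubgroup B := (nsmulAddMonoidHom n).range

lemma mem_multiples {n : ℕ} {b : B} : b ∈ multiples B n ↔ ∃ c, n • c = b := Iff.rfl

lemma multiples_le_comap (n : ℕ) (k : ℤ) :
    multiples B n ≤ (multiples B n).comap (φ.act k) := by
  rintro _ ⟨c, rfl⟩
  exact ⟨φ.act k c, by simp⟩

lemma Covered.finite_quotient_multiples (h : φ.Covered) {n : ℕ} (hn : 0 < n) :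
    Finite (B ⧸ multiples B n) := by
  obtain ⟨S, -, hc⟩ := h.quot (multiples B n) (multiples_le_comap n)
  have htors : ∀ b : B ⧸ multiples B n, n • b = 0 := by
    intro b
    induction b using QuotientAddGroup.induction_on with
    | H b =>
      rw [← QuotientAddGroup.mk_nsmul]
      exact (QuotientAddGroup.eq_zero_iff _).2 ⟨b, rfl⟩
  have := finite_of_finite_orbits (φ := φ.quot (multiples B n) (multiples_le_comap n)) ⊤
    (fun _ _ _ => trivial) hn (fun b _ => htors b)
    (⋃ s ∈ S, (fun m : ℤ => s.1 + m • s.2) '' Set.Ico 0 n)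
    (S.finite_toSet.biUnion fun s _ => (Set.finite_Ico _ _).image _) ?_
  · exact Set.finite_univ_iff.1 (by simpa using this)
  · intro b _
    obtain ⟨s, hs, k, m, hm⟩ := hc b
    have hn' : (0 : ℤ) < n := by exact_mod_cast hn
    refine ⟨k, Set.mem_biUnion hs ⟨m % n, ⟨Int.emod_nonneg _ hn'.ne', Int.emod_lt_of_pos _ hn'⟩, ?_⟩⟩
    rw [hm]
    conv_rhs => rw [← Int.emod_add_mul_ediv m n]
    rw [add_smul, mul_comm, mul_smul, natCast_zsmul, htors, smul_zero, add_zero]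

/-! ### Periods modulo integers -/

lemma act_mul_sub_mem {k : ℕ} {S : AddSubgroup B} (h : ∀ b, φ.act k b - b ∈ S) (j : ℕ) (b : B) :
    φ.act (k * j : ℕ) b - b ∈ S := by
  induction j with
  | zero => simp [φ.act_zero]
  | succ j ih =>
    have h1 := S.add_mem (h (φ.act (k * j : ℕ) b)) ih
    rw [φ.act_act] at h1
    convert h1 using 1
    rw [show ((k * (j + 1) : ℕ) : ℤ) = k + (k * j : ℕ) by push_cast; ring]
    abel

lemma Covered.exists_period (h : φ.Covered) {n : ℕ} (hn : 0 < n) :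
    ∃ k : ℕ, 0 < k ∧ ∀ b, φ.act k b - b ∈ multiples B n := by
  have := h.finite_quotient_multiples hn
  obtain ⟨i, j, hij, heq⟩ := Finite.exists_ne_map_eq_of_infinite
    (fun (j : ℕ) (x : B ⧸ multiples B n) =>
      (φ.quot (multiples B n) (multiples_le_comap n)).act j x)
  wlog hlt : i < j generalizing i j
  · exact this j i hij.symm heq.symm (by omega)
  refine ⟨j - i, by omega, fun b => ?_⟩
  have h1 := congrFun heq ((φ.act (-i) b : B) : B ⧸ multiples B n)
  simp only [quot_act_mk, φ.act_act] at h1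
  rw [add_neg_cancel, φ.act_zero, QuotientAddGroup.eq] at h1
  rw [Nat.cast_sub hlt.le, sub_eq_neg_add]
  exact h1

/-- If `φ k` is the identity modulo `q`, then `φ (k * i) = 1 + i (φ k - 1)` modulo `q ^ 2`. -/
lemma act_mul_expand {k q : ℕ} (h : ∀ b, φ.act k b - b ∈ multiples B q) (i : ℕ) (b : B) :
    φ.act (k * i : ℕ) b - b - i • (φ.act k b - b) ∈ multiples B (q * q) := by
  induction i with
  | zero => simp [φ.act_zero]
  | succ i ih =>
    obtain ⟨d, hd⟩ := mem_multiples.1 (h b)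
    obtain ⟨e, he⟩ := mem_multiples.1 (act_mul_sub_mem h i d)
    have h2 : q • φ.act (k * i : ℕ) d - q • d ∈ multiples B (q * q) :=
      ⟨e, by change (q * q) • e = _; rw [mul_nsmul', he, nsmul_sub]⟩
    convert add_mem ih h2 using 1
    rw [show ((k * (i + 1) : ℕ) : ℤ) = (k * i : ℕ) + k by push_cast; ring, ← φ.act_act,
      ← map_nsmul, hd, map_sub, succ_nsmul]
    abel

lemma act_lift {k q p : ℕ} (hpq : p ∣ q) (h : ∀ b, φ.act k b - b ∈ multiples B q) (b : B) :
    φ.act (k * p : ℕ) b - b ∈ multiples B (q * p) := by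
  obtain ⟨e, he⟩ := mem_multiples.1 (act_mul_expand h p b)
  obtain ⟨d, hd⟩ := mem_multiples.1 (h b)
  obtain ⟨r, rfl⟩ := hpq
  refine ⟨r • e + d, ?_⟩
  change (p * r * p) • (r • e + d) = _
  have : φ.act (k * p : ℕ) b - b = (p * r * (p * r)) • e + p • ((p * r) • d) := by
    rw [he, hd]; abel
  rw [this, smul_add, smul_smul, smul_smul]
  congr 2 <;> ring

lemma act_lift_pow {k p : ℕ} (h : ∀ b, φ.act k b - b ∈ multiples B p) (m : ℕ) (b : B) :
    φ.act (k * p ^ m : ℕ) b - b ∈ multiples B (p ^ (m + 1)) := by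
  induction m generalizing b with
  | zero => simpa using h b
  | succ m ih =>
    have := act_lift (dvd_pow_self p (Nat.succ_ne_zero m)) ih b
    rwa [mul_assoc, ← pow_succ, ← pow_succ] at this

lemma mem_multiples_mul {m n : ℕ} (hmn : m.Coprime n) {b : B} (hm : b ∈ multiples B m)
    (hn : b ∈ multiples B n) : b ∈ multiples B (m * n) := by
  obtain ⟨c, hc⟩ := mem_multiples.1 hm
  obtain ⟨d, hd⟩ := mem_multiples.1 hn
  have hb : (1 : ℤ) = m * m.gcdA n + n * m.gcdB n := by
    rw [← Nat.gcd_eq_gcd_ab, hmn.gcd_eq_one]; simp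
  refine ⟨m.gcdA n • d + m.gcdB n • c, ?_⟩
  change (m * n) • _ = b
  have h1 : b = (m * m.gcdA n + n * m.gcdB n) • b := by rw [← hb, one_smul]
  rw [h1, add_smul]
  nth_rw 1 [← hd]
  nth_rw 1 [← hc]
  simp only [← natCast_zsmul, smul_add, smul_smul]
  push_cast
  congr 2 <;> ring

/-- On a quotient `B / p B` of order `p` the action is by scalars, so Fermat's little theorem
applies. -/
lemma act_sub_one_mem {p : ℕ} (hp : p.Prime) (hidx : (multiples B p).index = p) (b : B) :
    φ.act (p - 1 : ℕ) b - b ∈ multiples B p := by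
  have := Fact.mk hp
  have hpm : ∀ x : B, p • x ∈ multiples B p := fun x => ⟨x, rfl⟩
  obtain ⟨x, hx⟩ : ∃ x, x ∉ multiples B p := by
    by_contra! hall
    rw [(AddSubgroup.eq_top_iff' _).2 hall, AddSubgroup.index_top] at hidx
    exact hp.one_lt.ne hidx
  have hgen : ∀ y : B, ∃ m : ℤ, y - m • x ∈ multiples B p := by
    intro y
    obtain ⟨m, hm⟩ := mem_zmultiples_of_prime_card (G := B ⧸ multiples B p) (p := p)
      (by rw [← AddSubgroup.index_eq_card, hidx]) (g := (x : B ⧸ multiples B p))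
      (g' := (y : B ⧸ multiples B p)) (fun h0 => hx ((QuotientAddGroup.eq_zero_iff _).1 h0))
    refine ⟨m, ?_⟩
    have hm' : ((m • x : B) : B ⧸ multiples B p) = y := hm
    rw [QuotientAddGroup.eq] at hm'
    rwa [sub_eq_neg_add]
  obtain ⟨a, ha⟩ := hgen (φ.act 1 x)
  have hscal : ∀ y : B, φ.act 1 y - a • y ∈ multiples B p := by
    intro y
    obtain ⟨m, hm⟩ := hgen y
    have h1 : φ.act 1 (y - m • x) ∈ multiples B p := multiples_le_comap (φ := φ) p 1 hm
    have h2 := add_mem (sub_mem h1 ((multiples B p).zsmul_mem hm a))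
      ((multiples B p).zsmul_mem ha m)
    convert h2 using 1
    rw [map_sub, map_zsmul, smul_sub, smul_sub, smul_smul, smul_smul, mul_comm a m]
    abel
  have hpow : ∀ (j : ℕ) (y : B), φ.act j y - a ^ j • y ∈ multiples B p := by
    intro j
    induction j with
    | zero => simp [φ.act_zero]
    | succ j ih =>
      intro y
      have h1 := add_mem (hscal (φ.act j y)) ((multiples B p).zsmul_mem (ih y) a)
      convert h1 using 1
      rw [φ.act_act, smul_sub, smul_smul, pow_succ', add_comm (1 : ℤ)]
      push_cast
      abel
  have hpa : ¬ (p : ℤ) ∣ a := by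
    rintro ⟨r, rfl⟩
    apply hx
    have h1 := hscal (φ.act (-1) x)
    rw [φ.act_act, add_neg_cancel, φ.act_zero, mul_smul, natCast_zsmul] at h1
    have := add_mem h1 (hpm (r • φ.act (-1) x))
    simpa using this
  have hfermat : (p : ℤ) ∣ a ^ (p - 1) - 1 := by
    have hcop : IsCoprime a (p : ℤ) :=
      ((Nat.prime_iff_prime_int.1 hp).coprime_iff_not_dvd.2 hpa).symm
    exact (Int.ModEq.pow_card_sub_one_eq_one hp hcop).symm.dvd
  obtain ⟨r, hr⟩ := hfermat
  have h1 := add_mem (hpow (p - 1) b) (hpm (r • b))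
  convert h1 using 1
  rw [← natCast_zsmul, smul_smul, ← hr, sub_smul, one_smul]
  abel

lemma act_pow_of_eq {c : B} {m n : ℤ} (h : c = m • φ.act n c) (j : ℕ) :
    c = m ^ j • φ.act (n * j) c := by
  induction j with
  | zero => simp [φ.act_zero]
  | succ j ih =>
    have h1 : φ.act (n * j) c = m • φ.act (n * (j + 1 : ℕ)) c := by
      conv_lhs => rw [h]
      rw [map_zsmul, φ.act_act]
      congr 3; push_cast; ring
    rw [pow_succ, mul_smul, ← h1]
    exact ih

/-! ### The torsion-free case -/

section TorsionFree

variable [IsAddTorsionFree B]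

lemma index_multiples_mul {m n : ℕ} (hm : m ≠ 0) :
    (multiples B (m * n)).index = (multiples B n).index * (multiples B m).index := by
  have hinj : Function.Injective (nsmulAddMonoidHom m : B →+ B) := nsmul_right_injective hm
  rw [multiples, multiples, multiples, ← AddSubgroup.index_map_of_injective _ hinj]
  congr 1
  ext x
  constructor
  · rintro ⟨c, rfl⟩
    exact ⟨n • c, ⟨c, rfl⟩, (mul_nsmul' c m n).symm⟩
  · rintro ⟨_, ⟨c, rfl⟩, rfl⟩
    exact ⟨c, mul_nsmul' c m n⟩

lemma index_multiples_pow {p : ℕ} (hp : p ≠ 0) (m : ℕ) :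
    (multiples B (p ^ m)).index = (multiples B p).index ^ m := by
  induction m with
  | zero =>
    have : multiples B 1 = ⊤ := by
      ext x; simp [mem_multiples]
    simp [this]
  | succ m ih => rw [pow_succ, index_multiples_mul (pow_ne_zero m hp), ih, pow_succ, mul_comm]

/-- The period of `φ` modulo `p ^ m` grows only like `p ^ m`, whereas `B / p ^ m B` has
`|B / p B| ^ m` elements; so small coinvariants force `|B / p B| ≤ p`. -/
lemma index_multiples_le {M : ℕ} (h : φ.Covered) (hM : φ.SmallCoinvariants M) {p : ℕ}
    (hp : 0 < p) : (multiples B p).index ≤ p := by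
  by_contra! hlt
  obtain ⟨k, hk, hper⟩ := h.exists_period hp
  have key : ∀ m : ℕ, (p + 1) ^ (m + 1) ≤ k * p ^ m * M := by
    intro m
    have := (hM (k * p ^ m) (by positivity) _ (act_lift_pow hper m)).2
    rw [index_multiples_pow hp.ne'] at this
    exact (Nat.pow_le_pow_left hlt _).trans this
  have hp' : (0 : ℝ) < p := by exact_mod_cast hp
  obtain ⟨m, hm⟩ := pow_unbounded_of_one_lt ((k * M : ℕ) : ℝ)
    (show (1 : ℝ) < (p + 1) / p by rw [lt_div_iff₀ hp']; linarith)
  rw [div_pow, lt_div_iff₀ (by positivity)] at hm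
  have h1 : k * M * p ^ m < (p + 1) ^ m := by exact_mod_cast hm
  have h2 : (p + 1) ^ m ≤ (p + 1) ^ (m + 1) := Nat.pow_le_pow_right (by omega) (by omega)
  have h3 := key m
  rw [mul_right_comm] at h3
  omega

lemma index_multiples_eq {M : ℕ} (h : φ.Covered) (hM : φ.SmallCoinvariants M) {p : ℕ}
    (hp : p.Prime) (hne : multiples B p ≠ ⊤) : (multiples B p).index = p := by
  refine le_antisymm (index_multiples_le h hM hp.pos) ?_
  have := h.finite_quotient_multiples hp.pos
  obtain ⟨x, hx⟩ : ∃ x, x ∉ multiples B p := by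
    by_contra! hall
    exact hne ((AddSubgroup.eq_top_iff' _).2 hall)
  have hord : addOrderOf (x : B ⧸ multiples B p) = p := by
    have := Fact.mk hp
    refine addOrderOf_eq_prime ?_ ?_
    · rw [← QuotientAddGroup.mk_nsmul]
      exact (QuotientAddGroup.eq_zero_iff _).2 ⟨x, rfl⟩
    · exact fun h0 => hx ((QuotientAddGroup.eq_zero_iff _).1 h0)
  have hdvd := addOrderOf_dvd_natCard (x : B ⧸ multiples B p)
  rw [hord] at hdvd
  exact Nat.le_of_dvd Nat.card_pos hdvd

/-- Distinct odd primes `p` with `p B ≠ B` have periods `p - 1` sharing the factor `2`. With `s`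
of them the period modulo their product is smaller than the product by a factor `2 ^ (s - 1)`,
which bounds `s`. -/
lemma finite_nondivisible {M : ℕ} (h : φ.Covered) (hM : φ.SmallCoinvariants M) :
    {p : ℕ | p.Prime ∧ multiples B p ≠ ⊤}.Finite := by
  by_contra hinf
  have hinf' : ({p : ℕ | p.Prime ∧ multiples B p ≠ ⊤} \ {2}).Infinite :=
    Set.Infinite.sdiff hinf (Set.finite_singleton 2)
  obtain ⟨s, hs, hcard⟩ := hinf'.exists_subset_card_eq (2 * M + 1)
  have hs' : ∀ p ∈ s, p.Prime ∧ multiples B p ≠ ⊤ ∧ p ≠ 2 := fun p hp =>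
    ⟨(hs hp).1.1, (hs hp).1.2, (hs hp).2⟩
  have hprod : ∀ u ⊆ s, (multiples B (∏ p ∈ u, p)).index = ∏ p ∈ u, p := by
    intro u
    induction u using Finset.induction_on with
    | empty =>
      intro _
      simpa using index_multiples_pow (B := B) one_ne_zero 0
    | insert p u hpu ih =>
      intro hsub
      have hp := hs' p (hsub (Finset.mem_insert_self p u))
      rw [Finset.prod_insert hpu, index_multiples_mul hp.1.ne_zero,
        ih ((Finset.subset_insert p u).trans hsub), index_multiples_eq h hM hp.1 hp.2.1, mul_comm]
  have hper : ∀ k : ℕ, (∀ p ∈ s, p - 1 ∣ k) → ∀ b : B, ∀ u ⊆ s,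
      φ.act k b - b ∈ multiples B (∏ p ∈ u, p) := by
    intro k hk b u
    induction u using Finset.induction_on with
    | empty =>
      intro _
      exact ⟨_, by simp; rfl⟩
    | insert p u hpu ih =>
      intro hsub
      have hp := hs' p (hsub (Finset.mem_insert_self p u))
      rw [Finset.prod_insert hpu]
      refine mem_multiples_mul ?_ ?_ (ih ((Finset.subset_insert p u).trans hsub))
      · refine Nat.Coprime.prod_right fun q hq => ?_
        exact (Nat.coprime_primes hp.1 (hs' q (hsub (Finset.mem_insert_of_mem hq))).1).2
          (fun hpq => hpu (hpq ▸ hq))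
      · obtain ⟨j, rfl⟩ := hk p (hsub (Finset.mem_insert_self p u))
        exact act_mul_sub_mem (act_sub_one_mem hp.1 (index_multiples_eq h hM hp.1 hp.2.1)) j b
  have hhalf : ∀ p ∈ s, 2 * ((p - 1) / 2) = p - 1 := by
    intro p hp
    have := (hs' p hp).1.odd_of_ne_two (hs' p hp).2.2
    obtain ⟨r, rfl⟩ := this
    omega
  set k := 2 * ∏ p ∈ s, (p - 1) / 2 with hkdef
  have hkpos : 0 < k := by
    refine Nat.mul_pos two_pos (Finset.prod_pos fun p hp => ?_)
    have := hhalf p hp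
    have := (hs' p hp).1.two_le
    omega
  have hle := (hM k hkpos _ fun b => hper k (fun p hp => by
    rw [← hhalf p hp]
    exact Nat.mul_dvd_mul_left 2 (Finset.dvd_prod_of_mem _ hp)) b s subset_rfl).2
  rw [hprod s subset_rfl] at hle
  have hk2 : k * 2 ^ s.card ≤ 2 * ∏ p ∈ s, p := by
    rw [hkdef, mul_assoc, ← Finset.prod_const, ← Finset.prod_mul_distrib]
    refine Nat.mul_le_mul_left 2 (Finset.prod_le_prod' fun p hp => ?_)
    have := hhalf p hp
    omega
  have hpos : 0 < ∏ p ∈ s, p := Finset.prod_pos fun p hp => (hs' p hp).1.pos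
  have h2 : 2 ^ s.card ≤ 2 * M := by
    have : (∏ p ∈ s, p) * 2 ^ s.card ≤ (∏ p ∈ s, p) * (2 * M) := by
      calc (∏ p ∈ s, p) * 2 ^ s.card ≤ k * M * 2 ^ s.card := Nat.mul_le_mul_right _ hle
        _ = k * 2 ^ s.card * M := by ring
        _ ≤ 2 * (∏ p ∈ s, p) * M := Nat.mul_le_mul_right _ hk2
        _ = _ := by ring
    exact Nat.le_of_mul_le_mul_left this hpos
  rw [hcard] at h2
  have := Nat.lt_two_pow_self (n := 2 * M + 1)
  omega

lemma Covered.exists_cyclic_cover (h : φ.Covered) :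
    ∃ C : Finset B, ∀ b, ∃ c ∈ C, ∃ n m : ℤ, φ.act n b = m • c := by
  classical
  obtain ⟨S, hS, hc⟩ := h
  -- In a torsion-free group, `{x | N x ∈ ℤ c}` embeds into `ℤ c` and is therefore cyclic.
  have hgen : ∀ s : B × B, ∃ g : B, s ∈ S → ∀ m : ℤ, ∃ r : ℤ, s.1 + m • s.2 = r • g := by
    rintro ⟨f, c⟩
    by_cases hs : (f, c) ∈ S
    swap
    · exact ⟨0, fun h => absurd h hs⟩
    obtain ⟨N, hN, k, hk⟩ := hS _ hs
    set D : AddSubgroup B := (AddSubgroup.zmultiples c).comap (nsmulAddMonoidHom N)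
    let ι : D →+ AddSubgroup.zmultiples c :=
      ((nsmulAddMonoidHom N).comp D.subtype).codRestrict _ fun x => x.2
    have hι : Function.Injective ι := fun x y hxy =>
      Subtype.ext (nsmul_right_injective hN.ne' (congrArg Subtype.val hxy))
    obtain ⟨⟨g, hgD⟩, hg⟩ := (isAddCyclic_of_injective ι hι).exists_generator
    refine ⟨g, fun _ m => ?_⟩
    have hmem : f + m • c ∈ D := by
      refine ⟨k + N * m, ?_⟩
      change (k + N * m) • c = N • (f + m • c)
      simp only at hk
      rw [smul_add, hk, add_smul, mul_smul, natCast_zsmul]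
    obtain ⟨r, hr⟩ := hg ⟨_, hmem⟩
    exact ⟨r, (congrArg Subtype.val hr).symm⟩
  choose g hg using hgen
  refine ⟨S.image g, fun b => ?_⟩
  obtain ⟨s, hs, n, m, hb⟩ := hc b
  obtain ⟨r, hr⟩ := hg s hs m
  exact ⟨g s, Finset.mem_image_of_mem g hs, n, r, hb.trans hr⟩

/-- If `φ (-n)` and `φ (-n')` scale the same vector by `m` and `m'`, then `m` and `m'` are
multiplicatively dependent, hence have the same prime factors. -/
lemma dvd_of_dvd {c : B} (hc : c ≠ 0) {p q : ℕ} (hp : p.Prime) (hq : q.Prime) {m n m' n' : ℤ}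
    (hpm : (p : ℤ) ∣ m) (hqm : (q : ℤ) ∣ m') (h : c = m • φ.act n c) (h' : c = m' • φ.act n' c) :
    (q : ℤ) ∣ m := by
  have hpZ := Nat.prime_iff_prime_int.1 hp
  have hqZ := Nat.prime_iff_prime_int.1 hq
  have hone : ∀ x : ℤ, c = x • c → x = 1 := by
    intro x hx
    have h1 : (x - 1) • c = 0 := by rw [sub_smul, one_smul, ← hx, sub_self]
    rcases smul_eq_zero.1 h1 with h2 | h2
    · omega
    · exact absurd h2 hc
  have hn : n ≠ 0 := by
    rintro rfl
    rw [φ.act_zero] at h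
    rw [hone m h] at hpm
    exact hpZ.not_dvd_one hpm
  have hn' : n' ≠ 0 := by
    rintro rfl
    rw [φ.act_zero] at h'
    rw [hone m' h'] at hqm
    exact hqZ.not_dvd_one hqm
  have e1 := act_pow_of_eq h n'.natAbs
  have e2 := act_pow_of_eq h' n.natAbs
  have hsign : n * n'.natAbs = n' * n.natAbs ∨ n' * n.natAbs = -(n * n'.natAbs) := by
    rcases Int.natAbs_eq n with h1 | h1 <;> rcases Int.natAbs_eq n' with h2 | h2 <;>
      generalize n.natAbs = x at * <;> generalize n'.natAbs = y at * <;> subst h1 h2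
    · left; ring
    · right; ring
    · right; ring
    · left; ring
  rcases hsign with hs | hs
  · rw [← hs] at e2
    have hne : φ.act (n * n'.natAbs) c ≠ 0 := by
      intro h0
      rw [h0, smul_zero] at e1
      exact hc e1
    have h1 : (m ^ n'.natAbs - m' ^ n.natAbs) • φ.act (n * n'.natAbs) c = 0 := by
      rw [sub_smul, ← e1, ← e2, sub_self]
    rcases smul_eq_zero.1 h1 with h2 | h2
    · refine hqZ.dvd_of_dvd_pow (n := n'.natAbs) ?_
      rw [sub_eq_zero.1 h2]
      exact dvd_pow hqm (by simpa using hn)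
    · exact absurd h2 hne
  · rw [hs] at e2
    have h1 : c = (m ^ n'.natAbs * m' ^ n.natAbs) • c := by
      conv_lhs => rw [e1, e2]
      rw [map_zsmul, φ.act_act, add_neg_cancel, φ.act_zero, mul_smul]
    have h2 := hone _ h1
    exact absurd (h2 ▸ (dvd_pow hpm (by simpa using hn')).mul_right _) hpZ.not_dvd_one

/-- If `p B = B`, following `p`-th parts through the finitely many generators of a cyclic cover
eventually returns to a generator `c`, giving `c = m φ n c` with `p ∣ m`. For infinitely many `p`
the same `c` would occur, although all these `p` divide one fixed nonzero integer. -/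
lemma subsingleton_of_torsionFree {M : ℕ} (h : φ.Covered) (hM : φ.SmallCoinvariants M) :
    Subsingleton B := by
  by_contra hsub
  rw [not_subsingleton_iff_nontrivial] at hsub
  obtain ⟨C, hC⟩ := h.exists_cyclic_cover
  let I := {c : B // c ∈ C ∧ c ≠ 0}
  have hIfin : Finite I := (C.finite_toSet.subset fun c (hc : c ∈ C ∧ c ≠ 0) => hc.1)
  have hnext : ∀ b : B, b ≠ 0 → ∃ c : I, ∃ n m : ℤ, b = m • φ.act n (c : B) := by
    intro b hb
    obtain ⟨c, hc, n, m, hnm⟩ := hC b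
    have hb' : b = m • φ.act (-n) c := by
      rw [← map_zsmul, ← hnm, φ.act_act, neg_add_cancel, φ.act_zero]
    refine ⟨⟨c, hc, ?_⟩, -n, m, hb'⟩
    rintro rfl
    simp [hb] at hb'
  have hIne : Nonempty I := by
    obtain ⟨b, hb⟩ := exists_ne (0 : B)
    exact ⟨(hnext b hb).choose⟩
  let Q : I → Set ℕ := fun c =>
    {p | p.Prime ∧ ∃ m n : ℤ, (p : ℤ) ∣ m ∧ (c : B) = m • φ.act n (c : B)}
  have hQ : ∀ p : ℕ, p.Prime → multiples B p = ⊤ → ∃ c, p ∈ Q c := by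
    intro p hp htop
    let r : I → I → Prop := fun c' c =>
      ∃ m n : ℤ, (p : ℤ) ∣ m ∧ (c : B) = m • φ.act n (c' : B)
    have hr : ∀ c, ∃ c', r c' c := by
      intro c
      obtain ⟨b, hb⟩ := mem_multiples.1 (htop ▸ AddSubgroup.mem_top (c : B) : (c : B) ∈ multiples B p)
      have hb0 : b ≠ 0 := by
        rintro rfl
        exact c.2.2 (by rw [← hb, smul_zero])
      obtain ⟨c', n, m, hc'⟩ := hnext b hb0
      exact ⟨c', p * m, n, dvd_mul_right _ _, by rw [mul_smul, ← hc', natCast_zsmul, hb]⟩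
    by_contra! hno
    have htrans : IsTrans I r := ⟨by
      rintro a b c ⟨m, n, hm, hab⟩ ⟨m', n', _, hbc⟩
      refine ⟨m' * m, n' + n, hm.mul_left _, ?_⟩
      rw [mul_smul, ← φ.act_act, ← map_zsmul, ← hab, hbc]⟩
    have hirr : Std.Irrefl r := ⟨fun c hcc => hno c ⟨hp, hcc⟩⟩
    obtain ⟨c, -, hmin⟩ := (Finite.wellFounded_of_trans_of_irrefl r).has_min Set.univ
      Set.univ_nonempty
    obtain ⟨c', hc'⟩ := hr c
    exact hmin c' trivial hc'
  have hQfin : ∀ c, (Q c).Finite := by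
    intro c
    rcases (Q c).eq_empty_or_nonempty with h0 | ⟨p, hp, m, n, hpm, hmn⟩
    · rw [h0]; exact Set.finite_empty
    have hm0 : m ≠ 0 := by
      rintro rfl
      exact c.2.2 (by simpa using hmn)
    refine (Set.finite_Iic m.natAbs).subset ?_
    rintro q ⟨hq, m', n', hqm, hmn'⟩
    have := dvd_of_dvd c.2.2 hp hq hpm hqm hmn hmn'
    exact Nat.le_of_dvd (Int.natAbs_pos.2 hm0) (Int.natCast_dvd.1 this)
  refine Nat.infinite_setOfPred_prime (((finite_nondivisible h hM).union
    (Set.finite_iUnion hQfin)).subset ?_)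
  intro p hp
  by_cases htop : multiples B p = ⊤
  · exact Or.inr (Set.mem_iUnion.2 (hQ p hp htop))
  · exact Or.inl ⟨hp, htop⟩

end TorsionFree

/-- The quotient by the torsion subgroup vanishes, and the torsion subgroup is finite. -/
theorem finite_of_covered {M : ℕ} (h : φ.Covered) (hM : φ.SmallCoinvariants M) : Finite B := by
  have hsub := subsingleton_of_torsionFree
    (h.quot (AddCommGroup.torsion B) torsion_le_comap)
    (hM.quot (AddCommGroup.torsion B) torsion_le_comap)
  have htop : AddCommGroup.torsion B = ⊤ := by
    refine (AddSubgroup.eq_top_iff' _).2 fun b => ?_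
    exact (QuotientAddGroup.eq_zero_iff b).1 (Subsingleton.elim _ _)
  have := h.finite_torsion
  rw [htop] at this
  exact Set.finite_univ_iff.1 (by simpa using this)

end ZAction

/-! ### Virtually cyclic groups and bVCyc -/

lemma finiteIndex_comap {G K : Type*} [Group G] [Group K] (f : K →* G) (H : Subgroup G)
    (hH : H.FiniteIndex) : (H.comap f).FiniteIndex := by
  refine ⟨?_⟩
  rw [Subgroup.index_comap]
  exact (inferInstance : (H.subgroupOf f.range).FiniteIndex).index_ne_zero

lemma VirtuallyCyclic.of_injective {G K : Type*} [Group G] [Group K] (h : VirtuallyCyclic G)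
    (f : K →* G) (hf : Function.Injective f) : VirtuallyCyclic K := by
  obtain ⟨H, hcyc, hfin⟩ := h
  refine ⟨H.comap f, ?_, finiteIndex_comap f H hfin⟩
  exact isCyclic_of_injective (f.subgroupComap H) fun x y hxy =>
    Subtype.ext (hf (congrArg Subtype.val hxy))

lemma VirtuallyCyclic.of_surjective {G Q : Type*} [Group G] [Group Q] (h : VirtuallyCyclic G)
    (f : G →* Q) (hf : Function.Surjective f) : VirtuallyCyclic Q := by
  obtain ⟨H, hcyc, hfin⟩ := h
  refine ⟨H.map f, isCyclic_of_surjective (f.subgroupMap H) (f.subgroupMap_surjective H), ⟨?_⟩⟩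
  exact ne_zero_of_dvd_ne_zero hfin.index_ne_zero (H.index_map_dvd hf)

lemma VirtuallyCyclic.of_finiteIndex {G : Type*} [Group G] (K : Subgroup G) (hK : K.FiniteIndex)
    (h : VirtuallyCyclic K) : VirtuallyCyclic G := by
  obtain ⟨H, hcyc, hfin⟩ := h
  refine ⟨H.map K.subtype,
    isCyclic_of_surjective (K.subtype.subgroupMap H) (K.subtype.subgroupMap_surjective H), ⟨?_⟩⟩
  rw [Subgroup.index_map_subtype]
  exact mul_ne_zero hfin.index_ne_zero hK.index_ne_zero

/-- Coset decomposition of a virtually cyclic group with respect to a cyclic subgroup `⟨c⟩` of finite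
index. -/
lemma VirtuallyCyclic.exists_decomposition {W : Type*} [Group W] (h : VirtuallyCyclic W) :
    ∃ (c : W) (F : Finset W), (∀ f ∈ F, ∃ N : ℕ, 0 < N ∧ ∃ k : ℤ, f ^ N = c ^ k) ∧
      ∀ w, ∃ f ∈ F, ∃ m : ℤ, w = f * c ^ m := by
  classical
  obtain ⟨H, hcyc, hfin⟩ := h
  obtain ⟨⟨c, hc⟩, hgen⟩ := hcyc.exists_generator
  have hgen' : ∀ x ∈ H, ∃ k : ℤ, x = c ^ k := by
    intro x hx
    obtain ⟨k, hk⟩ := hgen ⟨x, hx⟩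
    exact ⟨k, (congrArg Subtype.val hk).symm⟩
  have := Fintype.ofFinite (W ⧸ H)
  refine ⟨c, Finset.univ.image (Quotient.out : W ⧸ H → W), ?_, ?_⟩
  · intro f _
    obtain ⟨N, hN, -, hmem⟩ := H.exists_pow_mem_of_index_ne_zero hfin.index_ne_zero f
    exact ⟨N, hN, hgen' _ hmem⟩
  · intro w
    have hmem : (Quotient.out (w : W ⧸ H))⁻¹ * w ∈ H :=
      QuotientGroup.eq.1 (QuotientGroup.out_eq' _)
    obtain ⟨m, hm⟩ := hgen' _ hmem
    exact ⟨Quotient.out (w : W ⧸ H), Finset.mem_image_of_mem _ (Finset.mem_univ _), m, by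
      rw [← hm]; group⟩

/-- If a virtually cyclic group maps nontrivially to `ℤ`, then so does its cyclic subgroup of finite
index, which therefore meets the kernel trivially. -/
lemma VirtuallyCyclic.finite_ker {W : Type*} [Group W] (h : VirtuallyCyclic W)
    (ψ : W →* Multiplicative ℤ) (w : W) (hw : ψ w ≠ 1) : Finite ψ.ker := by
  obtain ⟨H, hcyc, hfin⟩ := h
  obtain ⟨⟨c, hc⟩, hgen⟩ := hcyc.exists_generator
  have hgen' : ∀ x ∈ H, ∃ k : ℤ, x = c ^ k := by
    intro x hx
    obtain ⟨k, hk⟩ := hgen ⟨x, hx⟩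
    exact ⟨k, (congrArg Subtype.val hk).symm⟩
  have hψc : ψ c ≠ 1 := by
    intro h0
    obtain ⟨N, hN, -, hmem⟩ := H.exists_pow_mem_of_index_ne_zero hfin.index_ne_zero w
    obtain ⟨k, hk⟩ := hgen' _ hmem
    have h1 : ψ w ^ N = 1 := by rw [← map_pow, hk, map_zpow, h0, one_zpow]
    exact hw ((pow_eq_one_iff_left hN.ne').1 h1)
  have hbot : H.subgroupOf ψ.ker = ⊥ := by
    rw [eq_bot_iff]
    rintro ⟨x, hx⟩ hxH
    obtain ⟨k, rfl⟩ := hgen' x hxH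
    rw [MonoidHom.mem_ker, map_zpow] at hx
    have hk : k = 0 := (IsMulTorsionFree.zpow_eq_one_iff_right hψc).1 hx
    simp [hk]
  have hne : (H.subgroupOf ψ.ker).index ≠ 0 := Subgroup.FiniteIndex.index_ne_zero
  rw [hbot, Subgroup.index_bot] at hne
  exact Nat.finite_of_card_ne_zero hne

lemma bVCyc.of_surjective {G Q : Type*} [Group G] [Group Q] (h : bVCyc G) (f : G →* Q)
    (hf : Function.Surjective f) : bVCyc Q := by
  classical
  obtain ⟨𝒱, hV, hc⟩ := h
  refine ⟨𝒱.image (Subgroup.map f), ?_, ?_⟩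
  · intro V' hV'
    obtain ⟨V, hVm, rfl⟩ := Finset.mem_image.1 hV'
    exact (hV V hVm).of_surjective (f.subgroupMap V) (f.subgroupMap_surjective V)
  · intro q
    obtain ⟨g, rfl⟩ := hf q
    obtain ⟨V, hVm, x, hx⟩ := hc g
    exact ⟨_, Finset.mem_image_of_mem _ hVm, f x, ⟨_, hx, by simp⟩⟩

/-- A class of conjugates in `G` splits over `K` according to coset representatives of `K`, so the
subgroups to use are the `r⁻¹ V r ∩ K`. -/
lemma bVCyc.of_finiteIndex {G : Type*} [Group G] (h : bVCyc G) (K : Subgroup G)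
    (hK : K.FiniteIndex) : bVCyc K := by
  classical
  obtain ⟨𝒱, hV, hc⟩ := h
  have := Fintype.ofFinite (G ⧸ K)
  let f : G → K →* G := fun r => (MulAut.conj r).toMonoidHom.comp K.subtype
  have hf : ∀ r, Function.Injective (f r) := fun r =>
    (MulAut.conj r).injective.comp K.subtype_injective
  refine ⟨(𝒱 ×ˢ (Finset.univ : Finset (G ⧸ K))).image fun v => v.1.comap (f v.2.out), ?_, ?_⟩
  · intro V' hV'
    obtain ⟨⟨V, q⟩, hVm, rfl⟩ := Finset.mem_image.1 hV'
    refine (hV V (Finset.mem_product.1 hVm).1).of_injective ((f q.out).subgroupComap V) ?_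
    exact fun x y hxy => Subtype.ext (hf _ (congrArg Subtype.val hxy))
  · intro g
    obtain ⟨V, hVm, x, hx⟩ := hc g
    have hmem : (Quotient.out (x : G ⧸ K))⁻¹ * x ∈ K :=
      QuotientGroup.eq.1 (QuotientGroup.out_eq' _)
    set r : G := Quotient.out (x : G ⧸ K)
    refine ⟨V.comap (f r), Finset.mem_image.2 ⟨(V, (x : G ⧸ K)),
      Finset.mem_product.2 ⟨hVm, Finset.mem_univ _⟩, rfl⟩, ⟨_, hmem⟩, ?_⟩
    change r * (r⁻¹ * x * g * (r⁻¹ * x)⁻¹) * r⁻¹ ∈ V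
    convert hx using 1
    group

/-- By B. H. Neumann's covering lemma, one of finitely many subgroups covering an abelian group
has finite index. -/
lemma bVCyc.virtuallyCyclic_of_comm {G : Type*} [Group G] (h : bVCyc G)
    (hcomm : ∀ x y : G, x * y = y * x) : VirtuallyCyclic G := by
  obtain ⟨𝒱, hV, hc⟩ := h
  obtain ⟨V, hVm, hfin⟩ := Subgroup.exists_finiteIndex_of_leftCoset_cover (G := G) (s := 𝒱)
    (H := fun V => V) (g := fun _ => 1) (by
      refine Set.eq_univ_of_forall fun g => ?_
      obtain ⟨V, hVm, x, hx⟩ := hc g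
      rw [hcomm x g, mul_inv_cancel_right] at hx
      exact Set.mem_biUnion hVm (by simpa using hx))
  exact VirtuallyCyclic.of_finiteIndex V hfin (hV V hVm)

/-! ### Extensions of `ℤ` by abelian groups -/

section Extension

open scoped IsMulCommutative

variable {G : Type*} [Group G]

/-- The action of `ℤ` on an abelian normal subgroup `A` by conjugation with the powers of `τ`. -/
def conjAction (A : Subgroup G) [A.Normal] [IsMulCommutative A] (τ : G) :
    ZAction (Additive A) where
  act n := MonoidHom.toAdditive (MulAut.conjNormal (τ ^ n) : A ≃* A).toMonoidHom
  act_zero b := by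
    change Additive.ofMul (MulAut.conjNormal (τ ^ (0 : ℤ)) b.toMul) = b
    simp
  act_act m n b := by
    change Additive.ofMul (MulAut.conjNormal (τ ^ m) (MulAut.conjNormal (τ ^ n) b.toMul)) =
      Additive.ofMul (MulAut.conjNormal (τ ^ (m + n)) b.toMul)
    rw [zpow_add, map_mul, MulAut.mul_apply]

lemma coe_conjAction (A : Subgroup G) [A.Normal] [IsMulCommutative A] (τ : G) (n : ℤ)
    (b : Additive A) :
    ((((conjAction A τ).act n b).toMul : A) : G) = τ ^ n * (b.toMul : A) * (τ ^ n)⁻¹ := rfl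

lemma exists_zpow_mul_mem_ker (π : G →* Multiplicative ℤ) (τ : G)
    (hτ : π τ = Multiplicative.ofAdd 1) (x : G) :
    ∃ n : ℤ, (τ ^ n)⁻¹ * x ∈ π.ker ∧ x * (τ ^ n)⁻¹ ∈ π.ker := by
  refine ⟨(π x).toAdd, ?_, ?_⟩ <;>
  · rw [MonoidHom.mem_ker, map_mul, map_inv, map_zpow, hτ, ← ofAdd_zsmul]
    simp

lemma covered_conjAction (π : G →* Multiplicative ℤ) [IsMulCommutative π.ker] (τ : G)
    (hτ : π τ = Multiplicative.ofAdd 1) (h : bVCyc G) : (conjAction π.ker τ).Covered := by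
  classical
  obtain ⟨𝒱, hV, hc⟩ := h
  have hW : ∀ V ∈ 𝒱, VirtuallyCyclic (V.comap π.ker.subtype) := fun V hVm =>
    (hV V hVm).of_injective (π.ker.subtype.subgroupComap V) fun x y hxy =>
      Subtype.ext (Subtype.ext (congrArg (fun z : V => (z : G)) hxy))
  have hdec : ∀ V : Subgroup G, ∃ (c : π.ker) (F : Finset π.ker), V ∈ 𝒱 →
      (∀ f ∈ F, ∃ N : ℕ, 0 < N ∧ ∃ k : ℤ, f ^ N = c ^ k) ∧
      ∀ w : π.ker, (w : G) ∈ V → ∃ f ∈ F, ∃ m : ℤ, w = f * c ^ m := by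
    intro V
    by_cases hVm : V ∈ 𝒱
    swap
    · exact ⟨1, ∅, fun h => absurd h hVm⟩
    obtain ⟨c, F, hF, hcF⟩ := (hW V hVm).exists_decomposition
    refine ⟨c, F.image Subtype.val, fun _ => ⟨?_, ?_⟩⟩
    · intro f hf
      obtain ⟨f', hf', rfl⟩ := Finset.mem_image.1 hf
      obtain ⟨N, hN, k, hk⟩ := hF f' hf'
      exact ⟨N, hN, k, congrArg Subtype.val hk⟩
    · intro w hw
      obtain ⟨f, hf, m, hm⟩ := hcF ⟨w, hw⟩
      exact ⟨f, Finset.mem_image_of_mem _ hf, m, congrArg Subtype.val hm⟩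
  choose c F hcF using hdec
  refine ⟨𝒱.biUnion fun V => (F V).image fun f => (Additive.ofMul f, Additive.ofMul (c V)), ?_, ?_⟩
  · intro s hs
    obtain ⟨V, hVm, hs⟩ := Finset.mem_biUnion.1 hs
    obtain ⟨f, hf, rfl⟩ := Finset.mem_image.1 hs
    obtain ⟨N, hN, k, hk⟩ := (hcF V hVm).1 f hf
    exact ⟨N, hN, k, congrArg Additive.ofMul hk⟩
  · intro b
    obtain ⟨V, hVm, x, hx⟩ := hc (b.toMul : π.ker)
    obtain ⟨n, -, hn⟩ := exists_zpow_mul_mem_ker π τ hτ x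
    -- `x = a τ ^ n` with `a` in the kernel, and `a` acts trivially on the kernel.
    have hxb : x * (b.toMul : π.ker) * x⁻¹ = (((conjAction π.ker τ).act n b).toMul : π.ker) := by
      have hcm := congrArg Subtype.val
        (mul_comm (⟨_, hn⟩ : π.ker) (((conjAction π.ker τ).act n b).toMul : π.ker))
      rw [Subgroup.coe_mul, Subgroup.coe_mul, coe_conjAction] at hcm
      rw [coe_conjAction, ← mul_inv_eq_iff_eq_mul.2 hcm]
      group
    rw [hxb] at hx
    obtain ⟨f, hf, m, hm⟩ := (hcF V hVm).2 _ hx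
    exact ⟨_, Finset.mem_biUnion.2 ⟨V, hVm, Finset.mem_image_of_mem _ hf⟩, n, m,
      congrArg Additive.ofMul hm⟩

lemma ZAction.act_zmul_sub_mem {B : Type*} [AddCommGroup B] {φ : ZAction B} {k : ℕ}
    {S : AddSubgroup B} (h : ∀ b, φ.act k b - b ∈ S) (q : ℤ) (b : B) :
    φ.act (k * q) b - b ∈ S := by
  obtain ⟨j, rfl | rfl⟩ := q.eq_nat_or_neg
  · simpa using act_mul_sub_mem h j b
  · have := S.neg_mem (act_mul_sub_mem h j (φ.act (k * -j) b))
    rw [φ.act_act] at this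
    simpa [φ.act_zero] using this

/-- The elements `a τ ^ k` are classified up to conjugacy by the coinvariants of `τ ^ k` modulo
the residual action of `τ`, which has period `k`. A virtually cyclic subgroup meeting the coset
`ker π * τ ^ k` meets the kernel in a finite group, hence contains boundedly many of them. -/
lemma smallCoinvariants_conjAction (π : G →* Multiplicative ℤ) [IsMulCommutative π.ker] (τ : G)
    (hτ : π τ = Multiplicative.ofAdd 1) (h : bVCyc G) :
    ∃ M, (conjAction π.ker τ).SmallCoinvariants M := by
  classical
  obtain ⟨𝒱, hV, hc⟩ := h
  refine ⟨∑ V ∈ 𝒱, Nat.card (V.comap π.ker.subtype), ?_⟩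
  intro k hk S hS
  set φ := conjAction π.ker τ
  let X : Subgroup G → Set (Additive π.ker) := fun V => {a | (a.toMul : G) * τ ^ k ∈ V}
  have hX : ∀ V ∈ 𝒱, (X V).Finite ∧ (X V).ncard ≤ Nat.card (V.comap π.ker.subtype) := by
    intro V hVm
    rcases (X V).eq_empty_or_nonempty with h0 | ⟨a₀, ha₀⟩
    · rw [h0]; simp
    have hfin : Finite (π.comp V.subtype).ker := by
      refine (hV V hVm).finite_ker _ ⟨_, ha₀⟩ ?_
      have h1 : π (a₀.toMul : G) = 1 := a₀.toMul.2
      simp only [MonoidHom.comp_apply, Subgroup.subtype_apply, map_mul, h1, one_mul, map_pow, hτ,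
        ← ofAdd_nsmul]
      intro h2
      have h3 := congrArg Multiplicative.toAdd h2
      simp at h3
      omega
    have hfinW : Finite (V.comap π.ker.subtype) :=
      Finite.of_injective (fun x => (⟨⟨(x : π.ker), x.2⟩, x.1.2⟩ : (π.comp V.subtype).ker))
        fun x y hxy => Subtype.ext (Subtype.ext
          (congrArg (fun z : (π.comp V.subtype).ker => ((z : V) : G)) hxy))
    have hmaps : ∀ a ∈ X V, a.toMul * a₀.toMul⁻¹ ∈ (V.comap π.ker.subtype : Set π.ker) := by
      intro a ha
      have := V.mul_mem ha (V.inv_mem ha₀)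
      change (a.toMul : G) * (a₀.toMul : G)⁻¹ ∈ V
      convert this using 1
      group
    have hinj : Set.InjOn (fun a : Additive π.ker => a.toMul * a₀.toMul⁻¹) (X V) :=
      fun a _ b _ hab => Additive.toMul.injective (mul_right_cancel hab)
    exact ⟨Set.Finite.of_injOn hmaps hinj (Set.toFinite _),
      Set.ncard_le_ncard_of_injOn _ hmaps hinj (Set.toFinite _)⟩
  let Y : Finset (Additive π.ker ⧸ S) := 𝒱.attach.biUnion fun V =>
    (Finset.range k ×ˢ (hX V.1 V.2).1.toFinset).image fun v => ((φ.act v.1 v.2 : Additive π.ker) : _ ⧸ S)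
  have hY : ∀ q : Additive π.ker ⧸ S, q ∈ Y := by
    intro q
    induction q using QuotientAddGroup.induction_on with
    | H a =>
      obtain ⟨V, hVm, x, hx⟩ := hc ((a.toMul : π.ker) * τ ^ k)
      obtain ⟨n, hn, -⟩ := exists_zpow_mul_mem_ker π τ hτ x
      let b : Additive π.ker := Additive.ofMul ⟨_, hn⟩
      let v : Additive π.ker := φ.act n (b + a - φ.act k b)
      have hv : v ∈ X V := by
        change (v.toMul : G) * τ ^ k ∈ V
        convert hx using 1
        change τ ^ n * (((τ ^ n)⁻¹ * x) * a.toMul / (τ ^ (k : ℤ) * ((τ ^ n)⁻¹ * x) * (τ ^ (k : ℤ))⁻¹)) *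
          (τ ^ n)⁻¹ * τ ^ k = _
        rw [← zpow_natCast τ k, div_eq_mul_inv]
        have hc1 : (τ ^ n)⁻¹ * τ ^ (k : ℤ) = τ ^ (k : ℤ) * (τ ^ n)⁻¹ :=
          ((Commute.refl τ).zpow_zpow n k).inv_left.eq
        rw [mul_assoc _ (τ ^ n)⁻¹, hc1]
        group
      have hk0 : (0 : ℤ) < k := by exact_mod_cast hk
      have hj0 := Int.emod_nonneg (-n) hk0.ne'
      have hjk := Int.emod_lt_of_pos (-n) hk0
      refine Finset.mem_biUnion.2 ⟨⟨V, hVm⟩, Finset.mem_attach _ _, Finset.mem_image.2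
        ⟨(((-n) % k).toNat, v), Finset.mem_product.2 ⟨?_, (hX V hVm).1.mem_toFinset.2 hv⟩, ?_⟩⟩
      · rw [Finset.mem_range]; omega
      · simp only [Int.toNat_of_nonneg hj0]
        rw [QuotientAddGroup.eq]
        have h1 := ZAction.act_zmul_sub_mem hS (-n / k) (φ.act (-n % k) v)
        have h2 := hS b
        have h3 := S.add_mem h1 h2
        rw [φ.act_act, add_comm ((k : ℤ) * _), Int.emod_add_mul_ediv, φ.act_act, neg_add_cancel,
          φ.act_zero] at h3
        convert h3 using 1
        abel
  have hfin : Finite (Additive π.ker ⧸ S) :=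
    Set.finite_univ_iff.1 (Y.finite_toSet.subset fun q _ => hY q)
  have hcard : Nat.card (Additive π.ker ⧸ S) ≤ Y.card := by
    rw [← Set.ncard_univ, ← Set.ncard_coe_finset]
    exact Set.ncard_le_ncard (fun q _ => hY q) Y.finite_toSet
  refine ⟨Nat.card_pos.ne', hcard.trans ?_⟩
  refine Finset.card_biUnion_le.trans ?_
  rw [Finset.mul_sum, ← Finset.sum_attach 𝒱]
  refine Finset.sum_le_sum fun V _ => Finset.card_image_le.trans ?_
  rw [Finset.card_product, Finset.card_range, ← Set.ncard_eq_toFinset_card _ (hX V.1 V.2).1]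
  exact Nat.mul_le_mul_left k (hX V.1 V.2).2

lemma virtuallyCyclic_of_hom_int (π : G →* Multiplicative ℤ) [IsMulCommutative π.ker]
    (hπ : Function.Surjective π) (h : bVCyc G) :
    VirtuallyCyclic G := by
  obtain ⟨τ, hτ⟩ := hπ (Multiplicative.ofAdd 1)
  obtain ⟨M, hM⟩ := smallCoinvariants_conjAction π τ hτ h
  have hfin : Finite (Additive π.ker) :=
    ZAction.finite_of_covered (covered_conjAction π τ hτ h) hM
  have hfin' : Finite π.ker := hfin
  refine ⟨Subgroup.zpowers τ, inferInstance, ?_⟩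
  have : Finite (G ⧸ Subgroup.zpowers τ) := by
    refine Finite.of_surjective (fun a : π.ker => ((a : G) : G ⧸ Subgroup.zpowers τ)) ?_
    intro q
    induction q using QuotientGroup.induction_on with
    | H x =>
      obtain ⟨n, -, hn⟩ := exists_zpow_mul_mem_ker π τ hτ x
      exact ⟨⟨_, hn⟩, QuotientGroup.eq.2 ⟨n, by simp⟩⟩
  exact Subgroup.finiteIndex_of_finite_quotient

end Extension

/-! ### Solvable groups -/

lemma virtuallyCyclic_of_quotient {G : Type*} [Group G] (h : bVCyc G) (A : Subgroup G) [A.Normal]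
    (hA : ∀ x ∈ A, ∀ y ∈ A, x * y = y * x) (hQ : VirtuallyCyclic (G ⧸ A)) :
    VirtuallyCyclic G := by
  obtain ⟨C, hC, hCfin⟩ := hQ
  set K := C.comap (QuotientGroup.mk' A)
  have hK : K.FiniteIndex := finiteIndex_comap _ C hCfin
  refine VirtuallyCyclic.of_finiteIndex K hK ?_
  have hbK := h.of_finiteIndex K hK
  let ψ : K →* C := (QuotientGroup.mk' A).subgroupComap C
  have hψ : Function.Surjective ψ :=
    (QuotientGroup.mk' A).subgroupComap_surjective_of_surjective C (QuotientGroup.mk'_surjective A)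
  have hker : ∀ x : K, ψ x = 1 → (x : G) ∈ A := fun x hx =>
    (QuotientGroup.eq_one_iff (x : G)).1 (congrArg Subtype.val hx)
  have hcomm : ∀ x y : K, ψ x = 1 → ψ y = 1 → x * y = y * x := fun x y hx hy =>
    Subtype.ext (hA x (hker x hx) y (hker y hy))
  rcases finite_or_infinite C with hfin | hinf
  · have hidx : ψ.ker.FiniteIndex := inferInstance
    exact VirtuallyCyclic.of_finiteIndex ψ.ker hidx
      ((hbK.of_finiteIndex _ hidx).virtuallyCyclic_of_comm
        fun x y => Subtype.ext (hcomm x y x.2 y.2))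
  · let π : K →* Multiplicative ℤ := (intCyclicMulEquiv (G := C)).symm.toMonoidHom.comp ψ
    have hπ : Function.Surjective π := (intCyclicMulEquiv (G := C)).symm.surjective.comp hψ
    have hπker : ∀ x ∈ π.ker, ψ x = 1 := fun x hx =>
      (map_eq_one_iff _ (intCyclicMulEquiv (G := C)).symm.injective).1 hx
    have : IsMulCommutative π.ker :=
      ⟨⟨fun x y => Subtype.ext (hcomm x y (hπker x x.2) (hπker y y.2))⟩⟩
    exact virtuallyCyclic_of_hom_int π hπ hbK

/-- Induction on the derived length, splitting off the last term of the derived series. -/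
lemma virtuallyCyclic_of_derivedSeries (n : ℕ) : ∀ (G : Type*) [Group G], bVCyc G →
    derivedSeries G n = ⊥ → VirtuallyCyclic G := by
  induction n with
  | zero =>
    intro G _ h hn
    have hsub : ∀ x : G, x = 1 := fun x => by
      have : x ∈ derivedSeries G 0 := by simp
      rwa [hn, Subgroup.mem_bot] at this
    exact h.virtuallyCyclic_of_comm fun x y => by rw [hsub x, hsub y]
  | succ n ih =>
    intro G _ h hn
    have hmk := QuotientGroup.mk'_surjective (derivedSeries G n)
    refine virtuallyCyclic_of_quotient h (derivedSeries G n) ?_ (ih _ (h.of_surjective _ hmk) ?_)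
    · rw [derivedSeries_succ, Subgroup.commutator_eq_bot_iff_le_centralizer] at hn
      exact fun x hx y hy => (Subgroup.mem_centralizer_iff.1 (hn hx) y hy).symm
    · rw [← map_derivedSeries_eq hmk]
      exact (Subgroup.map_eq_bot_iff _).2 (by simp)

/-- A finitely generated virtually solvable group with bVCyc is virtually cyclic. -/
theorem stmt_2 {G : Type*} [Group G] (hfg : Group.FG G)
    (hsolv : ∃ H : Subgroup G, IsSolvable H ∧ H.FiniteIndex)
    (h : bVCyc G) : VirtuallyCyclic G := by
  obtain ⟨H, ⟨n, hn⟩, hfin⟩ := hsolv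
  exact VirtuallyCyclic.of_finiteIndex H hfin
    (virtuallyCyclic_of_derivedSeries n H (h.of_finiteIndex H hfin) hn)
end

section
/- Let G be a finitely generated group with bVCyc. Then the abelianization G/[G,G] of G is virtually cyclic (equivalently, it is a finitely generated abelian group of rank at most one). -/
open scoped Pointwise

/-- The abelianization of a finitely generated group with bVCyc is virtually cyclic. -/
theorem stmt_3 {G : Type*} [Group G] (hfg : Group.FG G) (h : bVCyc G) :
    VirtuallyCyclic (Abelianization G) := by
  obtain ⟨𝒱, hV, hcov⟩ := h
  let f : ∀ V : Subgroup G, V →* Abelianization G := fun V => Abelianization.of.comp V.subtype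
  have hcover : ⋃ V ∈ 𝒱, (1 : Abelianization G) • ((f V).range : Set (Abelianization G))
      = Set.univ := by
    refine Set.eq_univ_of_forall fun a => ?_
    obtain ⟨g, rfl⟩ : ∃ g, Abelianization.of g = a := QuotientGroup.mk_surjective a
    obtain ⟨V, hVmem, x, hx⟩ := hcov g
    simp only [one_smul, Set.mem_iUnion]
    refine ⟨V, hVmem, ⟨_, hx⟩, ?_⟩
    change Abelianization.of (x * g * x⁻¹) = Abelianization.of g
    rw [map_mul, map_mul, map_inv, mul_inv_cancel_comm]
  obtain ⟨V, hVmem, hfin⟩ :=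
    Subgroup.exists_finiteIndex_of_leftCoset_cover (g := fun _ => 1) hcover
  obtain ⟨H, hcyc, hH⟩ := hV V hVmem
  refine ⟨H.map (f V), ?_, ⟨?_⟩⟩
  · exact isCyclic_of_surjective ((f V).subgroupMap H) ((f V).subgroupMap_surjective H)
  · rw [Subgroup.index_map]
    have : (H ⊔ (f V).ker).FiniteIndex := Subgroup.finiteIndex_of_le le_sup_left
    exact mul_ne_zero this.index_ne_zero hfin.index_ne_zero
end

section
/- Let G be a group with bCyc and let K ≤ G be a subgroup of finite index. Then K has bCyc; that is, there are finitely many elements k_1, …, k_m ∈ K such that every element of K is conjugate inside K to a power k_i^j (j ∈ ℤ) of some k_i. -/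
lemma exists_generator_powers_mem {G : Type*} [Group G] (K : Subgroup G) (b : G) :
    ∃ c : K, ∀ n : ℤ, b ^ n ∈ K → ∃ m : ℤ, b ^ n = (c : G) ^ m := by
  obtain ⟨c, hc⟩ := IsCyclic.exists_generator (α := K.subgroupOf (Subgroup.zpowers b))
  refine ⟨⟨((c : Subgroup.zpowers b) : G), Subgroup.mem_subgroupOf.1 c.2⟩, fun n hn => ?_⟩
  obtain ⟨m, hm⟩ := hc ⟨⟨b ^ n, n, rfl⟩, Subgroup.mem_subgroupOf.2 hn⟩
  refine ⟨m, ?_⟩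
  have h := congrArg
    (fun z : K.subgroupOf (Subgroup.zpowers b) => ((z : Subgroup.zpowers b) : G)) hm
  simpa using h.symm

/-- bCyc passes to finite index subgroups. -/
theorem stmt_4 {G : Type*} [Group G] (hG : bCyc G) (K : Subgroup G)
    (hK : K.FiniteIndex) : bCyc K := by
  classical
  obtain ⟨s, hs⟩ := hG
  choose c hc using exists_generator_powers_mem K
  haveI : Fintype (G ⧸ K) := Fintype.ofFinite _
  -- The inverses of left coset representatives represent the cosets `K t`.
  refine ⟨(s ×ˢ (Finset.univ : Finset (G ⧸ K))).image
    (fun p => c (p.2.out⁻¹ * p.1 * p.2.out)), fun k => ?_⟩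
  obtain ⟨a, ha, n, hn⟩ := hs k
  obtain ⟨y, hy⟩ := isConj_iff.1 hn
  obtain ⟨h, hh⟩ := QuotientGroup.mk_out_eq_mul K y
  set q : G ⧸ K := (y : G ⧸ K) with hq
  have key : (q.out⁻¹ * a * q.out) ^ n = (h : G)⁻¹ * k * h := by
    have e : (q.out⁻¹ * a * q.out) ^ n = q.out⁻¹ * a ^ n * q.out := by
      simpa using conj_zpow (i := n) (a := q.out⁻¹) (b := a)
    rw [e, ← hy, hh]
    group
  have hmem : (q.out⁻¹ * a * q.out) ^ n ∈ K := by
    rw [key]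
    exact (h⁻¹ * k * h).2
  obtain ⟨m, hm⟩ := hc _ n hmem
  refine ⟨_, Finset.mem_image.2 ⟨(a, q), by simp [ha], rfl⟩, m, isConj_iff.2 ⟨h⁻¹, ?_⟩⟩
  apply Subtype.ext
  simp only [Subgroup.coe_mul, Subgroup.coe_inv, inv_inv, Subgroup.coe_zpow]
  rw [← hm, key]
end

section
/- Let G be a group and suppose there are finitely many subgroups H_1, …, H_n of G, each of which is Noetherian (meaning every subgroup of H_i is finitely generated), such that every element of G lies in some conjugate of some H_i. Then G satisfies the ascending chain condition on normal subgroups: for every ascending chain N_0 ≤ N_1 ≤ N_2 ≤ … of normal subgroups of G there is an index j_0 such that N_j = N_{j_0} for all j ≥ j_0. -/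
/-- The traces on a Noetherian subgroup `K` of an ascending chain stabilise: the union of the traces
is finitely generated, and finitely many generators already lie in one member of the chain. -/
theorem exists_trace_stable {G : Type*} [Group G] (K : Subgroup G)
    (hK : ∀ L : Subgroup K, L.FG) (N : ℕ → Subgroup G) (hmono : Monotone N) :
    ∃ m : ℕ, ∀ j, ∀ h ∈ K, h ∈ N j → h ∈ N m := by
  have hmono' : Monotone fun j => (N j).subgroupOf K := fun a b hab x hx => hmono hab hx
  obtain ⟨S, hS⟩ := hK (⨆ j, (N j).subgroupOf K)
  have hgen : ∀ s : K, ∃ j, s ∈ S → (s : G) ∈ N j := by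
    intro s
    by_cases hs : s ∈ S
    · have hmem : s ∈ ⨆ j, (N j).subgroupOf K := hS ▸ Subgroup.subset_closure hs
      obtain ⟨j, hj⟩ := (Subgroup.mem_iSup_of_directed hmono'.directed_le).1 hmem
      exact ⟨j, fun _ => hj⟩
    · exact ⟨0, fun h => absurd h hs⟩
  choose f hf using hgen
  refine ⟨S.sup f, fun j h hhK hhN => ?_⟩
  have hle : (⨆ j, (N j).subgroupOf K) ≤ (N (S.sup f)).subgroupOf K := by
    rw [← hS, Subgroup.closure_le]
    exact fun s hs => hmono (Finset.le_sup hs) (hf s hs)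
  have hmem : (⟨h, hhK⟩ : K) ∈ (N j).subgroupOf K := hhN
  exact hle (le_iSup (fun j => (N j).subgroupOf K) j hmem)

/-- If a group is covered by conjugates of finitely many Noetherian subgroups, then it
satisfies the ascending chain condition on normal subgroups. -/
theorem stmt_5 {G : Type*} [Group G] (n : ℕ) (H : Fin n → Subgroup G)
    (hNoeth : ∀ i, ∀ K : Subgroup (H i), K.FG)
    (hcover : ∀ g : G, ∃ i, ∃ x : G, x * g * x⁻¹ ∈ H i)
    (N : ℕ → Subgroup G) (hnorm : ∀ j, (N j).Normal) (hmono : Monotone N) :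
    ∃ j₀ : ℕ, ∀ j ≥ j₀, N j = N j₀ := by
  choose m hm using fun i => exists_trace_stable (H i) (hNoeth i) N hmono
  refine ⟨Finset.univ.sup m, fun j hj => le_antisymm (fun g hg => ?_) (hmono hj)⟩
  obtain ⟨i, x, hx⟩ := hcover g
  have hconj : x * g * x⁻¹ ∈ N (Finset.univ.sup m) :=
    hmono (Finset.le_sup (Finset.mem_univ i)) (hm i j _ hx ((hnorm j).conj_mem g hg x))
  simpa [mul_assoc] using (hnorm _).conj_mem _ hconj x⁻¹
end

section
/- Let F be a finite group, let φ : ℤ → Aut(F) be an action of the integers on F by automorphisms, and suppose that the semidirect product V = F ⋊_φ ℤ has bCyc. Then F is the trivial group. -/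
/-- The quotient `ℤ` acts on `F` through a finite group, so `|Aut F|`-th powers act trivially. -/
lemma phi_pow_card {F : Type*} [Group F] [Finite F] (φ : Multiplicative ℤ →* MulAut F)
    (x : Multiplicative ℤ) : φ (x ^ Nat.card (MulAut F)) = 1 := by
  rw [map_pow, pow_card_eq_one']

lemma pow_eq_inr {F : Type*} [Group F] [Finite F] (φ : Multiplicative ℤ →* MulAut F)
    (a : F ⋊[φ] Multiplicative ℤ) :
    a ^ (Nat.card (MulAut F) * Nat.card F) =
      SemidirectProduct.inr (a.right ^ (Nat.card (MulAut F) * Nat.card F)) := by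
  rw [pow_mul, pow_mul]
  have hr : (a ^ Nat.card (MulAut F)).right = a.right ^ Nat.card (MulAut F) :=
    map_pow SemidirectProduct.rightHom a _
  have hφ := phi_pow_card φ a.right
  rw [← hr] at hφ ⊢
  generalize a ^ Nat.card (MulAut F) = b at hφ
  have hc : Commute (SemidirectProduct.inl b.left : F ⋊[φ] Multiplicative ℤ)
      (SemidirectProduct.inr b.right) := by
    ext <;> simp [hφ]
  conv_lhs => rw [← SemidirectProduct.inl_left_mul_inr_right b]
  rw [hc.mul_pow, ← map_pow, ← map_pow, pow_card_eq_one', map_one, one_mul]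

/-- If a semidirect product F ⋊ ℤ with F finite has bCyc, then F is trivial. -/
theorem stmt_6 {F : Type*} [Group F] [Finite F] (φ : Multiplicative ℤ →* MulAut F)
    (h : bCyc (F ⋊[φ] Multiplicative ℤ)) : ∀ f : F, f = 1 := by
  intro f
  obtain ⟨s, hs⟩ := h
  classical
  set M := Nat.card (MulAut F) * Nat.card F with hM
  have hM0 : M ≠ 0 := mul_ne_zero Nat.card_pos.ne' Nat.card_pos.ne'
  set P : ℤ := ∏ a ∈ s with Multiplicative.toAdd a.right ≠ 0, Multiplicative.toAdd a.right with hP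
  have hP0 : P ≠ 0 := Finset.prod_ne_zero_iff.2 fun a ha => (Finset.mem_filter.1 ha).2
  set u : Multiplicative ℤ := (Multiplicative.ofAdd P) ^ M with hu
  have hφu : φ u = 1 := by
    rw [hu, hM, mul_comm, pow_mul, phi_pow_card]
  obtain ⟨a, ha, k, hk⟩ := hs ⟨f, u⟩
  -- `ℤ` is commutative, so conjugate elements of `V` have the same image in it.
  have hright : u = a.right ^ k := by
    have := isConj_iff_eq.1 ((SemidirectProduct.rightHom (φ := φ)).map_isConj hk)
    rw [map_zpow] at this
    exact this
  have hadd : (M : ℤ) * P = k * Multiplicative.toAdd a.right := by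
    simpa [hu] using congrArg Multiplicative.toAdd hright
  have hn : Multiplicative.toAdd a.right ≠ 0 := by
    intro h0
    rw [h0, mul_zero] at hadd
    exact mul_ne_zero (by exact_mod_cast hM0) hP0 hadd
  obtain ⟨q, hq⟩ : Multiplicative.toAdd a.right ∣ P :=
    Finset.dvd_prod_of_mem (fun a : F ⋊[φ] Multiplicative ℤ => Multiplicative.toAdd a.right)
      (Finset.mem_filter.2 ⟨ha, hn⟩)
  have hkq : k = M * q := by
    apply mul_right_cancel₀ hn
    rw [← hadd, hq]
    ring
  have hpow : a ^ k = SemidirectProduct.inr u := by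
    rw [hright, hkq, zpow_mul, zpow_mul, zpow_natCast, zpow_natCast, pow_eq_inr, map_zpow]
  rw [hpow, isConj_iff] at hk
  obtain ⟨c, hc⟩ := hk
  have hcentral : SemidirectProduct.inr u * c = c * SemidirectProduct.inr u := by
    ext
    · simp [hφu]
    · simp [mul_comm]
  rw [mul_inv_eq_iff_eq_mul, hcentral] at hc
  simpa using congrArg SemidirectProduct.left (mul_left_cancel hc)
end
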